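/- arXiv:1602.06376 — 2 statements merged into one kernel-verified Lean document; each statement's English description precedes it below -/
import Mathlib

section
/- There exist a positive constant C and a time T ≥ d_h such that for all t ≥ T, inf_{x ∈ CS(h)} u(x,t) ≥ C t^{-n/2} ‖h‖_{L^∞}. -/
open Real Set Filter MeasureTheory Metric Pointwise
open scoped Nat Topology

noncomputable section

variable {n : ℕ}

/-- The Laplacian of `v : ℝⁿ → ℝ` at `x`, as the sum of second partial derivatives. -/
def lap (v : EuclideanSpace ℝ (Fin n) → ℝ) (x : EuclideanSpace ℝ (Fin n)) : ℝ :=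
  ∑ i : Fin n, iteratedDeriv 2 (fun a : ℝ => v (x + a • EuclideanSpace.single i (1 : ℝ))) 0

/-- `CS(φ)`: the convex hull of the support of `φ`. -/
def CS (v : EuclideanSpace ℝ (Fin n) → ℝ) : Set (EuclideanSpace ℝ (Fin n)) :=
  convexHull ℝ (tsupport v)

/-- `d_φ`: the diameter of the support of `φ`. -/
def dsupp (v : EuclideanSpace ℝ (Fin n) → ℝ) : ℝ := Metric.diam (tsupport v)

/-- `δ(K,L) = sup_{η ∈ L} dist(η, K)`. -/
def deltaCC (K L : Set (EuclideanSpace ℝ (Fin n))) : ℝ :=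
  sSup ((fun η => Metric.infDist η K) '' L)

/-- The centroid `m_h = (∫ h(y) y dy)/(∫ h(y) dy)`. -/
def centroid (h : EuclideanSpace ℝ (Fin n) → ℝ) : EuclideanSpace ℝ (Fin n) :=
  (∫ y, h y)⁻¹ • ∫ y, h y • y

/-- `T₀(φ) = min{T ≥ 0 : ∀ t ≥ T, t ≥ φ(t) + max{d_h, δ(CS(h),CS(f)) + d_f}}`, `h = f + g`. -/
def T0 (f g : EuclideanSpace ℝ (Fin n) → ℝ) (phi : ℝ → ℝ) : ℝ :=
  sInf {T : ℝ | 0 ≤ T ∧ ∀ t ≥ T,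
    phi t + max (dsupp (f + g)) (deltaCC (CS (f + g)) (CS f) + dsupp f) ≤ t}

/-- Sobolev `W^{ℓ,∞}`-type norm: sum of sup-norms of the iterated derivatives up to order `ℓ`. -/
def sobNorm (ℓ : ℕ) (v : EuclideanSpace ℝ (Fin n) → ℝ) : ℝ :=
  ∑ i ∈ Finset.range (ℓ + 1), ⨆ x, ‖iteratedFDeriv ℝ i v x‖

/-- The `L¹` norm. -/
def L1norm (v : EuclideanSpace ℝ (Fin n) → ℝ) : ℝ := ∫ y, |v y|

/-- The sup norm. -/
def LinfNorm (v : EuclideanSpace ℝ (Fin n) → ℝ) : ℝ := ⨆ x, |v x|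

/-- `𝒞(v)`: the critical points of `v` lying in the interior of its support. -/
def critSet (v : EuclideanSpace ℝ (Fin n) → ℝ) : Set (EuclideanSpace ℝ (Fin n)) :=
  {x | x ∈ interior (tsupport v) ∧ gradient v x = 0}

namespace DampedWave

/-- Differentiation under the integral sign for integrands supported in a fixed compact set. -/
theorem hasDerivAt_integral_of_compact_support {X V : Type*} [TopologicalSpace X]
    [MeasurableSpace X] [OpensMeasurableSpace X] [SecondCountableTopology X]
    {μ : Measure X} [IsFiniteMeasureOnCompacts μ]
    [T2Space X] [NormedAddCommGroup V] [NormedSpace ℝ V]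
    {F F' : ℝ → X → V} {s : Set ℝ} {k : Set X} (hs : IsOpen s) (hk : IsCompact k)
    (hF : ContinuousOn (Function.uncurry F) (s ×ˢ univ))
    (hF' : ContinuousOn (Function.uncurry F') (s ×ˢ univ))
    (hd : ∀ t ∈ s, ∀ x, HasDerivAt (fun r => F r x) (F' t x) t)
    (hzero : ∀ t ∈ s, ∀ x ∉ k, F t x = 0) {t : ℝ} (ht : t ∈ s) :
    HasDerivAt (fun r => ∫ x, F r x ∂μ) (∫ x, F' t x ∂μ) t := by
  have hslice : ∀ {G : ℝ → X → V}, ContinuousOn (Function.uncurry G) (s ×ˢ univ) →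
      ∀ r ∈ s, Continuous (G r) := fun {G} hG r hr => by
    have := hG.comp (f := fun x : X => (r, x)) (s := univ) (by fun_prop)
      (fun x _ => ⟨hr, mem_univ _⟩)
    exact continuousOn_univ.1 this
  have hzero' : ∀ r ∈ s, ∀ x ∉ k, F' r x = 0 := fun r hr x hx => by
    have h0 : (fun q => F q x) =ᶠ[𝓝 r] fun _ => (0 : V) := by
      filter_upwards [hs.mem_nhds hr] with q hq using hzero q hq x hx
    exact (hd r hr x).unique ((hasDerivAt_const r (0 : V)).congr_of_eventuallyEq h0)
  obtain ⟨ε, hε, hball⟩ := Metric.nhds_basis_closedBall.mem_iff.1 (hs.mem_nhds ht)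
  obtain ⟨M, hM⟩ := ((isCompact_closedBall t ε).prod hk).exists_bound_of_continuousOn
    (hF'.mono (prod_mono hball (subset_univ k)))
  refine (hasDerivAt_integral_of_dominated_loc_of_deriv_le (F := F) (F' := F')
    (bound := k.indicator fun _ => M) (closedBall_mem_nhds t hε) ?_ ?_ ?_ ?_ ?_ ?_).2
  · filter_upwards [hs.mem_nhds ht] with r hr using (hslice hF r hr).aestronglyMeasurable
  · exact (hslice hF t ht).integrable_of_hasCompactSupport
      (HasCompactSupport.intro hk fun x hx => hzero t ht x hx)
  · exact (hslice hF' t ht).aestronglyMeasurable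
  · refine Eventually.of_forall fun x r hr => ?_
    by_cases hx : x ∈ k
    · simpa [hx] using hM (r, x) ⟨hr, hx⟩
    · simp [hx, hzero' r (hball hr) x hx]
  · exact (integrable_indicator_iff hk.measurableSet).2 (integrableOn_const hk.measure_ne_top)
  · exact Eventually.of_forall fun x r hr => hd r (hball hr) x

/-- The standard basis vector `eᵢ` of `ℝⁿ`. -/
abbrev basisVec (i : Fin n) : EuclideanSpace ℝ (Fin n) := EuclideanSpace.single i (1 : ℝ)

/-- A solution of the damped wave equation with data `(f, g)`, together with its first and
second derivatives; time is the first argument. The first derivatives extend continuously to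
`t = 0`. -/
structure IsSolution (f g : EuclideanSpace ℝ (Fin n) → ℝ)
    (u ut utt : ℝ → EuclideanSpace ℝ (Fin n) → ℝ)
    (D Dt DD : Fin n → ℝ → EuclideanSpace ℝ (Fin n) → ℝ) : Prop where
  cont : ContinuousOn (Function.uncurry u) (Ici 0 ×ˢ univ)
  cont_t : ContinuousOn (Function.uncurry ut) (Ici 0 ×ˢ univ)
  cont_x : ∀ i, ContinuousOn (Function.uncurry (D i)) (Ici 0 ×ˢ univ)
  cont_tt : ContinuousOn (Function.uncurry utt) (Ioi 0 ×ˢ univ)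
  cont_xt : ∀ i, ContinuousOn (Function.uncurry (Dt i)) (Ioi 0 ×ˢ univ)
  cont_xx : ∀ i, ContinuousOn (Function.uncurry (DD i)) (Ioi 0 ×ˢ univ)
  deriv_t : ∀ t ∈ Ioi (0 : ℝ), ∀ x, HasDerivAt (fun s => u s x) (ut t x) t
  deriv_tt : ∀ t ∈ Ioi (0 : ℝ), ∀ x, HasDerivAt (fun s => ut s x) (utt t x) t
  deriv_xt : ∀ i, ∀ t ∈ Ioi (0 : ℝ), ∀ x, HasDerivAt (fun s => D i s x) (Dt i t x) t
  line_x : ∀ i, ∀ t ∈ Ici (0 : ℝ), ∀ x, HasLineDerivAt ℝ (u t) (D i t x) x (basisVec i)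
  line_tx : ∀ i, ∀ t ∈ Ioi (0 : ℝ), ∀ x, HasLineDerivAt ℝ (ut t) (Dt i t x) x (basisVec i)
  line_xx : ∀ i, ∀ t ∈ Ioi (0 : ℝ), ∀ x, HasLineDerivAt ℝ (D i t) (DD i t x) x (basisVec i)
  pde : ∀ t ∈ Ioi (0 : ℝ), ∀ x, utt t x = ∑ i, DD i t x - ut t x
  initial : ∀ x, u 0 x = f x
  initial_t : ∀ x, ut 0 x = g x

/-- A `C²` solution of the damped wave equation, packaged with its derivatives. -/
theorem exists_isSolution (f g : EuclideanSpace ℝ (Fin n) → ℝ)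
    (u : EuclideanSpace ℝ (Fin n) → ℝ → ℝ)
    (hreg : ContDiffOn ℝ 2 (fun p : EuclideanSpace ℝ (Fin n) × ℝ => u p.1 p.2) (univ ×ˢ Ici 0))
    (hpde : ∀ x, ∀ t > (0 : ℝ),
      deriv (deriv (fun s => u x s)) t - lap (fun z => u z t) x
        + deriv (fun s => u x s) t = 0)
    (hu0 : ∀ x, u x 0 = f x)
    (hu1 : ∀ x, derivWithin (fun s => u x s) (Ici 0) 0 = g x) :
    ∃ ut utt D Dt DD, IsSolution f g (fun t x => u x t) ut utt D Dt DD := by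
  set U : EuclideanSpace ℝ (Fin n) × ℝ → ℝ := fun p => u p.1 p.2 with hU
  set S : Set (EuclideanSpace ℝ (Fin n) × ℝ) := univ ×ˢ Ici 0 with hS
  have hSu : UniqueDiffOn ℝ S := uniqueDiffOn_univ.prod (uniqueDiffOn_Ici 0)
  have hSnhds : ∀ t ∈ Ioi (0 : ℝ), ∀ x, S ∈ 𝓝 (x, t) := fun t ht x =>
    prod_mem_nhds univ_mem (Ici_mem_nhds ht)
  have hD : ContDiffOn ℝ 1 (fderivWithin ℝ U S) S := hreg.fderivWithin hSu (by norm_num)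
  have hfd : ∀ t ∈ Ici (0 : ℝ), ∀ x, HasFDerivWithinAt U (fderivWithin ℝ U S (x, t)) S (x, t) :=
    fun t ht x => ((hreg.differentiableOn (by norm_num)) (x, t) ⟨mem_univ _, ht⟩).hasFDerivWithinAt
  have hat : ∀ t ∈ Ioi (0 : ℝ), ∀ x, HasFDerivAt U (fderivWithin ℝ U S (x, t)) (x, t) :=
    fun t ht x => (hfd t (Ioi_subset_Ici_self ht) x).hasFDerivAt (hSnhds t ht x)
  set H := fderiv ℝ (fderivWithin ℝ U S) with hH
  have hHat : ∀ t ∈ Ioi (0 : ℝ), ∀ x, HasFDerivAt (fderivWithin ℝ U S) (H (x, t)) (x, t) :=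
    fun t ht x => ((hD.differentiableOn (by norm_num)).differentiableAt
      (hSnhds t ht x)).hasFDerivAt
  have hsymm : ∀ t ∈ Ioi (0 : ℝ), ∀ x v w, H (x, t) v w = H (x, t) w v := by
    intro t ht x v w
    refine second_derivative_symmetric_of_eventually (f := U) (f' := fderivWithin ℝ U S)
      ?_ (hHat t ht x) v w
    have : univ ×ˢ Ioi 0 ∈ 𝓝 (x, t) := prod_mem_nhds univ_mem (Ioi_mem_nhds ht)
    filter_upwards [this] with p hp using hat p.2 hp.2 p.1
  have hHc : ContinuousOn H (univ ×ˢ Ioi 0) := by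
    refine ((hD.mono (prod_mono subset_rfl Ioi_subset_Ici_self)).continuousOn_fderiv_of_isOpen
      (isOpen_univ.prod isOpen_Ioi) (by norm_num))
  have hswap : ∀ {A : Set ℝ} {F : EuclideanSpace ℝ (Fin n) × ℝ → ℝ},
      ContinuousOn F (univ ×ˢ A) →
      ContinuousOn (Function.uncurry fun t x => F (x, t)) (A ×ˢ univ) := fun {A F} hF => by
    refine hF.comp (f := fun p : ℝ × EuclideanSpace ℝ (Fin n) => (p.2, p.1)) (by fun_prop) ?_
    exact fun p hp => ⟨mem_univ _, hp.1⟩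
  have htime : ∀ (x : EuclideanSpace ℝ (Fin n)) (t : ℝ),
      HasDerivAt (fun s : ℝ => (x, s)) ((0 : EuclideanSpace ℝ (Fin n)), (1 : ℝ)) t :=
    fun x t => (hasDerivAt_const t x).prodMk (hasDerivAt_id t)
  have hspace : ∀ (x : EuclideanSpace ℝ (Fin n)) (t : ℝ) (i : Fin n),
      HasDerivAt (fun a : ℝ => (x + a • basisVec i, t)) (basisVec i, (0 : ℝ)) 0 := fun x t i => by
    refine HasDerivAt.prodMk ?_ (hasDerivAt_const _ t)
    simpa using ((hasDerivAt_id (0 : ℝ)).smul_const (basisVec i)).const_add x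
  have hspace0 : ∀ (x : EuclideanSpace ℝ (Fin n)) (t : ℝ) (i : Fin n),
      (x, t) = (fun a : ℝ => (x + a • basisVec i, t)) 0 := by simp
  have hHtime : ∀ v, ∀ t ∈ Ioi (0 : ℝ), ∀ x,
      HasDerivAt (fun s => fderivWithin ℝ U S (x, s) v) (H (x, t) (0, 1) v) t :=
    fun v t ht x => by
      have := ((hHat t ht x).comp_hasDerivAt t (htime x t)).clm_apply (hasDerivAt_const t v)
      rw [map_zero, add_zero] at this
      exact this
  have hHspace : ∀ v i, ∀ t ∈ Ioi (0 : ℝ), ∀ x, HasLineDerivAt ℝ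
      (fun y => fderivWithin ℝ U S (y, t) v) (H (x, t) (basisVec i, 0) v) x (basisVec i) :=
    fun v i t ht x => by
      have h1 := (hHat t ht x).comp_hasDerivAt_of_eq (0 : ℝ) (hspace x t i) (hspace0 x t i)
      have h2 := h1.clm_apply (hasDerivAt_const 0 v)
      rw [map_zero, add_zero] at h2
      exact h2
  have hdt : ∀ t ∈ Ioi (0 : ℝ), ∀ x,
      HasDerivAt (fun s => u x s) (fderivWithin ℝ U S (x, t) (0, 1)) t := fun t ht x =>
    (hat t ht x).comp_hasDerivAt t (htime x t)
  have hdx : ∀ i, ∀ t ∈ Ici (0 : ℝ), ∀ x, HasLineDerivAt ℝ (fun y => u y t)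
      (fderivWithin ℝ U S (x, t) (basisVec i, 0)) x (basisVec i) := fun i t ht x => by
    have hmem : ∀ᶠ a in 𝓝 (0 : ℝ), (x + a • basisVec i, t) ∈ S :=
      Eventually.of_forall fun a => ⟨mem_univ _, ht⟩
    exact (hfd t ht x).comp_hasDerivAt_of_eq (0 : ℝ) (hspace x t i) hmem (hspace0 x t i)
  refine ⟨fun t x => fderivWithin ℝ U S (x, t) (0, 1), fun t x => H (x, t) (0, 1) (0, 1),
    fun i t x => fderivWithin ℝ U S (x, t) (basisVec i, 0),
    fun i t x => H (x, t) (0, 1) (basisVec i, 0),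
    fun i t x => H (x, t) (basisVec i, 0) (basisVec i, 0), ?_⟩
  constructor
  · exact hswap hreg.continuousOn
  · exact hswap (hD.continuousOn.clm_apply continuousOn_const)
  · exact fun i => hswap (hD.continuousOn.clm_apply continuousOn_const)
  · exact hswap ((hHc.clm_apply continuousOn_const).clm_apply continuousOn_const)
  · exact fun i => hswap ((hHc.clm_apply continuousOn_const).clm_apply continuousOn_const)
  · exact fun i => hswap ((hHc.clm_apply continuousOn_const).clm_apply continuousOn_const)
  · exact hdt
  · exact hHtime _
  · exact fun i => hHtime _
  · exact hdx
  · intro i t ht x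
    rw [hsymm t ht]
    exact hHspace _ i t ht x
  · exact fun i => hHspace _ i
  · intro t ht x
    have h1 : deriv (fun s => u x s) t = _ := (hdt t ht x).deriv
    have h2 : deriv (deriv (fun s => u x s)) t = H (x, t) (0, 1) (0, 1) := by
      refine HasDerivAt.deriv ((hHtime (0, 1) t ht x).congr_of_eventuallyEq ?_)
      filter_upwards [Ioi_mem_nhds ht] with s hs using (hdt s hs x).deriv
    have h3 : lap (fun z => u z t) x = ∑ i, H (x, t) (basisVec i, 0) (basisVec i, 0) := by
      refine Finset.sum_congr rfl fun i _ => ?_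
      rw [iteratedDeriv_succ, iteratedDeriv_one]
      have hd : deriv (fun a : ℝ => u (x + a • basisVec i) t) =
          fun a => fderivWithin ℝ U S (x + a • basisVec i, t) (basisVec i, 0) := by
        funext a
        have := hdx i t (Ioi_subset_Ici_self ht) (x + a • basisVec i)
        have h4 := HasDerivAt.comp_sub_const a a (by rw [sub_self]; exact this)
        refine HasDerivAt.deriv ?_
        convert h4 using 2 with b
        rw [add_assoc, ← add_smul]; ring_nf
      rw [hd]
      exact (hHspace (basisVec i, 0) i t ht x).deriv
    have := hpde x t ht
    rw [h1, h2, h3] at this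
    linarith
  · exact hu0
  · intro x
    rw [← hu1 x]
    have hmaps : MapsTo (fun s : ℝ => (x, s)) (Ici 0) S := fun s hs => ⟨mem_univ _, hs⟩
    have := (hfd 0 (mem_Ici.2 le_rfl) x).comp_hasDerivWithinAt (0 : ℝ)
      (htime x 0).hasDerivWithinAt hmaps
    exact (this.derivWithin (uniqueDiffOn_Ici 0 0 (mem_Ici.2 le_rfl))).symm

/-- Integration by parts against a compactly supported function. -/
theorem integral_mul_add_mul_eq_zero {𝕜 : Type*} [RCLike 𝕜]
    {a a' b b' : EuclideanSpace ℝ (Fin n) → 𝕜} {v : EuclideanSpace ℝ (Fin n)}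
    {k : Set (EuclideanSpace ℝ (Fin n))} (hk : IsCompact k)
    (ha : Continuous a) (ha' : Continuous a') (hb : Continuous b) (hb' : Continuous b')
    (hbk : ∀ x ∉ k, b x = 0) (hbk' : ∀ x ∉ k, b' x = 0)
    (hla : ∀ x, HasLineDerivAt ℝ a (a' x) x v) (hlb : ∀ x, HasLineDerivAt ℝ b (b' x) x v) :
    ∫ x, (a x * b' x + a' x * b x) = 0 := by
  have hint : ∀ {c d : EuclideanSpace ℝ (Fin n) → 𝕜}, Continuous c → Continuous d →
      (∀ x ∉ k, d x = 0) → Integrable fun x => c x * d x := fun hc hd h0 =>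
    (hc.mul hd).integrable_of_hasCompactSupport
      (HasCompactSupport.intro hk fun x hx => by simp [h0 x hx])
  have := integral_bilinear_hasLineDerivAt_right_eq_neg_left_of_integrable
    (B := ContinuousLinearMap.mul ℝ 𝕜) (μ := volume) (f := a) (f' := a') (g := b) (g' := b')
    (v := v) (hint ha' hb hbk) (hint ha hb' hbk') (hint ha hb hbk)
    (fun x _ => hla x) (fun x _ => hlb x)
  simp only [ContinuousLinearMap.mul_apply'] at this
  rw [integral_add (hint ha hb' hbk') (hint ha' hb hbk), this, neg_add_cancel]

theorem continuous_slice {X V : Type*} [TopologicalSpace X] [TopologicalSpace V]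
    {F : ℝ → X → V} {s : Set ℝ} (hF : ContinuousOn (Function.uncurry F) (s ×ˢ univ))
    {t : ℝ} (ht : t ∈ s) : Continuous (F t) :=
  continuousOn_univ.1 (hF.comp (f := fun x : X => (t, x)) (s := univ) (by fun_prop)
    (fun _ _ => ⟨ht, mem_univ _⟩))

/-- A function with zero derivative inside `[0, t]` takes the same value at both ends. -/
theorem eq_left_of_hasDerivAt_zero {V : Type*} [NormedAddCommGroup V] [NormedSpace ℝ V]
    {v : ℝ → V} {t : ℝ} (h0 : 0 ≤ t) (hc : ContinuousOn v (Icc 0 t))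
    (hd : ∀ r ∈ Ioo 0 t, HasDerivAt v 0 r) : v t = v 0 := by
  refine constant_of_has_deriv_right_zero hc (fun r hr => ?_) t ⟨h0, le_rfl⟩
  rcases hr.1.eq_or_lt with rfl | hr0
  · refine hasDerivWithinAt_Ici_of_tendsto_deriv (s := Ioo 0 t)
      (fun s hs => (hd s hs).differentiableAt.differentiableWithinAt)
      ((hc 0 ⟨le_rfl, h0⟩).mono Ioo_subset_Icc_self) (Ioo_mem_nhdsGT hr.2) ?_
    refine tendsto_const_nhds.congr' ?_
    filter_upwards [Ioo_mem_nhdsGT hr.2] with s hs using (hd s hs).deriv.symm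
  · exact (hd r ⟨hr0, hr.2⟩).hasDerivWithinAt

/-- A line derivative vanishes on any open set on which the function does. -/
theorem lineDeriv_eq_zero {v : EuclideanSpace ℝ (Fin n) → ℝ} {v' : ℝ}
    {x e : EuclideanSpace ℝ (Fin n)} {s : Set (EuclideanSpace ℝ (Fin n))}
    (h : HasLineDerivAt ℝ v v' x e) (hs : IsOpen s) (hv : ∀ x ∈ s, v x = 0) (hx : x ∈ s) :
    v' = 0 := by
  refine HasDerivAt.unique h ((hasDerivAt_const (0 : ℝ) (0 : ℝ)).congr_of_eventuallyEq ?_)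
  have hc : Continuous fun a : ℝ => x + a • e := by fun_prop
  have hmem : (fun a : ℝ => x + a • e) ⁻¹' s ∈ 𝓝 (0 : ℝ) :=
    hc.continuousAt.preimage_mem_nhds (hs.mem_nhds (by simpa using hx))
  filter_upwards [hmem] with a ha using hv _ ha

/-- The positive part of the function whose positivity set is the backward light cone with
apex `(R, x₀)`. -/
def cone (R : ℝ) (x₀ : EuclideanSpace ℝ (Fin n)) (t : ℝ) (x : EuclideanSpace ℝ (Fin n)) : ℝ :=
  max ((R - t) ^ 2 - ‖x - x₀‖ ^ 2) 0

theorem cone_nonneg (R : ℝ) (x₀ : EuclideanSpace ℝ (Fin n)) (t : ℝ)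
    (x : EuclideanSpace ℝ (Fin n)) : 0 ≤ cone R x₀ t x := le_max_right _ _

theorem continuous_cone (R : ℝ) (x₀ : EuclideanSpace ℝ (Fin n)) :
    Continuous (Function.uncurry (cone R x₀)) := by
  unfold cone Function.uncurry
  fun_prop

theorem cone_eq_zero {R t : ℝ} {x₀ x : EuclideanSpace ℝ (Fin n)} (h0 : 0 ≤ t) (hR : t ≤ R)
    (hx : R ≤ ‖x - x₀‖) : cone R x₀ t x = 0 := by
  refine max_eq_right ?_
  nlinarith [norm_nonneg (x - x₀)]

theorem hasDerivAt_max_zero_sq (y : ℝ) :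
    HasDerivAt (fun z : ℝ => max z 0 ^ 2) (2 * max y 0) y := by
  rcases lt_trichotomy y 0 with hy | rfl | hy
  · rw [max_eq_right hy.le, mul_zero]
    refine (hasDerivAt_const y (0 : ℝ)).congr_of_eventuallyEq ?_
    filter_upwards [Iio_mem_nhds hy] with z hz
    simp [max_eq_right (mem_Iio.1 hz).le]
  · rw [max_self, mul_zero, hasDerivAt_iff_isLittleO_nhds_zero]
    have h1 : (fun h : ℝ => max (0 + h) 0 ^ 2 - max (0 : ℝ) 0 ^ 2 - h • (0 : ℝ))
        =O[𝓝 0] fun h : ℝ => h ^ 2 := by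
      refine Asymptotics.IsBigO.of_bound 1 (Eventually.of_forall fun h => ?_)
      rcases le_total h 0 with hh | hh <;> simp [hh, sq_nonneg]
    exact h1.trans_isLittleO (Asymptotics.isLittleO_pow_id one_lt_two)
  · rw [max_eq_left hy.le]
    have := (hasDerivAt_id y).pow 2
    refine HasDerivAt.congr_of_eventuallyEq (by simpa using this) ?_
    filter_upwards [Ioi_mem_nhds hy] with z hz
    simp [max_eq_left (mem_Ioi.1 hz).le]

theorem hasDerivAt_cone_sq (R : ℝ) (x₀ : EuclideanSpace ℝ (Fin n)) (t : ℝ)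
    (x : EuclideanSpace ℝ (Fin n)) :
    HasDerivAt (fun s => cone R x₀ s x ^ 2) (-4 * (R - t) * cone R x₀ t x) t := by
  have h1 : HasDerivAt (fun s : ℝ => (R - s) ^ 2 - ‖x - x₀‖ ^ 2) (-2 * (R - t)) t := by
    have := (((hasDerivAt_id' t).const_sub R).fun_pow 2).sub_const (‖x - x₀‖ ^ 2)
    exact this.congr_deriv (by simp)
  have := (hasDerivAt_max_zero_sq ((R - t) ^ 2 - ‖x - x₀‖ ^ 2)).comp t h1
  refine this.congr_deriv ?_
  unfold cone
  ring

theorem hasLineDerivAt_cone_sq (R : ℝ) (x₀ : EuclideanSpace ℝ (Fin n)) (t : ℝ)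
    (x : EuclideanSpace ℝ (Fin n)) (i : Fin n) :
    HasLineDerivAt ℝ (fun y => cone R x₀ t y ^ 2) (-4 * (x - x₀) i * cone R x₀ t x) x
      (basisVec i) := by
  have h0 : HasDerivAt (fun a : ℝ => (x + a • basisVec i) - x₀) (basisVec i) 0 := by
    simpa using (((hasDerivAt_id (0 : ℝ)).smul_const (basisVec i)).const_add x).sub_const x₀
  have h1 : HasDerivAt (fun a : ℝ => (R - t) ^ 2 - ‖(x + a • basisVec i) - x₀‖ ^ 2)
      (-2 * (x - x₀) i) 0 := by
    have := h0.norm_sq.const_sub ((R - t) ^ 2)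
    exact this.congr_deriv (by simp [EuclideanSpace.inner_single_right])
  have := HasDerivAt.comp (0 : ℝ)
    (hasDerivAt_max_zero_sq ((R - t) ^ 2 - ‖(x + (0 : ℝ) • basisVec i) - x₀‖ ^ 2)) h1
  refine HasDerivAt.congr_deriv this ?_
  unfold cone
  simp only [zero_smul, add_zero]
  ring

section LightCone

variable {f g : EuclideanSpace ℝ (Fin n) → ℝ}
  {u ut utt : ℝ → EuclideanSpace ℝ (Fin n) → ℝ}
  {D Dt DD : Fin n → ℝ → EuclideanSpace ℝ (Fin n) → ℝ}

/-- The pointwise inequality behind the monotonicity of the energy in the light cone. -/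
theorem cone_flux_nonpos {R t : ℝ} (ht : t < R) (x₀ x : EuclideanSpace ℝ (Fin n)) (a : ℝ)
    (d : Fin n → ℝ) :
    -4 * (R - t) * cone R x₀ t x * ((a ^ 2 + ∑ i, d i ^ 2) / 2) - cone R x₀ t x ^ 2 * a ^ 2
      + ∑ i, 4 * (x - x₀) i * cone R x₀ t x * a * d i ≤ 0 := by
  have hr : 0 < R - t := sub_pos.2 ht
  rcases (cone_nonneg R x₀ t x).eq_or_lt with hq | hq
  · simp [← hq]
  have hnorm : ∑ i, (x - x₀) i ^ 2 ≤ (R - t) ^ 2 := by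
    have : 0 < (R - t) ^ 2 - ‖x - x₀‖ ^ 2 := by
      by_contra! hle
      exact hq.ne' (max_eq_right hle)
    rw [← EuclideanSpace.real_norm_sq_eq]
    linarith
  have hsq : 0 ≤ ∑ i, ((R - t) * d i - a * (x - x₀) i) ^ 2 :=
    Finset.sum_nonneg fun i _ => sq_nonneg _
  have hexp : ∑ i, ((R - t) * d i - a * (x - x₀) i) ^ 2 = (R - t) ^ 2 * ∑ i, d i ^ 2
      - 2 * (R - t) * (a * ∑ i, (x - x₀) i * d i) + a ^ 2 * ∑ i, (x - x₀) i ^ 2 := by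
    simp only [Finset.mul_sum, ← Finset.sum_sub_distrib, ← Finset.sum_add_distrib]
    exact Finset.sum_congr rfl fun i _ => by ring
  have hkey : a * ∑ i, (x - x₀) i * d i ≤ (R - t) * ((a ^ 2 + ∑ i, d i ^ 2) / 2) := by
    refine le_of_mul_le_mul_left ?_ hr
    nlinarith [mul_le_mul_of_nonneg_left hnorm (sq_nonneg a)]
  have hsum : ∑ i, 4 * (x - x₀) i * cone R x₀ t x * a * d i
      = 4 * cone R x₀ t x * (a * ∑ i, (x - x₀) i * d i) := by
    simp only [Finset.mul_sum]
    exact Finset.sum_congr rfl fun i _ => by ring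
  rw [hsum]
  nlinarith [mul_le_mul_of_nonneg_left hkey hq.le,
    mul_nonneg (sq_nonneg (cone R x₀ t x)) (sq_nonneg a)]

/-- Finite speed of propagation: the solution and its velocity vanish along the axis of a
backward light cone whose base misses the supports of the data. -/
theorem IsSolution.eq_zero_of_ball (h : IsSolution f g u ut utt D Dt DD) {R : ℝ}
    {x₀ : EuclideanSpace ℝ (Fin n)} (hf : ∀ x ∈ ball x₀ R, f x = 0)
    (hg : ∀ x ∈ ball x₀ R, g x = 0) {t : ℝ} (h0 : 0 ≤ t) (hR : t < R) :
    u t x₀ = 0 ∧ ut t x₀ = 0 := by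
  set q := cone R x₀ with hq
  set e : ℝ → EuclideanSpace ℝ (Fin n) → ℝ := fun t x => (ut t x ^ 2 + ∑ i, D i t x ^ 2) / 2
    with he
  set F : ℝ → EuclideanSpace ℝ (Fin n) → ℝ := fun t x => q t x ^ 2 * e t x with hF
  set F' : ℝ → EuclideanSpace ℝ (Fin n) → ℝ := fun t x =>
    -4 * (R - t) * q t x * e t x
      + q t x ^ 2 * (ut t x * utt t x + ∑ i, D i t x * Dt i t x) with hF'
  set k : Set (EuclideanSpace ℝ (Fin n)) := closedBall x₀ R with hk
  have hkc : IsCompact k := isCompact_closedBall x₀ R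
  have hqc : Continuous (Function.uncurry q) := continuous_cone R x₀
  have hqk : ∀ t ∈ Icc 0 R, ∀ x ∉ k, q t x = 0 := fun t ht x hx => by
    rw [hk, mem_closedBall, dist_eq_norm, not_le] at hx
    exact cone_eq_zero ht.1 ht.2 hx.le
  have hec : ContinuousOn (Function.uncurry e) (Ici 0 ×ˢ univ) :=
    ((h.cont_t.pow 2).add (continuousOn_finsetSum _ fun i _ => (h.cont_x i).pow 2)).div_const 2
  have hFc : ContinuousOn (Function.uncurry F) (Ici 0 ×ˢ univ) := (hqc.continuousOn.pow 2).mul hec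
  have hsub : Ioi (0 : ℝ) ×ˢ (univ : Set (EuclideanSpace ℝ (Fin n))) ⊆ Ici 0 ×ˢ univ :=
    prod_mono Ioi_subset_Ici_self subset_rfl
  have hFc' : ContinuousOn (Function.uncurry F') (Ioi 0 ×ˢ univ) := by
    have h1 : ContinuousOn
        (fun p : ℝ × EuclideanSpace ℝ (Fin n) => -4 * (R - p.1) * Function.uncurry q p)
        (Ioi 0 ×ˢ univ) := by fun_prop
    exact (h1.mul (hec.mono hsub)).add ((hqc.continuousOn.pow 2).mul
      (((h.cont_t.mono hsub).mul h.cont_tt).add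
        (continuousOn_finsetSum _ fun i _ => ((h.cont_x i).mono hsub).mul (h.cont_xt i))))
  have hFd : ∀ t ∈ Ioi (0 : ℝ), ∀ x, HasDerivAt (fun s => F s x) (F' t x) t := fun t ht x => by
    have hsum : HasDerivAt (fun s => ∑ i, D i s x ^ 2) (∑ i, 2 * D i t x * Dt i t x) t := by
      refine HasDerivAt.fun_sum fun i _ => ?_
      simpa using (h.deriv_xt i t ht x).fun_pow 2
    have := (hasDerivAt_cone_sq R x₀ t x).fun_mul
      ((((h.deriv_tt t ht x).fun_pow 2).fun_add hsum).div_const 2)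
    refine this.congr_deriv ?_
    simp only [hF', hq, he, mul_assoc, ← Finset.mul_sum]
    push_cast
    ring
  have hmono : AntitoneOn (fun s => ∫ x, F s x) (Icc 0 t) := by
    have hder : ∀ s ∈ interior (Icc 0 t), HasDerivAt (fun s => ∫ x, F s x) (∫ x, F' s x) s := by
      intro s hs
      rw [interior_Icc] at hs
      have hs' : s ∈ Ioo 0 R := ⟨hs.1, hs.2.trans hR⟩
      have hsub2 : Ioo 0 R ×ˢ (univ : Set (EuclideanSpace ℝ (Fin n))) ⊆ Ioi 0 ×ˢ univ :=
        prod_mono Ioo_subset_Ioi_self subset_rfl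
      exact hasDerivAt_integral_of_compact_support isOpen_Ioo hkc
        (hFc.mono (hsub2.trans hsub)) (hFc'.mono hsub2) (fun r hr x => hFd r hr.1 x)
        (fun r hr x hx => by simp [hF, hqk r (Ioo_subset_Icc_self hr) x hx]) hs'
    refine antitoneOn_of_deriv_nonpos (convex_Icc 0 t) ?_
      (fun s hs => (hder s hs).differentiableAt.differentiableWithinAt) fun s hs => ?_
    · refine continuousOn_integral_of_compact_support hkc
        (hFc.mono (prod_mono Icc_subset_Ici_self subset_rfl)) fun s x hs hx => ?_
      simp [hF, hqk s ⟨hs.1, hs.2.trans hR.le⟩ x hx]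
    · rw [(hder s hs).deriv]
      rw [interior_Icc] at hs
      have hs0 : s ∈ Ioi (0 : ℝ) := hs.1
      have hs0' : s ∈ Ici (0 : ℝ) := hs.1.le
      have hsI : s ∈ Icc 0 R := ⟨hs.1.le, (hs.2.trans hR).le⟩
      have hqs : Continuous (q s) := hqc.comp (by fun_prop : Continuous fun x => (s, x))
      have hcut := continuous_slice h.cont_t hs0'
      have hcD := fun i => continuous_slice (h.cont_x i) hs0'
      have hcDt := fun i => continuous_slice (h.cont_xt i) hs0
      have hcDD := fun i => continuous_slice (h.cont_xx i) hs0
      set J : Fin n → EuclideanSpace ℝ (Fin n) → ℝ := fun i x =>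
        D i s x * (-4 * (x - x₀) i * q s x * ut s x + q s x ^ 2 * Dt i s x)
          + DD i s x * (q s x ^ 2 * ut s x) with hJ
      have hb' : ∀ i, Continuous fun x : EuclideanSpace ℝ (Fin n) =>
          -4 * (x - x₀) i * q s x * ut s x + q s x ^ 2 * Dt i s x := fun i => by
        have := hcDt i
        fun_prop
      have hb : Continuous fun x => q s x ^ 2 * ut s x := by fun_prop
      have hJ0 : ∀ i, ∫ x, J i x = 0 := fun i => by
        refine integral_mul_add_mul_eq_zero (v := basisVec i) hkc (hcD i) (hcDD i) hb (hb' i)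
          ?_ ?_ (h.line_xx i s hs0) ?_
        · intro x hx; simp [hqk s hsI x hx]
        · intro x hx; simp [hqk s hsI x hx]
        · intro x
          have := HasDerivAt.fun_mul (hasLineDerivAt_cone_sq R x₀ s x i) (h.line_tx i s hs0 x)
          refine HasDerivAt.congr_deriv this ?_
          rw [zero_smul, add_zero]
      have hJint : ∀ i, Integrable (J i) := fun i => by
        have hcJ : Continuous (J i) := ((hcD i).mul (hb' i)).add ((hcDD i).mul hb)
        exact hcJ.integrable_of_hasCompactSupport
          (HasCompactSupport.intro hkc fun x hx => by simp [hJ, hqk s hsI x hx])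
      have hF'int : Integrable (F' s) :=
        (continuous_slice hFc' hs0).integrable_of_hasCompactSupport
          (HasCompactSupport.intro hkc fun x hx => by simp [hF', hqk s hsI x hx])
      have hsplit : ∫ x, F' s x = ∫ x, (F' s x - ∑ i, J i x) := by
        rw [integral_sub hF'int (integrable_finsetSum _ fun i _ => hJint i),
          integral_finsetSum _ fun i _ => hJint i]
        simp only [hJ0, Finset.sum_const_zero, sub_zero]
      rw [hsplit]
      refine integral_nonpos fun x => ?_
      have := cone_flux_nonpos (hs.2.trans hR) x₀ x (ut s x) fun i => D i s x
      refine le_trans (le_of_eq ?_) this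
      simp only [hF', hJ, h.pde s hs0 x, he, hq, mul_add, mul_sub, Finset.mul_sum,
        Finset.sum_add_distrib]
      have e1 : ∑ i, D i s x * (-4 * (x - x₀) i * cone R x₀ s x * ut s x)
          = -∑ i, 4 * (x - x₀) i * cone R x₀ s x * ut s x * D i s x := by
        rw [← Finset.sum_neg_distrib]
        exact Finset.sum_congr rfl fun i _ => by ring
      have e2 : ∑ i, D i s x * (cone R x₀ s x ^ 2 * Dt i s x)
          = ∑ i, cone R x₀ s x ^ 2 * (D i s x * Dt i s x) :=
        Finset.sum_congr rfl fun i _ => by ring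
      have e3 : ∑ i, DD i s x * (cone R x₀ s x ^ 2 * ut s x)
          = ∑ i, cone R x₀ s x ^ 2 * (ut s x * DD i s x) :=
        Finset.sum_congr rfl fun i _ => by ring
      rw [e1, e2, e3]
      ring
  have hF0 : ∀ x, F 0 x = 0 := fun x => by
    by_cases hx : x ∈ ball x₀ R
    · have hD : ∀ i, D i 0 x = 0 := fun i =>
        lineDeriv_eq_zero (h.line_x i 0 (mem_Ici.2 le_rfl) x) isOpen_ball
          (fun y hy => by rw [h.initial, hf y hy]) hx
      simp [hF, he, h.initial_t, hg x hx, hD]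
    · rw [mem_ball, dist_eq_norm, not_lt] at hx
      have : q 0 x = 0 := cone_eq_zero le_rfl (h0.trans hR.le) hx
      simp [hF, this]
  have hut : ∀ s ∈ Icc 0 t, ut s x₀ = 0 := fun s hs => by
    have hsI : s ∈ Icc 0 R := ⟨hs.1, hs.2.trans hR.le⟩
    have hFs : Continuous (F s) := continuous_slice hFc hs.1
    have hnn : 0 ≤ F s := fun x => by
      have : 0 ≤ ∑ i, D i s x ^ 2 :=
    Finset.sum_nonneg fun i _ => sq_nonneg _
      simp only [hF, he, Pi.zero_apply]
      positivity
    have hint : Integrable (F s) := hFs.integrable_of_hasCompactSupport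
      (HasCompactSupport.intro hkc fun x hx => by simp [hF, hqk s hsI x hx])
    have hle : ∫ x, F s x ≤ 0 := by
      have := hmono ⟨le_rfl, h0⟩ hs hs.1
      simpa [hF0] using this
    have hzero := (integral_eq_zero_iff_of_nonneg hnn hint).1
      (le_antisymm hle (integral_nonneg hnn))
    have hx := congrFun ((hFs.ae_eq_iff_eq volume continuous_const).1 hzero) x₀
    have hq0 : 0 < q s x₀ := by
      simp only [hq, cone, sub_self, norm_zero]
      have : 0 < R - s := by linarith [hs.2]
      refine lt_max_of_lt_left ?_
      nlinarith
    have he0 : e s x₀ = 0 :=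
      (mul_eq_zero.1 hx).resolve_left (pow_ne_zero 2 hq0.ne')
    have : 0 ≤ ∑ i, D i s x₀ ^ 2 :=
    Finset.sum_nonneg fun i _ => sq_nonneg _
    have h2 : ut s x₀ ^ 2 = 0 := by
      simp only [he] at he0
      nlinarith [sq_nonneg (ut s x₀)]
    simpa using h2
  refine ⟨?_, hut t ⟨h0, le_rfl⟩⟩
  have hcu : ContinuousOn (fun s => u s x₀) (Icc 0 t) :=
    h.cont.comp (f := fun s => (s, x₀)) (by fun_prop) fun s hs => ⟨hs.1, mem_univ _⟩
  have hx0 : u 0 x₀ = 0 := by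
    rw [h.initial, hf x₀ (mem_ball_self (h0.trans_lt hR))]
  rw [← hx0]
  refine eq_left_of_hasDerivAt_zero h0 hcu fun r hr => ?_
  have := h.deriv_t r hr.1 x₀
  rwa [hut r (Ioo_subset_Icc_self hr)] at this

end LightCone

section Oscillator

variable {V : Type*} [NormedAddCommGroup V]

/-- A damped oscillator `v` with stiffness `a` on `(0, ∞)`, its velocity `w` continuous up to `0`. -/
structure IsOscillator [NormedSpace ℝ V] (a : ℝ) (v w : ℝ → V) : Prop where
  cont : ContinuousOn v (Ici 0)
  cont' : ContinuousOn w (Ici 0)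
  deriv : ∀ t ∈ Ioi (0 : ℝ), HasDerivAt v (w t) t
  deriv' : ∀ t ∈ Ioi (0 : ℝ), HasDerivAt w (-w t - a • v t) t

theorem IsOscillator.sub_smul_eq [NormedSpace ℝ V] {a : ℝ} {v w : ℝ → V}
    (h : IsOscillator a v w) {p q : ℝ} (hpq : p + q = -1) (hmul : p * q = a) {t : ℝ}
    (ht : 0 ≤ t) : w t - p • v t = rexp (q * t) • (w 0 - p • v 0) := by
  have key : rexp (-(q * t)) • (w t - p • v t) = rexp (-(q * 0)) • (w 0 - p • v 0) := by
    refine eq_left_of_hasDerivAt_zero (v := fun r => rexp (-(q * r)) • (w r - p • v r)) ht ?_ ?_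
    · have h1 := h.cont.mono (Icc_subset_Ici_self : Icc 0 t ⊆ Ici 0)
      have h2 := h.cont'.mono (Icc_subset_Ici_self : Icc 0 t ⊆ Ici 0)
      have h3 : ContinuousOn (fun r : ℝ => rexp (-(q * r))) (Icc 0 t) := by fun_prop
      exact h3.smul (h2.sub (h1.const_smul p))
    · intro r hr
      have h1 : HasDerivAt (fun r : ℝ => rexp (-(q * r))) (rexp (-(q * r)) * -q) r := by
        have := (((hasDerivAt_id' r).const_mul q).fun_neg).exp
        simpa using this
      have h2 := h1.fun_smul ((h.deriv' r hr.1).fun_sub ((h.deriv r hr.1).fun_const_smul p))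
      refine h2.congr_deriv ?_
      have hq : q = -1 - p := by linarith
      rw [← hmul, hq]
      module
  rw [mul_zero, neg_zero, Real.exp_zero, one_smul] at key
  rw [← key, smul_smul, ← Real.exp_add, add_neg_cancel, Real.exp_zero, one_smul]

/-- The explicit solution in the overdamped regime. -/
theorem IsOscillator.eq_of_le [NormedSpace ℝ V] {a : ℝ} {v w : ℝ → V}
    (h : IsOscillator a v w) {m : ℝ} (hm : 0 < m) (hma : m ^ 2 = 1 / 4 - a) {t : ℝ}
    (ht : 0 ≤ t) : v t = (2 * m)⁻¹ • (rexp (-(a / (1 / 2 + m)) * t) • (w 0 + (1 / 2 + m) • v 0)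
      - rexp (-(1 / 2 + m) * t) • (w 0 + (a / (1 / 2 + m)) • v 0)) := by
  have hdiv : a / (1 / 2 + m) = 1 / 2 - m := by
    rw [div_eq_iff (by positivity)]
    linarith
  rw [hdiv]
  have h1 := h.sub_smul_eq (p := -(1 / 2 - m)) (q := -(1 / 2 + m)) (by ring) (by linarith) ht
  have h2 := h.sub_smul_eq (p := -(1 / 2 + m)) (q := -(1 / 2 - m)) (by ring) (by linarith) ht
  rw [neg_smul, sub_neg_eq_add, neg_smul, sub_neg_eq_add] at h1 h2
  rw [← h1, ← h2, eq_inv_smul_iff₀ (by positivity)]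
  module

theorem IsOscillator.norm_le_of_le [NormedSpace ℝ V] {a : ℝ} {v w : ℝ → V}
    (h : IsOscillator a v w) (ha0 : 0 ≤ a) (ha : a ≤ 3 / 16) {t : ℝ} (ht : 0 ≤ t) :
    ‖v t‖ ≤ 4 * (‖v 0‖ + ‖w 0‖) * rexp (-a * t) := by
  set m := √(1 / 4 - a) with hm
  have hma : m ^ 2 = 1 / 4 - a := Real.sq_sqrt (by linarith)
  have hm4 : 1 / 4 ≤ m := Real.le_sqrt_of_sq_le (by linarith)
  have hm2 : m ≤ 1 / 2 := by
    refine Real.sqrt_le_iff.2 ⟨by norm_num, by linarith⟩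
  have hm0 : 0 < m := by linarith
  have hb1 : a ≤ a / (1 / 2 + m) := by
    rw [le_div_iff₀ (by positivity)]
    nlinarith
  have hb2 : a / (1 / 2 + m) ≤ 1 := by
    rw [div_le_one (by positivity)]
    linarith
  rw [h.eq_of_le hm0 hma ht]
  have e1 : rexp (-(a / (1 / 2 + m)) * t) ≤ rexp (-a * t) := by
    gcongr
  have e2 : rexp (-(1 / 2 + m) * t) ≤ rexp (-a * t) := by
    gcongr
    linarith
  have n1 : ‖w 0 + (1 / 2 + m) • v 0‖ ≤ ‖v 0‖ + ‖w 0‖ := by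
    refine (norm_add_le _ _).trans ?_
    rw [norm_smul, Real.norm_of_nonneg (by positivity)]
    nlinarith [norm_nonneg (v 0)]
  have n2 : ‖w 0 + (a / (1 / 2 + m)) • v 0‖ ≤ ‖v 0‖ + ‖w 0‖ := by
    refine (norm_add_le _ _).trans ?_
    rw [norm_smul, Real.norm_of_nonneg (by positivity)]
    nlinarith [norm_nonneg (v 0)]
  have hinv : (2 * m)⁻¹ ≤ 2 := by
    rw [inv_le_comm₀ (by positivity) (by norm_num)]
    linarith
  rw [norm_smul, Real.norm_of_nonneg (by positivity)]
  calc _ ≤ 2 * (rexp (-a * t) * (‖v 0‖ + ‖w 0‖) + rexp (-a * t) * (‖v 0‖ + ‖w 0‖)) := by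
        refine mul_le_mul hinv ((norm_sub_le _ _).trans ?_) (norm_nonneg _) (by norm_num)
        rw [norm_smul, norm_smul, Real.norm_of_nonneg (Real.exp_pos _).le,
          Real.norm_of_nonneg (Real.exp_pos _).le]
        gcongr
    _ = _ := by ring

theorem IsOscillator.norm_le_of_ge [InnerProductSpace ℝ V] {a : ℝ} {v w : ℝ → V}
    (h : IsOscillator a v w) (ha : 3 / 16 ≤ a) {t : ℝ} (ht : 0 ≤ t) :
    ‖v t‖ ≤ 4 * (‖v 0‖ + ‖w 0‖) * rexp (-t / 20) := by
  set L : ℝ → ℝ := fun r => ‖w r‖ ^ 2 + inner ℝ (v r) (w r) + (1 / 2 + a) * ‖v r‖ ^ 2 with hL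
  have hLd : ∀ r ∈ Ioi (0 : ℝ), HasDerivAt L (-‖w r‖ ^ 2 - a * ‖v r‖ ^ 2) r := fun r hr => by
    have hv := h.deriv r hr
    have hw := h.deriv' r hr
    have := (hw.norm_sq.fun_add (hv.inner ℝ hw)).fun_add (hv.norm_sq.const_mul (1 / 2 + a))
    refine this.congr_deriv ?_
    simp only [inner_sub_right, inner_neg_right, inner_smul_right,
      real_inner_self_eq_norm_sq, real_inner_comm (v r) (w r)]
    ring
  have hcs : ∀ r, |inner ℝ (v r) (w r)| ≤ ‖v r‖ * ‖w r‖ := fun r => abs_real_inner_le_norm _ _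
  have hupper : ∀ r, L r ≤ 3 / 2 * ‖w r‖ ^ 2 + (1 + a) * ‖v r‖ ^ 2 := fun r => by
    have := (abs_le.1 (hcs r)).2
    simp only [hL]
    nlinarith [sq_nonneg (‖v r‖ - ‖w r‖)]
  have hlower : ∀ r, a * ‖v r‖ ^ 2 ≤ L r := fun r => by
    have := (abs_le.1 (hcs r)).1
    simp only [hL]
    nlinarith [sq_nonneg (‖v r‖ - ‖w r‖)]
  have hanti : AntitoneOn (fun r => rexp (r / 10) * L r) (Icc 0 t) := by
    have hder : ∀ r ∈ interior (Icc 0 t), HasDerivAt (fun r => rexp (r / 10) * L r)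
        (rexp (r / 10) * (1 / 10) * L r + rexp (r / 10) * (-‖w r‖ ^ 2 - a * ‖v r‖ ^ 2)) r := by
      intro r hr
      rw [interior_Icc] at hr
      have := ((hasDerivAt_id' r).div_const 10).exp
      exact this.fun_mul (hLd r hr.1)
    refine antitoneOn_of_deriv_nonpos (convex_Icc 0 t) ?_
      (fun s hs => (hder s hs).differentiableAt.differentiableWithinAt) fun s hs => ?_
    · have h1 := h.cont.mono (Icc_subset_Ici_self : Icc 0 t ⊆ Ici 0)
      have h2 := h.cont'.mono (Icc_subset_Ici_self : Icc 0 t ⊆ Ici 0)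
      have h3 : ContinuousOn (fun r : ℝ => rexp (r / 10)) (Icc 0 t) := by fun_prop
      exact h3.mul (((h2.norm.pow 2).add (h1.inner h2)).add ((h1.norm.pow 2).const_mul _))
    · rw [(hder s hs).deriv, mul_assoc, ← mul_add]
      refine mul_nonpos_of_nonneg_of_nonpos (Real.exp_pos _).le ?_
      have := hupper s
      nlinarith [sq_nonneg ‖v s‖, sq_nonneg ‖w s‖]
  have h1 := hanti ⟨le_rfl, ht⟩ ⟨ht, le_rfl⟩ ht
  simp only [zero_div, Real.exp_zero, one_mul] at h1
  have h2 : ‖v t‖ ^ 2 * rexp (t / 10) ≤ 16 * (‖v 0‖ + ‖w 0‖) ^ 2 := by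
    have h3 := (mul_le_mul_of_nonneg_left (hlower t) (Real.exp_pos (t / 10)).le).trans
      (h1.trans (hupper 0))
    have hv := norm_nonneg (v 0)
    have hw := norm_nonneg (w 0)
    have ha' : 0 < a := by linarith
    refine le_of_mul_le_mul_left ?_ ha'
    nlinarith [mul_nonneg hv hw, mul_nonneg (sub_nonneg.2 ha) (sq_nonneg ‖v 0‖),
      mul_nonneg (sub_nonneg.2 ha) (sq_nonneg ‖w 0‖), mul_nonneg ha'.le (mul_nonneg hv hw),
      sq_nonneg ‖v 0‖, sq_nonneg ‖w 0‖]
  refine le_of_sq_le_sq ?_ (by positivity)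
  have hexp : rexp (-t / 20) ^ 2 * rexp (t / 10) = 1 := by
    rw [sq, ← Real.exp_add, ← Real.exp_add]
    simp only [Real.exp_eq_one_iff]
    ring
  refine le_of_mul_le_mul_right ?_ (Real.exp_pos (t / 10))
  calc _ ≤ _ := h2
    _ = 16 * (‖v 0‖ + ‖w 0‖) ^ 2 * (rexp (-t / 20) ^ 2 * rexp (t / 10)) := by rw [hexp, mul_one]
    _ = _ := by ring

end Oscillator

open scoped FourierTransform

section FourierSide

variable {f g : EuclideanSpace ℝ (Fin n) → ℝ}
  {u ut utt : ℝ → EuclideanSpace ℝ (Fin n) → ℝ}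
  {D Dt DD : Fin n → ℝ → EuclideanSpace ℝ (Fin n) → ℝ}

/-- Finite speed of propagation, for data supported in a ball around the origin. -/
theorem IsSolution.eq_zero_of_notMem (h : IsSolution f g u ut utt D Dt DD) {R : ℝ}
    (hf : ∀ x ∉ closedBall 0 R, f x = 0) (hg : ∀ x ∉ closedBall 0 R, g x = 0) {t : ℝ}
    (ht : 0 ≤ t) {x : EuclideanSpace ℝ (Fin n)} (hx : x ∉ closedBall 0 (R + t)) :
    u t x = 0 ∧ ut t x = 0 := by
  have hx' : R + t < ‖x‖ := by simpa using hx
  have hsub : ∀ y ∈ ball x (‖x‖ - R), y ∉ closedBall (0 : EuclideanSpace ℝ (Fin n)) R := by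
    intro y hy
    rw [mem_ball, dist_eq_norm] at hy
    have := norm_sub_norm_le x y
    rw [norm_sub_rev] at this
    simp only [mem_closedBall, dist_zero_right, not_le]
    linarith
  exact h.eq_zero_of_ball (fun y hy => hf y (hsub y hy)) (fun y hy => hg y (hsub y hy)) ht
    (by linarith)

/-- The kernel of the Fourier transform. -/
def fourierKernel (ξ x : EuclideanSpace ℝ (Fin n)) : ℂ :=
  Complex.exp (↑(-2 * π * inner ℝ x ξ) * Complex.I)

theorem continuous_fourierKernel (ξ : EuclideanSpace ℝ (Fin n)) :
    Continuous (fourierKernel ξ) := by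
  unfold fourierKernel
  fun_prop

theorem fourier_eq_integral_fourierKernel (v : EuclideanSpace ℝ (Fin n) → ℝ)
    (ξ : EuclideanSpace ℝ (Fin n)) :
    𝓕 (fun x => (v x : ℂ)) ξ = ∫ x, fourierKernel ξ x * (v x : ℂ) := by
  rw [Real.fourier_eq']
  rfl

theorem hasLineDerivAt_fourierKernel (ξ x : EuclideanSpace ℝ (Fin n)) (i : Fin n) :
    HasLineDerivAt ℝ (fourierKernel ξ) (-(2 * π * ξ i * Complex.I) * fourierKernel ξ x) x
      (basisVec i) := by
  have h1 : HasDerivAt (fun a : ℝ => -2 * π * inner ℝ (x + a • basisVec i) ξ)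
      (-2 * π * ξ i) 0 := by
    have : (fun a : ℝ => -2 * π * inner ℝ (x + a • basisVec i) ξ) =
        fun a : ℝ => -2 * π * (inner ℝ x ξ + a * ξ i) := by
      ext a
      rw [inner_add_left, real_inner_smul_left, EuclideanSpace.inner_single_left]
      simp
    rw [this]
    exact ((((hasDerivAt_id' (0 : ℝ)).mul_const (ξ i)).const_add _).const_mul _).congr_deriv
      (by simp)
  have h2 := (h1.ofReal_comp.mul_const Complex.I).cexp
  refine HasDerivAt.congr_deriv h2 ?_
  unfold fourierKernel
  simp only [zero_smul, add_zero]
  push_cast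
  ring

theorem continuousOn_fourierKernel_mul (ξ : EuclideanSpace ℝ (Fin n)) {s : Set ℝ}
    {F : ℝ → EuclideanSpace ℝ (Fin n) → ℝ}
    (hF : ContinuousOn (Function.uncurry F) (s ×ˢ univ)) :
    ContinuousOn (Function.uncurry fun t x => fourierKernel ξ x * (F t x : ℂ))
      (s ×ˢ univ) :=
  ((continuous_fourierKernel ξ).comp continuous_snd).continuousOn.mul
    (Complex.continuous_ofReal.comp_continuousOn hF)

theorem continuousOn_fourier (ξ : EuclideanSpace ℝ (Fin n))
    {F : ℝ → EuclideanSpace ℝ (Fin n) → ℝ} {R : ℝ}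
    (hF : ContinuousOn (Function.uncurry F) (Ici 0 ×ˢ univ))
    (h0 : ∀ t ∈ Ici (0 : ℝ), ∀ x ∉ closedBall 0 (R + t), F t x = 0) :
    ContinuousOn (fun t => 𝓕 (fun x => (F t x : ℂ)) ξ) (Ici 0) := by
  simp only [fourier_eq_integral_fourierKernel]
  intro t ht
  have hIcc : ContinuousOn (fun t => ∫ x, fourierKernel ξ x * (F t x : ℂ)) (Icc 0 (t + 1)) := by
    refine continuousOn_integral_of_compact_support (isCompact_closedBall 0 (R + (t + 1)))
      ((continuousOn_fourierKernel_mul ξ hF).mono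
        (prod_mono Icc_subset_Ici_self subset_rfl)) fun r x hr hx => ?_
    have : x ∉ closedBall 0 (R + r) := fun hmem =>
      hx (closedBall_subset_closedBall (by linarith [hr.2]) hmem)
    simp [h0 r hr.1 x this]
  refine (hIcc t ⟨ht, by linarith⟩).mono_of_mem_nhdsWithin ?_
  have : Icc 0 (t + 1) = Ici 0 ∩ Iic (t + 1) := rfl
  rw [this]
  exact inter_mem self_mem_nhdsWithin (mem_nhdsWithin_of_mem_nhds (Iic_mem_nhds (by linarith)))

theorem hasDerivAt_fourier (ξ : EuclideanSpace ℝ (Fin n))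
    {F F' : ℝ → EuclideanSpace ℝ (Fin n) → ℝ} {R : ℝ}
    (hF : ContinuousOn (Function.uncurry F) (Ici 0 ×ˢ univ))
    (hF' : ContinuousOn (Function.uncurry F') (Ioi 0 ×ˢ univ))
    (hd : ∀ t ∈ Ioi (0 : ℝ), ∀ x, HasDerivAt (fun r => F r x) (F' t x) t)
    (h0 : ∀ t ∈ Ici (0 : ℝ), ∀ x ∉ closedBall 0 (R + t), F t x = 0) {t : ℝ} (ht : t ∈ Ioi 0) :
    HasDerivAt (fun t => 𝓕 (fun x => (F t x : ℂ)) ξ) (𝓕 (fun x => (F' t x : ℂ)) ξ) t := by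
  simp only [fourier_eq_integral_fourierKernel]
  refine hasDerivAt_integral_of_compact_support (s := Ioo 0 (t + 1)) isOpen_Ioo
    (isCompact_closedBall 0 (R + (t + 1)))
    ((continuousOn_fourierKernel_mul ξ hF).mono
      (prod_mono (Ioo_subset_Ioi_self.trans Ioi_subset_Ici_self) subset_rfl))
    ((continuousOn_fourierKernel_mul ξ hF').mono (prod_mono Ioo_subset_Ioi_self subset_rfl))
    (fun r hr x => ((hd r hr.1 x).ofReal_comp).const_mul _) (fun r hr x hx => ?_)
    ⟨ht, by linarith⟩
  have : x ∉ closedBall 0 (R + r) := fun hmem =>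
    hx (closedBall_subset_closedBall (by linarith [hr.2]) hmem)
  simp [h0 r hr.1.le x this]

theorem fourier_lineDeriv (ξ : EuclideanSpace ℝ (Fin n)) (i : Fin n)
    {v v' : EuclideanSpace ℝ (Fin n) → ℝ} {R : ℝ} (hv : Continuous v) (hv' : Continuous v')
    (h0 : ∀ x ∉ closedBall 0 R, v x = 0) (h0' : ∀ x ∉ closedBall 0 R, v' x = 0)
    (hl : ∀ x, HasLineDerivAt ℝ v (v' x) x (basisVec i)) :
    𝓕 (fun x => (v' x : ℂ)) ξ = 2 * π * ξ i * Complex.I * 𝓕 (fun x => (v x : ℂ)) ξ := by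
  have hc := continuous_fourierKernel ξ
  have hint : ∀ {w : EuclideanSpace ℝ (Fin n) → ℝ}, Continuous w →
      (∀ x ∉ closedBall 0 R, w x = 0) → Integrable fun x => fourierKernel ξ x * (w x : ℂ) :=
    fun hw hw0 => (hc.mul (Complex.continuous_ofReal.comp hw)).integrable_of_hasCompactSupport
      (HasCompactSupport.intro (isCompact_closedBall 0 R) fun x hx => by simp [hw0 x hx])
  have := integral_mul_add_mul_eq_zero (isCompact_closedBall 0 R) hc
    (a' := fun x => -(2 * π * ξ i * Complex.I) * fourierKernel ξ x) (continuous_const.mul hc)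
    (Complex.continuous_ofReal.comp hv)
    (Complex.continuous_ofReal.comp hv') (fun x hx => by simp [h0 x hx])
    (fun x hx => by simp [h0' x hx]) (fun x => hasLineDerivAt_fourierKernel ξ x i)
    (fun x => HasDerivAt.ofReal_comp (hl x))
  simp only [Function.comp_apply, mul_assoc (-(2 * π * ξ i * Complex.I))] at this
  rw [integral_add (hint hv' h0') ((hint hv h0).const_mul _), integral_const_mul] at this
  rw [fourier_eq_integral_fourierKernel, fourier_eq_integral_fourierKernel]
  linear_combination this

/-- The Fourier transform in space of a solution solves a damped oscillator equation. -/
theorem IsSolution.isOscillator_fourier (h : IsSolution f g u ut utt D Dt DD) {R : ℝ}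
    (hf : ∀ x ∉ closedBall 0 R, f x = 0) (hg : ∀ x ∉ closedBall 0 R, g x = 0)
    (ξ : EuclideanSpace ℝ (Fin n)) :
    IsOscillator (4 * π ^ 2 * ‖ξ‖ ^ 2) (fun t => 𝓕 (fun x => (u t x : ℂ)) ξ)
      (fun t => 𝓕 (fun x => (ut t x : ℂ)) ξ) where
  cont := continuousOn_fourier ξ h.cont fun _ ht _ hx => (h.eq_zero_of_notMem hf hg ht hx).1
  cont' := continuousOn_fourier ξ h.cont_t fun _ ht _ hx => (h.eq_zero_of_notMem hf hg ht hx).2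
  deriv _ ht := hasDerivAt_fourier ξ h.cont (h.cont_t.mono
    (prod_mono Ioi_subset_Ici_self subset_rfl)) h.deriv_t
    (fun _ ht _ hx => (h.eq_zero_of_notMem hf hg ht hx).1) ht
  deriv' t ht := by
    have ht0 : t ∈ Ici (0 : ℝ) := Ioi_subset_Ici_self ht
    refine (hasDerivAt_fourier ξ h.cont_t h.cont_tt h.deriv_tt
      (fun _ ht _ hx => (h.eq_zero_of_notMem hf hg ht hx).2) ht).congr_deriv ?_
    have hopen : IsOpen (closedBall (0 : EuclideanSpace ℝ (Fin n)) (R + t))ᶜ :=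
      isClosed_closedBall.isOpen_compl
    have hu0 : ∀ x ∉ closedBall 0 (R + t), u t x = 0 := fun x hx =>
      (h.eq_zero_of_notMem hf hg ht0 hx).1
    have hut0 : ∀ x ∉ closedBall 0 (R + t), ut t x = 0 := fun x hx =>
      (h.eq_zero_of_notMem hf hg ht0 hx).2
    have hD0 : ∀ i, ∀ x ∉ closedBall 0 (R + t), D i t x = 0 := fun i x hx =>
      lineDeriv_eq_zero (h.line_x i t ht0 x) hopen hu0 hx
    have hDD0 : ∀ i, ∀ x ∉ closedBall 0 (R + t), DD i t x = 0 := fun i x hx =>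
      lineDeriv_eq_zero (h.line_xx i t ht x) hopen (hD0 i) hx
    have hDDF : ∀ i, 𝓕 (fun x => (DD i t x : ℂ)) ξ =
        -(4 * π ^ 2 * (ξ i : ℂ) ^ 2) * 𝓕 (fun x => (u t x : ℂ)) ξ := fun i => by
      rw [fourier_lineDeriv ξ i (continuous_slice (h.cont_x i) ht0)
        (continuous_slice (h.cont_xx i) ht) (hD0 i) (hDD0 i) (h.line_xx i t ht),
        fourier_lineDeriv ξ i (continuous_slice h.cont ht0) (continuous_slice (h.cont_x i) ht0)
        hu0 (hD0 i) (h.line_x i t ht0)]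
      linear_combination (4 * π ^ 2 * (ξ i : ℂ) ^ 2 * 𝓕 (fun x => (u t x : ℂ)) ξ)
        * Complex.I_sq
    have hc := continuous_fourierKernel ξ
    have hint : ∀ {w : EuclideanSpace ℝ (Fin n) → ℝ}, Continuous w →
        (∀ x ∉ closedBall 0 (R + t), w x = 0) →
        Integrable fun x => fourierKernel ξ x * (w x : ℂ) :=
      fun hw hw0 => (hc.mul (Complex.continuous_ofReal.comp hw)).integrable_of_hasCompactSupport
        (HasCompactSupport.intro (isCompact_closedBall 0 (R + t)) fun x hx => by simp [hw0 x hx])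
    have hsum : 𝓕 (fun x => (utt t x : ℂ)) ξ =
        ∑ i, 𝓕 (fun x => (DD i t x : ℂ)) ξ - 𝓕 (fun x => (ut t x : ℂ)) ξ := by
      simp only [fourier_eq_integral_fourierKernel]
      rw [← integral_finsetSum _ fun i _ =>
          hint (continuous_slice (h.cont_xx i) ht) (hDD0 i), ← integral_sub
          (integrable_finsetSum _ fun i _ => hint (continuous_slice (h.cont_xx i) ht) (hDD0 i))
          (hint (continuous_slice h.cont_t ht0) hut0)]
      refine integral_congr_ae (Eventually.of_forall fun x => ?_)
      simp only [h.pde t ht x]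
      push_cast
      rw [mul_sub, Finset.mul_sum]
    rw [hsum, Finset.sum_congr rfl fun i _ => hDDF i, ← Finset.sum_mul, Finset.sum_neg_distrib,
      ← Finset.mul_sum, EuclideanSpace.real_norm_sq_eq, Complex.real_smul]
    push_cast
    ring

end FourierSide

section Asymptotics

variable {v w : ℝ → EuclideanSpace ℝ (Fin n) → ℂ}

/-- The pointwise bound on a family of damped oscillators by its initial data. -/
theorem norm_oscillator_le (hosc : ∀ ξ, IsOscillator (4 * π ^ 2 * ‖ξ‖ ^ 2)
    (fun t => v t ξ) (fun t => w t ξ)) {t : ℝ} (ht : 0 ≤ t) (ξ : EuclideanSpace ℝ (Fin n)) :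
    ‖v t ξ‖ ≤ 4 * (‖v 0 ξ‖ + ‖w 0 ξ‖) := by
  rcases le_total (4 * π ^ 2 * ‖ξ‖ ^ 2) (3 / 16) with ha | ha
  · refine ((hosc ξ).norm_le_of_le (by positivity) ha ht).trans
      (mul_le_of_le_one_right (by positivity) (Real.exp_le_one_iff.2 ?_))
    rw [neg_mul, neg_nonpos]
    positivity
  · refine ((hosc ξ).norm_le_of_ge ha ht).trans
      (mul_le_of_le_one_right (by positivity) (Real.exp_le_one_iff.2 ?_))
    linarith

theorem tendsto_inv_sqrt_smul (η : EuclideanSpace ℝ (Fin n)) :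
    Tendsto (fun t : ℝ => (√t)⁻¹ • η) atTop (𝓝 0) := by
  have := (tendsto_inv_atTop_zero.comp Real.tendsto_sqrt_atTop).smul_const η
  rwa [zero_smul] at this

/-- At the diffusive scale the oscillators converge to the heat flow. -/
theorem tendsto_oscillator (hosc : ∀ ξ, IsOscillator (4 * π ^ 2 * ‖ξ‖ ^ 2)
    (fun t => v t ξ) (fun t => w t ξ)) (hv : Continuous (v 0)) (hw : Continuous (w 0))
    (η : EuclideanSpace ℝ (Fin n)) :
    Tendsto (fun t : ℝ => v t ((√t)⁻¹ • η)) atTop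
      (𝓝 (rexp (-(4 * π ^ 2) * ‖η‖ ^ 2) • (w 0 0 + v 0 0))) := by
  set a : ℝ → ℝ := fun t => 4 * π ^ 2 * ‖(√t)⁻¹ • η‖ ^ 2 with ha
  set m : ℝ → ℝ := fun t => √(1 / 4 - a t) with hm
  have hscale := tendsto_inv_sqrt_smul η
  have hat : Tendsto a atTop (𝓝 0) := by
    have := ((hscale.norm).pow 2).const_mul (4 * π ^ 2)
    simpa using this
  have hmt : Tendsto m atTop (𝓝 (1 / 2)) := by
    have := (hat.const_sub (1 / 4)).sqrt
    rwa [sub_zero, show √(1 / 4 : ℝ) = 1 / 2 by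
      rw [Real.sqrt_eq_iff_mul_self_eq (by norm_num) (by norm_num)]; norm_num] at this
  have hvt := hv.continuousAt.tendsto.comp hscale
  have hwt := hw.continuousAt.tendsto.comp hscale
  have hp : Tendsto (fun t => 1 / 2 + m t) atTop (𝓝 1) := by
    have := hmt.const_add (1 / 2)
    rwa [show (1 / 2 + 1 / 2 : ℝ) = 1 by norm_num] at this
  have hq : Tendsto (fun t => a t / (1 / 2 + m t)) atTop (𝓝 0) := by
    have := hat.div hp one_ne_zero
    rwa [zero_div] at this
  have he1 : Tendsto (fun t => rexp (-(a t / (1 / 2 + m t)) * t)) atTop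
      (𝓝 (rexp (-(4 * π ^ 2) * ‖η‖ ^ 2))) := by
    have h1 := (tendsto_const_nhds (x := -(4 * π ^ 2) * ‖η‖ ^ 2) (f := atTop)).div hp one_ne_zero
    rw [div_one] at h1
    refine (Real.continuous_exp.continuousAt.tendsto.comp h1).congr' ?_
    filter_upwards [eventually_gt_atTop 0] with t ht
    simp only [Function.comp_apply, Pi.div_apply, ha, norm_smul, mul_pow, norm_inv, inv_pow,
      Real.norm_eq_abs, sq_abs, Real.sq_sqrt ht.le]
    congr 1
    field_simp
  have he2 : Tendsto (fun t => rexp (-(1 / 2 + m t) * t)) atTop (𝓝 0) := by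
    refine Real.tendsto_exp_atBot.comp ?_
    have := (hp.neg).neg_mul_atTop (by norm_num) tendsto_id
    exact this
  have hlim := ((hmt.const_mul 2).inv₀ (by norm_num)).smul
    ((he1.smul (hwt.add (hp.smul hvt))).sub (he2.smul (hwt.add (hq.smul hvt))))
  have hval : ((2 * (1 / 2 : ℝ))⁻¹) • (rexp (-(4 * π ^ 2) * ‖η‖ ^ 2) •
      (w 0 0 + (1 : ℝ) • v 0 0) - (0 : ℝ) • (w 0 0 + (0 : ℝ) • v 0 0)) =
      rexp (-(4 * π ^ 2) * ‖η‖ ^ 2) • (w 0 0 + v 0 0) := by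
    rw [show (2 * (1 / 2 : ℝ))⁻¹ = 1 by norm_num]
    simp
  rw [hval] at hlim
  refine hlim.congr' ?_
  filter_upwards [eventually_ge_atTop 0, hat.eventually_lt_const (show (0 : ℝ) < 1 / 4 by norm_num)]
    with t ht hlt
  have hpos : 0 < 1 / 4 - a t := by linarith
  exact ((hosc ((√t)⁻¹ • η)).eq_of_le (Real.sqrt_pos.2 hpos) (Real.sq_sqrt hpos.le) ht).symm

/-- The Gaussian profile integral. -/
theorem integral_gaussian_pos :
    0 < ∫ η : EuclideanSpace ℝ (Fin n), rexp (-(4 * π ^ 2) * ‖η‖ ^ 2) := by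
  rw [GaussianFourier.integral_rexp_neg_mul_sq_norm (by positivity)]
  positivity

theorem integrable_gaussian :
    Integrable fun η : EuclideanSpace ℝ (Fin n) => rexp (-(4 * π ^ 2) * ‖η‖ ^ 2) := by
  by_contra h
  exact (integral_gaussian_pos (n := n)).ne' (integral_undef h)

/-- The frequencies on which the oscillators are overdamped, uniformly. -/
def lowFreq (n : ℕ) : Set (EuclideanSpace ℝ (Fin n)) := {ξ | 4 * π ^ 2 * ‖ξ‖ ^ 2 ≤ 3 / 16}

theorem measurableSet_lowFreq : MeasurableSet (lowFreq n) :=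
  (isClosed_le (by fun_prop) continuous_const).measurableSet

/-- The kernel of the inverse Fourier transform. -/
def fourierInvKernel (x ξ : EuclideanSpace ℝ (Fin n)) : ℂ :=
  Complex.exp (↑(2 * π * inner ℝ ξ x) * Complex.I)

theorem continuous_fourierInvKernel (x : EuclideanSpace ℝ (Fin n)) :
    Continuous (fourierInvKernel x) := by
  unfold fourierInvKernel
  fun_prop

theorem norm_fourierInvKernel (x ξ : EuclideanSpace ℝ (Fin n)) : ‖fourierInvKernel x ξ‖ = 1 :=
  Complex.norm_exp_ofReal_mul_I _

theorem tendsto_fourierInvKernel {K : Set (EuclideanSpace ℝ (Fin n))} (hK : Bornology.IsBounded K)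
    (η : EuclideanSpace ℝ (Fin n)) :
    Tendsto (fun p : ℝ × EuclideanSpace ℝ (Fin n) => fourierInvKernel p.2 ((√p.1)⁻¹ • η))
      (atTop ×ˢ 𝓟 K) (𝓝 1) := by
  obtain ⟨r, hr⟩ := hK.exists_norm_le
  have hin : Tendsto (fun p : ℝ × EuclideanSpace ℝ (Fin n) => (inner ℝ ((√p.1)⁻¹ • η) p.2 : ℝ))
      (atTop ×ˢ 𝓟 K) (𝓝 0) := by
    have h1 := (((tendsto_inv_sqrt_smul η).norm.mul_const r).comp
      (tendsto_fst (f := (atTop : Filter ℝ)) (g := 𝓟 K)))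
    rw [norm_zero, zero_mul] at h1
    refine squeeze_zero_norm' ?_ h1
    have hmem : ∀ᶠ p in (atTop : Filter ℝ) ×ˢ 𝓟 K, p.2 ∈ K :=
      tendsto_snd.eventually (mem_principal_self K)
    filter_upwards [hmem] with p hp
    exact (norm_inner_le_norm _ _).trans
      (mul_le_mul_of_nonneg_left (hr _ hp) (norm_nonneg _))
  have hc : Continuous fun y : ℝ => Complex.exp (↑(2 * π * y) * Complex.I) := by fun_prop
  have := (hc.tendsto 0).comp hin
  rw [mul_zero, Complex.ofReal_zero, zero_mul, Complex.exp_zero] at this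
  exact this

/-- Low frequencies converge, after rescaling, by dominated convergence. -/
theorem tendsto_low (hosc : ∀ ξ, IsOscillator (4 * π ^ 2 * ‖ξ‖ ^ 2)
    (fun t => v t ξ) (fun t => w t ξ)) (hcont : ∀ t ∈ Ici (0 : ℝ), Continuous (v t))
    (hw : Continuous (w 0)) {M : ℝ} (hM : ∀ ξ, ‖v 0 ξ‖ + ‖w 0 ξ‖ ≤ M)
    {K : Set (EuclideanSpace ℝ (Fin n))} (hK : Bornology.IsBounded K) :
    Tendsto (fun p : ℝ × EuclideanSpace ℝ (Fin n) =>
        √p.1 ^ n • ∫ ξ in lowFreq n, fourierInvKernel p.2 ξ * v p.1 ξ) (atTop ×ˢ 𝓟 K)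
      (𝓝 ((∫ η : EuclideanSpace ℝ (Fin n), rexp (-(4 * π ^ 2) * ‖η‖ ^ 2)) •
        (w 0 0 + v 0 0))) := by
  set F : ℝ × EuclideanSpace ℝ (Fin n) → EuclideanSpace ℝ (Fin n) → ℂ := fun p =>
    (lowFreq n).indicator fun ξ => fourierInvKernel p.2 ξ * v p.1 ξ with hF
  have hscale : ∀ p : ℝ × EuclideanSpace ℝ (Fin n),
      ∫ η, F p ((√p.1)⁻¹ • η) = √p.1 ^ n • ∫ ξ in lowFreq n, fourierInvKernel p.2 ξ * v p.1 ξ :=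
    fun p => by
      rw [Measure.integral_comp_inv_smul_of_nonneg _ _ (Real.sqrt_nonneg _),
        finrank_euclideanSpace_fin, integral_indicator measurableSet_lowFreq]
  have hpos : ∀ᶠ p in (atTop : Filter ℝ) ×ˢ 𝓟 K, 0 < p.1 :=
    tendsto_fst.eventually (eventually_gt_atTop 0)
  simp only [← hscale]
  rw [← integral_smul_const]
  refine tendsto_integral_filter_of_dominated_convergence
    (fun η => 4 * M * rexp (-(4 * π ^ 2) * ‖η‖ ^ 2)) ?_ ?_ (integrable_gaussian.const_mul _) ?_
  · filter_upwards [hpos] with p hp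
    have : Measurable (F p) := (((continuous_fourierInvKernel p.2).mul
      (hcont p.1 hp.le)).measurable).indicator measurableSet_lowFreq
    exact (this.comp (measurable_const_smul _)).aestronglyMeasurable
  · filter_upwards [hpos] with p hp
    refine Eventually.of_forall fun η => ?_
    have hM0 : 0 ≤ M := (add_nonneg (norm_nonneg _) (norm_nonneg _)).trans (hM 0)
    by_cases hmem : (√p.1)⁻¹ • η ∈ lowFreq n
    · simp only [hF]
      rw [indicator_of_mem hmem, norm_mul, norm_fourierInvKernel, one_mul]
      refine ((hosc _).norm_le_of_le (by positivity) hmem hp.le).trans ?_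
      have : -(4 * π ^ 2 * ‖(√p.1)⁻¹ • η‖ ^ 2) * p.1 = -(4 * π ^ 2) * ‖η‖ ^ 2 := by
        rw [norm_smul, mul_pow, norm_inv, inv_pow, Real.norm_eq_abs, sq_abs, Real.sq_sqrt hp.le]
        field_simp
      rw [this]
      gcongr
      exact hM _
    · simp only [hF]
      rw [indicator_of_notMem hmem, norm_zero]
      positivity
  · refine Eventually.of_forall fun η => ?_
    have h1 := (tendsto_fourierInvKernel hK η).mul
      ((tendsto_oscillator hosc (hcont 0 self_mem_Ici) hw η).comp
        (tendsto_fst (f := (atTop : Filter ℝ)) (g := 𝓟 K)))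
    rw [one_mul] at h1
    refine h1.congr' ?_
    have hev : ∀ᶠ t : ℝ in atTop, (√t)⁻¹ • η ∈ lowFreq n := by
      have hc : Continuous fun ξ : EuclideanSpace ℝ (Fin n) => 4 * π ^ 2 * ‖ξ‖ ^ 2 := by fun_prop
      have := (hc.tendsto 0).comp (tendsto_inv_sqrt_smul η)
      exact this.eventually_le_const (by norm_num)
    filter_upwards [tendsto_fst.eventually hev] with p hp
    simp only [hF]
    rw [indicator_of_mem hp]
    rfl

/-- High frequencies decay exponentially. -/
theorem tendsto_high (hosc : ∀ ξ, IsOscillator (4 * π ^ 2 * ‖ξ‖ ^ 2)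
    (fun t => v t ξ) (fun t => w t ξ)) (hv : Integrable (v 0)) (hw : Integrable (w 0))
    (K : Set (EuclideanSpace ℝ (Fin n))) :
    Tendsto (fun p : ℝ × EuclideanSpace ℝ (Fin n) =>
        √p.1 ^ n • ∫ ξ in (lowFreq n)ᶜ, fourierInvKernel p.2 ξ * v p.1 ξ) (atTop ×ˢ 𝓟 K)
      (𝓝 0) := by
  set A := ∫ ξ, 4 * (‖v 0 ξ‖ + ‖w 0 ξ‖) with hA
  have hint : Integrable fun ξ => 4 * (‖v 0 ξ‖ + ‖w 0 ξ‖) := (hv.norm.add hw.norm).const_mul 4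
  have hlim : Tendsto (fun t : ℝ => √t ^ n * (A * rexp (-t / 20))) atTop (𝓝 0) := by
    have h1 := (tendsto_rpow_mul_exp_neg_mul_atTop_nhds_zero (n / 2) (1 / 20)
      (by norm_num)).const_mul A
    rw [mul_zero] at h1
    refine h1.congr' ?_
    filter_upwards [eventually_ge_atTop 0] with t ht
    rw [Real.sqrt_eq_rpow, ← Real.rpow_natCast, ← Real.rpow_mul ht]
    ring_nf
  have hpos : ∀ᶠ p in (atTop : Filter ℝ) ×ˢ 𝓟 K, 0 ≤ p.1 :=
    tendsto_fst.eventually (eventually_ge_atTop 0)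
  refine squeeze_zero_norm' ?_ (hlim.comp tendsto_fst)
  filter_upwards [hpos] with p hp
  rw [norm_smul, norm_pow, Real.norm_of_nonneg (Real.sqrt_nonneg _)]
  refine mul_le_mul_of_nonneg_left ?_ (by positivity)
  rw [hA, ← integral_mul_const]
  refine (norm_integral_le_of_norm_le (hint.mul_const _).integrableOn ?_).trans
    (setIntegral_le_integral (hint.mul_const _) (Eventually.of_forall fun ξ => by
      simp only [Pi.zero_apply]; positivity))
  refine (ae_restrict_iff' measurableSet_lowFreq.compl).2 (Eventually.of_forall fun ξ hξ => ?_)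
  rw [norm_mul, norm_fourierInvKernel, one_mul]
  exact (hosc ξ).norm_le_of_ge (not_le.1 (show ¬4 * π ^ 2 * ‖ξ‖ ^ 2 ≤ 3 / 16 from hξ)).le hp

theorem integrable_oscillator (hosc : ∀ ξ, IsOscillator (4 * π ^ 2 * ‖ξ‖ ^ 2)
    (fun t => v t ξ) (fun t => w t ξ)) (hcont : ∀ t ∈ Ici (0 : ℝ), Continuous (v t))
    (hv : Integrable (v 0)) (hw : Integrable (w 0)) {t : ℝ} (ht : 0 ≤ t) : Integrable (v t) :=
  ((hv.norm.add hw.norm).const_mul 4).mono' (hcont t ht).aestronglyMeasurable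
    (Eventually.of_forall fun ξ => norm_oscillator_le hosc ht ξ)

/-- Diffusive asymptotics, uniform on bounded sets, of the inverse Fourier transform of a
family of damped oscillators. -/
theorem tendsto_fourierInv_oscillator (hosc : ∀ ξ, IsOscillator (4 * π ^ 2 * ‖ξ‖ ^ 2)
    (fun t => v t ξ) (fun t => w t ξ)) (hcont : ∀ t ∈ Ici (0 : ℝ), Continuous (v t))
    (hw : Continuous (w 0)) {M : ℝ} (hM : ∀ ξ, ‖v 0 ξ‖ + ‖w 0 ξ‖ ≤ M)
    (hvi : Integrable (v 0)) (hwi : Integrable (w 0))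
    {K : Set (EuclideanSpace ℝ (Fin n))} (hK : Bornology.IsBounded K) :
    Tendsto (fun p : ℝ × EuclideanSpace ℝ (Fin n) =>
        √p.1 ^ n • ∫ ξ, fourierInvKernel p.2 ξ * v p.1 ξ) (atTop ×ˢ 𝓟 K)
      (𝓝 ((∫ η : EuclideanSpace ℝ (Fin n), rexp (-(4 * π ^ 2) * ‖η‖ ^ 2)) •
        (w 0 0 + v 0 0))) := by
  have := (tendsto_low hosc hcont hw hM hK).add (tendsto_high hosc hvi hwi K)
  rw [add_zero] at this
  refine this.congr' ?_
  have hpos : ∀ᶠ p in (atTop : Filter ℝ) ×ˢ 𝓟 K, 0 ≤ p.1 :=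
    tendsto_fst.eventually (eventually_ge_atTop 0)
  filter_upwards [hpos] with p hp
  rw [← smul_add, integral_add_compl measurableSet_lowFreq]
  exact (integrable_oscillator hosc hcont hvi hwi hp).bdd_mul
    (continuous_fourierInvKernel p.2).aestronglyMeasurable
    (Eventually.of_forall fun ξ => (norm_fourierInvKernel p.2 ξ).le)

end Asymptotics

open scoped ContDiff

theorem continuous_fourier {v : EuclideanSpace ℝ (Fin n) → ℂ} (hv : Integrable v) :
    Continuous (𝓕 v) :=
  VectorFourier.fourierIntegral_continuous Real.continuous_fourierChar
    (by exact continuous_inner) hv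

theorem integrable_fourier {f : EuclideanSpace ℝ (Fin n) → ℝ} (hf : ContDiff ℝ (⊤ : ℕ∞) f)
    (hfc : HasCompactSupport f) : Integrable (𝓕 fun x => (f x : ℂ)) := by
  have hc : HasCompactSupport fun x => (f x : ℂ) :=
    hfc.comp_left (g := fun y : ℝ => (y : ℂ)) Complex.ofReal_zero
  have hs : ContDiff ℝ ∞ fun x => (f x : ℂ) := Complex.ofRealCLM.contDiff.comp hf
  exact (𝓕 (hc.toSchwartzMap hs)).integrable

/-- A solution is asymptotic to a multiple of the heat kernel, uniformly on bounded sets. -/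
theorem IsSolution.tendsto {f g : EuclideanSpace ℝ (Fin n) → ℝ}
    {u ut utt : ℝ → EuclideanSpace ℝ (Fin n) → ℝ}
    {D Dt DD : Fin n → ℝ → EuclideanSpace ℝ (Fin n) → ℝ}
    (h : IsSolution f g u ut utt D Dt DD)
    (hf : ContDiff ℝ (⊤ : ℕ∞) f) (hg : ContDiff ℝ (⊤ : ℕ∞) g)
    (hfc : HasCompactSupport f) (hgc : HasCompactSupport g)
    {K : Set (EuclideanSpace ℝ (Fin n))} (hK : Bornology.IsBounded K) :
    Tendsto (fun p : ℝ × EuclideanSpace ℝ (Fin n) => √p.1 ^ n * u p.1 p.2) (atTop ×ˢ 𝓟 K)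
      (𝓝 ((∫ η : EuclideanSpace ℝ (Fin n), rexp (-(4 * π ^ 2) * ‖η‖ ^ 2)) *
        ∫ x, (f x + g x))) := by
  obtain ⟨R, hR⟩ := (hfc.isCompact.union hgc.isCompact).isBounded.subset_closedBall 0
  have hf0 : ∀ x ∉ closedBall 0 R, f x = 0 := fun x hx =>
    image_eq_zero_of_notMem_tsupport fun hmem => hx (hR (Or.inl hmem))
  have hg0 : ∀ x ∉ closedBall 0 R, g x = 0 := fun x hx =>
    image_eq_zero_of_notMem_tsupport fun hmem => hx (hR (Or.inr hmem))
  have hcont : ∀ t ∈ Ici (0 : ℝ), Continuous fun x => (u t x : ℂ) := fun t ht =>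
    Complex.continuous_ofReal.comp (continuous_slice h.cont ht)
  have hint : ∀ t ∈ Ici (0 : ℝ), Integrable fun x => (u t x : ℂ) := fun t ht =>
    (hcont t ht).integrable_of_hasCompactSupport
      (HasCompactSupport.intro (isCompact_closedBall 0 (R + t)) fun x hx => by
        simp [(h.eq_zero_of_notMem hf0 hg0 ht hx).1])
  have hfi : Integrable f := hf.continuous.integrable_of_hasCompactSupport hfc
  have hgi : Integrable g := hg.continuous.integrable_of_hasCompactSupport hgc
  set v : ℝ → EuclideanSpace ℝ (Fin n) → ℂ := fun t => 𝓕 fun x => (u t x : ℂ) with hv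
  set w : ℝ → EuclideanSpace ℝ (Fin n) → ℂ := fun t => 𝓕 fun x => (ut t x : ℂ) with hw
  have hosc : ∀ ξ, IsOscillator (4 * π ^ 2 * ‖ξ‖ ^ 2) (fun t => v t ξ) (fun t => w t ξ) :=
    h.isOscillator_fourier hf0 hg0
  have hv0 : v 0 = 𝓕 fun x => (f x : ℂ) := by simp only [hv, h.initial]
  have hw0 : w 0 = 𝓕 fun x => (g x : ℂ) := by simp only [hw, h.initial_t]
  have hvc : ∀ t ∈ Ici (0 : ℝ), Continuous (v t) := fun t ht => continuous_fourier (hint t ht)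
  have hvi : Integrable (v 0) := hv0 ▸ integrable_fourier hf hfc
  have hwi : Integrable (w 0) := hw0 ▸ integrable_fourier hg hgc
  have hM : ∀ ξ, ‖v 0 ξ‖ + ‖w 0 ξ‖ ≤ (∫ x, ‖(f x : ℂ)‖) + ∫ x, ‖(g x : ℂ)‖ := fun ξ => by
    rw [hv0, hw0]
    exact add_le_add (VectorFourier.norm_fourierIntegral_le_integral_norm _ _ _ _ _)
      (VectorFourier.norm_fourierIntegral_le_integral_norm _ _ _ _ _)
  have hzero : w 0 0 + v 0 0 = ((∫ x, (f x + g x) : ℝ) : ℂ) := by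
    rw [hv0, hw0, fourier_eq_integral_fourierKernel, fourier_eq_integral_fourierKernel,
      integral_add hfi hgi]
    simp only [fourierKernel, inner_zero_right, mul_zero, Complex.ofReal_zero, zero_mul,
      Complex.exp_zero, one_mul, integral_complex_ofReal]
    push_cast
    ring
  have hlim := tendsto_fourierInv_oscillator hosc hvc
    (hw0 ▸ continuous_fourier hgi.ofReal) hM hvi hwi hK
  rw [hzero, ← Complex.coe_smul, smul_eq_mul, ← Complex.ofReal_mul] at hlim
  refine ((Complex.continuous_re.tendsto _).comp hlim).congr' ?_
  have hpos : ∀ᶠ p in (atTop : Filter ℝ) ×ˢ 𝓟 K, 0 ≤ p.1 :=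
    tendsto_fst.eventually (eventually_ge_atTop 0)
  filter_upwards [hpos] with p hp
  have hinv := congrFun ((hcont p.1 hp).fourierInv_fourier_eq (hint p.1 hp)
    (integrable_oscillator hosc hvc hvi hwi hp)) p.2
  rw [Real.fourierInv_eq'] at hinv
  have hinv' : ∫ ξ, fourierInvKernel p.2 ξ * v p.1 ξ = (u p.1 p.2 : ℂ) := hinv
  rw [Function.comp_apply, hinv', Complex.smul_re, Complex.ofReal_re, smul_eq_mul]

end DampedWave

/-- There exist `C > 0` and `T ≥ d_h` such that for all `t ≥ T`,
`inf_{x ∈ CS(h)} u(x,t) ≥ C t^{-n/2} ‖h‖_{L^∞}`, where `h = f + g`. -/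
theorem lower_bound_on_convex_hull (n : ℕ) (hn : 1 ≤ n)
    (f g : EuclideanSpace ℝ (Fin n) → ℝ)
    (hf : ContDiff ℝ (⊤ : ℕ∞) f) (hg : ContDiff ℝ (⊤ : ℕ∞) g)
    (hfc : HasCompactSupport f) (hgc : HasCompactSupport g)
    (hne : f + g ≠ 0) (hpos : ∀ x, 0 ≤ f x + g x)
    (u : EuclideanSpace ℝ (Fin n) → ℝ → ℝ)
    (hreg : ContDiffOn ℝ 2 (fun p : EuclideanSpace ℝ (Fin n) × ℝ => u p.1 p.2) (univ ×ˢ Ici 0))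
    (hpde : ∀ x, ∀ t > (0 : ℝ),
      deriv (deriv (fun s => u x s)) t - lap (fun z => u z t) x
        + deriv (fun s => u x s) t = 0)
    (hu0 : ∀ x, u x 0 = f x)
    (hu1 : ∀ x, derivWithin (fun s => u x s) (Ici 0) 0 = g x) :
    ∃ C > (0 : ℝ), ∃ T, dsupp (f + g) ≤ T ∧ ∀ t ≥ T, ∀ x ∈ CS (f + g),
      C * t ^ (-(n : ℝ) / 2) * LinfNorm (f + g) ≤ u x t := by
  obtain ⟨ut, utt, D, Dt, DD, hsol⟩ :=
    DampedWave.exists_isSolution f g u hreg hpde hu0 hu1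
  have hsc : HasCompactSupport (f + g) := hfc.add hgc
  have hK : Bornology.IsBounded (CS (f + g)) := isBounded_convexHull.2 hsc.isCompact.isBounded
  have hint : 0 < ∫ x, (f x + g x) := by
    have hcont : Continuous (f + g) := hf.continuous.add hg.continuous
    obtain ⟨x, hx⟩ := Function.ne_iff.1 hne
    exact hcont.integral_pos_of_hasCompactSupport_nonneg_nonzero hsc hpos hx
  have hlimpos := mul_pos (DampedWave.integral_gaussian_pos (n := n)) hint
  have hlim := hsol.tendsto hf hg hfc hgc hK
  set ℓ := (∫ η : EuclideanSpace ℝ (Fin n), rexp (-(4 * π ^ 2) * ‖η‖ ^ 2)) *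
    ∫ x, (f x + g x)
  have hev := hlim.eventually_const_le (half_lt_self hlimpos)
  rw [eventually_prod_principal_iff, eventually_atTop] at hev
  obtain ⟨T₁, hT₁⟩ := hev
  have hL : 0 ≤ LinfNorm (f + g) := Real.iSup_nonneg fun x => abs_nonneg _
  refine ⟨ℓ / 2 / (LinfNorm (f + g) + 1), by positivity, max (dsupp (f + g)) (max T₁ 1),
    le_max_left _ _, fun t ht x hx => ?_⟩
  have htT : T₁ ≤ t := (le_max_left _ _).trans ((le_max_right _ _).trans ht)
  have ht0 : 0 < t :=
    zero_lt_one.trans_le ((le_max_right _ _).trans ((le_max_right _ _).trans ht))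
  have hpow : t ^ (-(n : ℝ) / 2) = (√t ^ n)⁻¹ := by
    rw [Real.sqrt_eq_rpow, ← Real.rpow_natCast, ← Real.rpow_mul ht0.le, ← Real.rpow_neg ht0.le]
    ring_nf
  have hfrac : ℓ / 2 / (LinfNorm (f + g) + 1) * LinfNorm (f + g) ≤ ℓ / 2 := by
    rw [div_mul_eq_mul_div, div_le_iff₀ (by positivity)]
    nlinarith
  calc ℓ / 2 / (LinfNorm (f + g) + 1) * t ^ (-(n : ℝ) / 2) * LinfNorm (f + g)
      = (√t ^ n)⁻¹ * (ℓ / 2 / (LinfNorm (f + g) + 1) * LinfNorm (f + g)) := by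
        rw [hpow]
        ring
    _ ≤ (√t ^ n)⁻¹ * (√t ^ n * u x t) :=
        mul_le_mul_of_nonneg_left (hfrac.trans (hT₁ t htT x hx)) (by positivity)
    _ = u x t := inv_mul_cancel_left₀ (by positivity) _
end
end

section
/- There exists a time T ≥ max{d_h, δ(CS(h),CS(f)) + d_f} such that for all t ≥ T, the set of time-delayed hot spots ℋ(t) = {x ∈ ℝⁿ : u(x,t) = max_{ξ∈ℝⁿ} u(ξ,t)} is contained in CS(h), the convex hull of the support of h. -/
open Real Set Filter MeasureTheory Metric Pointwise
open scoped Nat Topology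

noncomputable section

variable {n : ℕ}

theorem le_mul_exp_of_deriv_le {V V' : ℝ → ℝ} {k : ℝ} (hc : ContinuousOn V (Ici 0))
    (hd : ∀ t > 0, HasDerivAt V (V' t) t) (hle : ∀ t > 0, V' t ≤ -k * V t) {t : ℝ} (ht : 0 ≤ t) :
    V t ≤ V 0 * exp (-k * t) := by
  have hd' : ∀ s > 0, HasDerivAt (fun s => V s * exp (k * s))
      (V' s * exp (k * s) + V s * (exp (k * s) * k)) s := fun s hs =>
    (hd s hs).mul (by simpa using ((hasDerivAt_id s).const_mul k).exp)
  have h := antitoneOn_of_deriv_nonpos (convex_Ici (0 : ℝ)) (f := fun s => V s * exp (k * s))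
    (hc.mul (by fun_prop))
    (fun s hs => by
      rw [interior_Ici] at hs
      exact (hd' s hs).differentiableAt.differentiableWithinAt)
    (fun s hs => by
      rw [interior_Ici] at hs
      rw [(hd' s hs).deriv]
      have := hle s hs
      nlinarith [exp_pos (k * s)])
  have h1 : V t * exp (k * t) ≤ V 0 := by
    simpa using h (mem_Ici.2 le_rfl) (mem_Ici.2 ht) ht
  have h2 : exp (k * t) * exp (-k * t) = 1 := by
    rw [← Real.exp_add]; simp
  calc V t = V t * exp (k * t) * exp (-k * t) := by rw [mul_assoc, h2, mul_one]
    _ ≤ V 0 * exp (-k * t) := mul_le_mul_of_nonneg_right h1 (exp_pos _).le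

theorem eq_mul_exp_of_deriv_eq {z z' : ℝ → ℝ} {r : ℝ} (hc : ContinuousOn z (Ici 0))
    (hd : ∀ t > 0, HasDerivAt z (z' t) t) (hle : ∀ t > 0, z' t = r * z t) {t : ℝ} (ht : 0 ≤ t) :
    z t = z 0 * exp (r * t) := by
  apply le_antisymm
  · simpa using le_mul_exp_of_deriv_le (k := -r) hc hd (fun t h => by simp [hle t h]) ht
  · have := le_mul_exp_of_deriv_le (k := -r) hc.neg (fun t h => (hd t h).neg)
      (fun t h => by simp [hle t h]) ht
    simp at this
    linarith

set_option maxHeartbeats 800000 in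
/-- Solutions of the damped oscillator `y'' + y' + s y = 0` are close to the corresponding
relaxation `exp (-s t) (y 0 + y' 0)`. -/
theorem damped_oscillator_bound {s : ℝ} (hs : 0 ≤ s) {y v : ℝ → ℝ}
    (hy : ContinuousOn y (Ici 0)) (hv : ContinuousOn v (Ici 0))
    (hdy : ∀ t > 0, HasDerivAt y (v t) t) (hdv : ∀ t > 0, HasDerivAt v (-v t - s * y t) t)
    {t : ℝ} (ht : 0 ≤ t) :
    |y t - exp (-s * t) * (y 0 + v 0)| ≤
      8 * (|y 0| + |v 0|) * (exp (-s * t) * (s + t * s ^ 2) + exp (-(1 / 8) * t)) := by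
  set a := y 0 with ha
  set b := v 0 with hb
  have hM : |a + b| ≤ |a| + |b| := abs_add_le a b
  have hM0 : 0 ≤ |a| + |b| := by positivity
  have hX : 0 ≤ exp (-s * t) * (s + t * s ^ 2) := by positivity
  rcases le_total s (3 / 16) with hs1 | hs1
  · set q := √(1 - 4 * s) with hq
    have hq2 : q ^ 2 = 1 - 4 * s := Real.sq_sqrt (by linarith)
    have hq0 : 0 ≤ q := Real.sqrt_nonneg _
    have hq1 : q ≤ 1 := by nlinarith
    have hq3 : 1 / 2 ≤ q := by nlinarith
    have h1 := eq_mul_exp_of_deriv_eq (z := fun t => v t + (1 + q) / 2 * y t)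
      (z' := fun t => -v t - s * y t + (1 + q) / 2 * v t) (r := (q - 1) / 2)
      (hv.add (continuousOn_const.mul hy)) (fun t h => (hdv t h).add ((hdy t h).const_mul _))
      (fun t h => by linear_combination (-(1 / 4) * y t) * hq2) ht
    have h2 := eq_mul_exp_of_deriv_eq (z := fun t => v t + (1 - q) / 2 * y t)
      (z' := fun t => -v t - s * y t + (1 - q) / 2 * v t) (r := -(1 + q) / 2)
      (hv.add (continuousOn_const.mul hy)) (fun t h => (hdv t h).add ((hdy t h).const_mul _))
      (fun t h => by linear_combination (-(1 / 4) * y t) * hq2) ht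
    simp only [← ha, ← hb] at h1 h2
    have h4s : 1 - q ≤ 4 * s := by nlinarith
    have key : q * (y t - exp (-s * t) * (a + b)) =
        (exp ((q - 1) / 2 * t) - exp (-s * t)) * (b + (1 + q) / 2 * a)
        + exp (-s * t) * ((1 - q) * (b + a / 2))
        - exp (-(1 + q) / 2 * t) * (b + (1 - q) / 2 * a) := by
      linear_combination h1 - h2
    have e1 : |exp ((q - 1) / 2 * t) - exp (-s * t)| ≤ exp (-s * t) * (4 * (t * s ^ 2)) := by
      have e : exp ((q - 1) / 2 * t) = exp (-s * t) * exp (((q - 1) / 2 + s) * t) := by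
        rw [← Real.exp_add]; ring_nf
      have hle : (q - 1) / 2 + s ≤ 0 := by nlinarith
      have hge : -(4 * s ^ 2) ≤ (q - 1) / 2 + s := by nlinarith
      have e2 : exp (((q - 1) / 2 + s) * t) ≤ 1 :=
        Real.exp_le_one_iff.2 (mul_nonpos_of_nonpos_of_nonneg hle ht)
      have e3 := Real.add_one_le_exp (((q - 1) / 2 + s) * t)
      rw [e, ← mul_sub_one, abs_mul, abs_of_pos (exp_pos _), abs_sub_comm,
        abs_of_nonneg (by linarith)]
      refine mul_le_mul_of_nonneg_left ?_ (exp_pos _).le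
      nlinarith
    have e4 : exp (-(1 + q) / 2 * t) ≤ exp (-(1 / 8) * t) := by
      apply Real.exp_le_exp.2; nlinarith
    have e5 : |b + (1 + q) / 2 * a| ≤ |a| + |b| := by
      refine (abs_add_le _ _).trans ?_
      rw [abs_mul, abs_of_nonneg (by linarith : 0 ≤ (1 + q) / 2)]
      nlinarith [abs_nonneg a]
    have e6 : |b + (1 - q) / 2 * a| ≤ |a| + |b| := by
      refine (abs_add_le _ _).trans ?_
      rw [abs_mul, abs_of_nonneg (by linarith : 0 ≤ (1 - q) / 2)]
      nlinarith [abs_nonneg a]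
    have e7 : |(1 - q) * (b + a / 2)| ≤ 4 * s * (|a| + |b|) := by
      rw [abs_mul, abs_of_nonneg (by linarith : 0 ≤ 1 - q)]
      refine mul_le_mul h4s ?_ (abs_nonneg _) (by linarith)
      refine (abs_add_le _ _).trans ?_
      rw [abs_div, abs_of_pos (two_pos : (0 : ℝ) < 2)]
      linarith [abs_nonneg a]
    have key2 : q * |y t - exp (-s * t) * (a + b)| ≤
        exp (-s * t) * (4 * (t * s ^ 2)) * (|a| + |b|) + exp (-s * t) * (4 * s * (|a| + |b|))
          + exp (-(1 / 8) * t) * (|a| + |b|) := by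
      have : q * |y t - exp (-s * t) * (a + b)| = |q * (y t - exp (-s * t) * (a + b))| := by
        rw [abs_mul, abs_of_nonneg hq0]
      rw [this, key]
      refine (abs_sub _ _).trans (add_le_add ((abs_add_le _ _).trans (add_le_add ?_ ?_)) ?_)
      · rw [abs_mul]; gcongr
      · rw [abs_mul, abs_of_pos (exp_pos _)]; gcongr
      · rw [abs_mul, abs_of_pos (exp_pos _)]; gcongr
    have hE := exp_pos (-(1 / 8) * t)
    have hhalf := mul_le_mul_of_nonneg_right hq3 (abs_nonneg (y t - exp (-s * t) * (a + b)))
    linarith [mul_nonneg hM0 hE.le]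
  · have hV := le_mul_exp_of_deriv_le (V := fun t => v t ^ 2 + 1 / 2 * (y t * v t) + s * y t ^ 2)
      (V' := fun t => 2 * v t * (-v t - s * y t)
        + 1 / 2 * (v t * v t + y t * (-v t - s * y t)) + s * (2 * y t * v t)) (k := 1 / 4)
      (((hv.pow 2).add (continuousOn_const.mul (hy.mul hv))).add (continuousOn_const.mul (hy.pow 2)))
      (fun t h => by
        have := (((hdv t h).pow 2).add (((hdy t h).mul (hdv t h)).const_mul (1 / 2))).add
          (((hdy t h).pow 2).const_mul s)
        simpa using! this)
      (fun t h => by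
        nlinarith [sq_nonneg (v t + 3 / 20 * y t), mul_nonneg (sub_nonneg.2 hs1) (sq_nonneg (y t))])
      ht
    simp only [← ha, ← hb] at hV
    set E := exp (-(1 / 8) * t) with hE
    have hE0 : 0 < E := exp_pos _
    have hE2 : exp (-(1 / 4) * t) = E ^ 2 := by
      rw [hE, ← Real.exp_nat_mul]; congr 1; push_cast; ring
    rw [hE2] at hV
    have h0 : b ^ 2 + 1 / 2 * (a * b) + s * a ^ 2 ≤ s * (2 / 3) * (4 * (|a| + |b|)) ^ 2 := by
      have h1 : a * b ≤ |a| * |b| := by rw [← abs_mul]; exact le_abs_self _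
      have : (3 / 16) * (|a| + |b|) ^ 2 ≤ s * (|a| + |b|) ^ 2 := by gcongr
      have h3 : s * a ^ 2 ≤ s * (|a| + |b|) ^ 2 := by
        gcongr ?_ * ?_
        rw [← sq_abs a]
        gcongr
        linarith [abs_nonneg b]
      have h5 : b ^ 2 ≤ (|a| + |b|) ^ 2 := by
        rw [← sq_abs b]
        gcongr
        linarith [abs_nonneg a]
      have h6 : |a| * |b| ≤ (|a| + |b|) ^ 2 := by
        nlinarith [abs_nonneg a, abs_nonneg b, mul_nonneg (abs_nonneg a) (abs_nonneg b)]
      nlinarith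
    have h1 : s * (2 / 3) * y t ^ 2 ≤ v t ^ 2 + 1 / 2 * (y t * v t) + s * y t ^ 2 := by
      nlinarith [sq_nonneg (v t + y t / 4), mul_nonneg (sub_nonneg.2 hs1) (sq_nonneg (y t))]
    have h2 : y t ^ 2 ≤ (4 * (|a| + |b|) * E) ^ 2 := by
      have : s * (2 / 3) * y t ^ 2 ≤ s * (2 / 3) * (4 * (|a| + |b|) * E) ^ 2 := by
        refine h1.trans (hV.trans ?_)
        have := mul_le_mul_of_nonneg_right h0 (sq_nonneg E)
        linarith
      exact le_of_mul_le_mul_left this (by linarith)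
    have h3 : |y t| ≤ 4 * (|a| + |b|) * E := abs_le_of_sq_le_sq h2 (by positivity)
    have h4 : exp (-s * t) ≤ E := Real.exp_le_exp.2 (by nlinarith)
    calc |y t - exp (-s * t) * (a + b)| ≤ |y t| + exp (-s * t) * |a + b| := by
          refine (abs_sub _ _).trans ?_
          rw [abs_mul, abs_of_pos (exp_pos _)]
      _ ≤ 4 * (|a| + |b|) * E + E * (|a| + |b|) := by gcongr
      _ ≤ _ := by nlinarith [mul_nonneg hM0 hX, mul_nonneg hM0 hE0.le]

theorem HasDerivAt.clm_apply_const {E : Type*} [NormedAddCommGroup E] [NormedSpace ℝ E]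
    {c : ℝ → E →L[ℝ] ℝ} {c' : E →L[ℝ] ℝ} {t : ℝ} (h : HasDerivAt c c' t) (v : E) :
    HasDerivAt (fun s => c s v) (c' v) t := by
  simpa using h.clm_apply (hasDerivAt_const t v)

theorem hasDerivAt_integral_of_compact {E : Type*} [NormedAddCommGroup E]
    [MeasurableSpace E] [BorelSpace E] {μ : Measure E} [IsFiniteMeasureOnCompacts μ]
    {F F' : ℝ → E → ℝ} {K : Set E} (hK : IsCompact K) {I : Set ℝ} (hI : IsOpen I)
    (hF : ∀ t ∈ I, Continuous (F t))
    (hF' : ContinuousOn (Function.uncurry F') (I ×ˢ univ))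
    (hd : ∀ t ∈ I, ∀ x, HasDerivAt (fun t => F t x) (F' t x) t)
    (hz : ∀ t ∈ I, ∀ x, x ∉ K → F t x = 0) {t₀ : ℝ} (ht₀ : t₀ ∈ I) :
    HasDerivAt (fun t => ∫ x, F t x ∂μ) (∫ x, F' t₀ x ∂μ) t₀ := by
  obtain ⟨ε, hε, hεI⟩ := Metric.nhds_basis_closedBall.mem_iff.1 (hI.mem_nhds ht₀)
  obtain ⟨C, hC⟩ := ((isCompact_closedBall t₀ ε).prod hK).exists_bound_of_continuousOn
    (hF'.mono (prod_mono hεI (subset_univ K)))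
  have hcont' : ∀ t ∈ I, Continuous (F' t) := fun t ht =>
    continuousOn_univ.1 (hF'.comp (by fun_prop : Continuous fun x : E => (t, x)).continuousOn
      (fun x _ => ⟨ht, mem_univ x⟩))
  have hz' : ∀ t ∈ I, ∀ x, x ∉ K → F' t x = 0 := fun t ht x hx =>
    (hd t ht x).unique ((hasDerivAt_const t (0 : ℝ)).congr_of_eventuallyEq
      (by filter_upwards [hI.mem_nhds ht] with s hs using hz s hs x hx))
  have hsm : ∀ f : E → ℝ, Continuous f → (∀ x, x ∉ K → f x = 0) → Integrable f μ :=
    fun f hf h => hf.integrable_of_hasCompactSupport (HasCompactSupport.intro hK h)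
  refine (hasDerivAt_integral_of_dominated_loc_of_deriv_le (F' := F')
    (bound := K.indicator fun _ => C)
    (Metric.closedBall_mem_nhds t₀ hε) ?_ (hsm _ (hF t₀ ht₀) (hz t₀ ht₀))
    (hsm _ (hcont' t₀ ht₀) (hz' t₀ ht₀)).aestronglyMeasurable ?_ ?_ ?_).2
  · filter_upwards [hI.mem_nhds ht₀] with t ht
    exact (hsm _ (hF t ht) (hz t ht)).aestronglyMeasurable
  · refine Eventually.of_forall fun x t ht => ?_
    by_cases hx : x ∈ K
    · rw [indicator_of_mem hx]
      exact hC (t, x) ⟨ht, hx⟩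
    · rw [indicator_of_notMem hx, hz' t (hεI ht) x hx, norm_zero]
  · exact (integrableOn_const hK.measure_lt_top.ne).integrable_indicator hK.measurableSet
  · exact Eventually.of_forall fun x t ht => hd t (hεI ht) x

theorem integral_lineDeriv_eq_zero_of_compact {E : Type*} [NormedAddCommGroup E] [NormedSpace ℝ E]
    [FiniteDimensional ℝ E] [MeasurableSpace E] [BorelSpace E] {μ : Measure E} [μ.IsAddHaarMeasure]
    {G G' : E → ℝ} {v : E} {K : Set E} (hK : IsCompact K) (hG : Continuous G)
    (hG' : Continuous G') (hd : ∀ x, HasDerivAt (fun a : ℝ => G (x + a • v)) (G' x) 0)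
    (hz : ∀ x, x ∉ K → G x = 0) :
    Integrable G' μ ∧ ∫ x, G' x ∂μ = 0 := by
  have hz' : ∀ x, x ∉ K → G' x = 0 := fun x hx => by
    refine (hd x).unique ((hasDerivAt_const (0 : ℝ) (0 : ℝ)).congr_of_eventuallyEq ?_)
    have : Tendsto (fun a : ℝ => x + a • v) (𝓝 0) (𝓝 x) := by
      have : Continuous fun a : ℝ => x + a • v := by fun_prop
      simpa using this.tendsto 0
    filter_upwards [this (hK.isClosed.isOpen_compl.mem_nhds hx)] with a ha using hz _ ha
  have hi := hG.integrable_of_hasCompactSupport (μ := μ) (HasCompactSupport.intro hK hz)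
  have hi' := hG'.integrable_of_hasCompactSupport (μ := μ) (HasCompactSupport.intro hK hz')
  refine ⟨hi', ?_⟩
  have := integral_bilinear_hasLineDerivAt_right_eq_neg_left_of_integrable (μ := μ) (v := v)
    (f := fun _ : E => (1 : ℝ)) (f' := fun _ => 0) (g := G) (g' := G')
    (B := ContinuousLinearMap.mul ℝ ℝ) (by simp) (by simpa using hi') (by simpa using hi)
    (fun x _ => by simp [HasLineDerivAt, hasDerivAt_const]) (fun x _ => hd x)
  simpa using this

/-- `V` and `W` are the first and second total derivatives of a solution `u` of the damped wave
equation with initial data `(f, g)`. -/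
structure IsDampedWave (f g : EuclideanSpace ℝ (Fin n) → ℝ)
    (u : EuclideanSpace ℝ (Fin n) → ℝ → ℝ)
    (V : EuclideanSpace ℝ (Fin n) × ℝ → EuclideanSpace ℝ (Fin n) × ℝ →L[ℝ] ℝ)
    (W : EuclideanSpace ℝ (Fin n) × ℝ →
      EuclideanSpace ℝ (Fin n) × ℝ →L[ℝ] EuclideanSpace ℝ (Fin n) × ℝ →L[ℝ] ℝ) : Prop where
  continuousOn_u : ContinuousOn (fun p : EuclideanSpace ℝ (Fin n) × ℝ => u p.1 p.2) (univ ×ˢ Ici 0)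
  continuousOn_V : ContinuousOn V (univ ×ˢ Ici 0)
  continuousOn_W : ContinuousOn W (univ ×ˢ Ioi 0)
  hasFDerivAt_u : ∀ x, ∀ t > 0,
    HasFDerivAt (fun p : EuclideanSpace ℝ (Fin n) × ℝ => u p.1 p.2) (V (x, t)) (x, t)
  hasFDerivAt_V : ∀ x, ∀ t > 0, HasFDerivAt V (W (x, t)) (x, t)
  symm : ∀ x, ∀ t > 0, ∀ a b, W (x, t) a b = W (x, t) b a
  pde : ∀ x, ∀ t > 0, W (x, t) (0, 1) (0, 1)
    - ∑ i, W (x, t) (EuclideanSpace.single i 1, 0) (EuclideanSpace.single i 1, 0)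
    + V (x, t) (0, 1) = 0
  init : ∀ x, u x 0 = f x
  init_time : ∀ x, V (x, 0) (0, 1) = g x
  init_space : ∀ x, HasFDerivAt f ((V (x, 0)).comp (ContinuousLinearMap.inl ℝ _ ℝ)) x

theorem exists_isDampedWave (f g : EuclideanSpace ℝ (Fin n) → ℝ)
    (u : EuclideanSpace ℝ (Fin n) → ℝ → ℝ)
    (hreg : ContDiffOn ℝ 2 (fun p : EuclideanSpace ℝ (Fin n) × ℝ => u p.1 p.2) (univ ×ˢ Ici 0))
    (hpde : ∀ x, ∀ t > (0 : ℝ),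
      deriv (deriv (fun s => u x s)) t - lap (fun z => u z t) x
        + deriv (fun s => u x s) t = 0)
    (hu0 : ∀ x, u x 0 = f x)
    (hu1 : ∀ x, derivWithin (fun s => u x s) (Ici 0) 0 = g x) :
    ∃ V W, IsDampedWave f g u V W := by
  set U : EuclideanSpace ℝ (Fin n) × ℝ → ℝ := fun p => u p.1 p.2 with hU
  set S : Set (EuclideanSpace ℝ (Fin n) × ℝ) := univ ×ˢ Ici 0 with hS
  have hSu : UniqueDiffOn ℝ S := uniqueDiffOn_univ.prod (uniqueDiffOn_Ici 0)
  set V := fderivWithin ℝ U S with hV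
  have hV1 : ContDiffOn ℝ 1 V S := hreg.fderivWithin hSu (by norm_num)
  have hSnhds : ∀ x, ∀ t > (0 : ℝ), S ∈ 𝓝 ((x, t) : EuclideanSpace ℝ (Fin n) × ℝ) :=
    fun x t ht => prod_mem_nhds univ_mem (Ici_mem_nhds ht)
  have hUd : ∀ p ∈ S, HasFDerivWithinAt U (V p) S p := fun p hp =>
    (hreg.differentiableOn (by norm_num) p hp).hasFDerivWithinAt
  have hUt : ∀ x, ∀ t > (0 : ℝ), HasFDerivAt U (V (x, t)) (x, t) := fun x t ht =>
    (hUd _ (mem_of_mem_nhds (hSnhds x t ht))).hasFDerivAt (hSnhds x t ht)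
  have hVt : ∀ x, ∀ t > (0 : ℝ), HasFDerivAt V (fderiv ℝ V (x, t)) (x, t) := fun x t ht =>
    ((hV1.contDiffAt (hSnhds x t ht)).differentiableAt (by norm_num)).hasFDerivAt
  have hline : ∀ x : EuclideanSpace ℝ (Fin n), ∀ t > (0 : ℝ), HasDerivAt (fun s => u x s) (V (x, t) (0, 1)) t :=
    fun x t ht => by
      have h1 : HasDerivAt (fun s : ℝ => (x, s)) ((0 : EuclideanSpace ℝ (Fin n)), (1 : ℝ)) t :=
        (hasDerivAt_const t x).prodMk (hasDerivAt_id t)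
      exact (hUt x t ht).comp_hasDerivAt t h1
  have hVx : ∀ x v : EuclideanSpace ℝ (Fin n), ∀ t > (0 : ℝ), ∀ a : ℝ,
      HasDerivAt (fun a : ℝ => u (x + a • v) t) (V (x + a • v, t) (v, 0)) a :=
    fun x v t ht a => by
      have h1 : HasDerivAt (fun a : ℝ => (x + a • v, t)) (v, (0 : ℝ)) a := by
        simpa using (((hasDerivAt_id a).smul_const v).const_add x).prodMk (hasDerivAt_const a t)
      exact (hUt (x + a • v) t ht).comp_hasDerivAt a h1
  refine ⟨V, fderiv ℝ V, hreg.continuousOn, hV1.continuousOn, ?_, hUt, hVt, ?_, ?_, hu0, ?_, ?_⟩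
  · have : ContDiffOn ℝ 1 V (univ ×ˢ Ioi 0) := hV1.mono (prod_mono subset_rfl Ioi_subset_Ici_self)
    exact this.continuousOn_fderiv_of_isOpen (isOpen_univ.prod isOpen_Ioi) le_rfl
  · intro x t ht a b
    refine second_derivative_symmetric_of_eventually (f := U) (f' := V) (x := (x, t)) ?_
      (hVt x t ht) a b
    have : (univ : Set (EuclideanSpace ℝ (Fin n))) ×ˢ Ioi (0 : ℝ) ∈ 𝓝 (x, t) :=
      prod_mem_nhds univ_mem (Ioi_mem_nhds ht)
    filter_upwards [this] with p hp using hUt p.1 p.2 hp.2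
  · intro x t ht
    refine Eq.trans ?_ (hpde x t ht)
    congr 1
    · congr 1
      · have h1 : deriv (fun s => u x s) =ᶠ[𝓝 t] fun s => V (x, s) (0, 1) := by
          filter_upwards [Ioi_mem_nhds ht] with s hs using (hline x s hs).deriv
        rw [h1.deriv_eq]
        have h1 : HasDerivAt (fun s : ℝ => (x, s)) ((0 : EuclideanSpace ℝ (Fin n)), (1 : ℝ)) t :=
          (hasDerivAt_const t x).prodMk (hasDerivAt_id t)
        have h2 := (hVt x t ht).comp_hasDerivAt t h1
        exact (HasDerivAt.clm_apply_const h2 (0, 1)).deriv.symm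
      · refine Finset.sum_congr rfl fun i _ => ?_
        rw [iteratedDeriv_succ, iteratedDeriv_one]
        have h1 : deriv (fun a : ℝ => u (x + a • EuclideanSpace.single i (1 : ℝ)) t)
            = fun a => V (x + a • EuclideanSpace.single i (1 : ℝ), t) (EuclideanSpace.single i 1, 0) :=
          funext fun a => (hVx x _ t ht a).deriv
        rw [h1]
        have h1 : HasDerivAt (fun a : ℝ => (x + a • EuclideanSpace.single i (1 : ℝ), t))
            (EuclideanSpace.single i (1 : ℝ), (0 : ℝ)) 0 := by
          simpa using (((hasDerivAt_id (0 : ℝ)).smul_const (EuclideanSpace.single i (1 : ℝ))).const_add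
            x).prodMk (hasDerivAt_const 0 t)
        have h2 := HasFDerivAt.comp_hasDerivAt_of_eq (0 : ℝ) (hVt x t ht) h1 (by simp)
        exact (HasDerivAt.clm_apply_const h2 (EuclideanSpace.single i 1, 0)).deriv.symm
    · exact (hline x t ht).deriv.symm
  · intro x
    rw [← hu1 x]
    have h1 : HasDerivWithinAt (fun s : ℝ => (x, s)) ((0 : EuclideanSpace ℝ (Fin n)), (1 : ℝ)) (Ici 0) 0 :=
      ((hasDerivAt_const 0 x).prodMk (hasDerivAt_id 0)).hasDerivWithinAt
    have h2 := (hUd (x, 0) ⟨mem_univ _, mem_Ici.2 le_rfl⟩).comp_hasDerivWithinAt 0 h1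
      (fun s hs => ⟨mem_univ _, hs⟩)
    exact (h2.derivWithin (uniqueDiffOn_Ici 0 0 (mem_Ici.2 le_rfl))).symm
  · intro x
    have h1 : HasFDerivWithinAt (fun z : EuclideanSpace ℝ (Fin n) => (z, (0 : ℝ)))
        (ContinuousLinearMap.inl ℝ _ ℝ) univ x :=
      ((hasFDerivAt_id x).prodMk (hasFDerivAt_const (0 : ℝ) x)).hasFDerivWithinAt
    have h2 := HasFDerivWithinAt.comp x (hUd (x, 0) ⟨mem_univ _, mem_Ici.2 le_rfl⟩) h1
      (fun s _ => show (s, (0 : ℝ)) ∈ S from ⟨mem_univ _, mem_Ici.2 le_rfl⟩)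
    rw [hasFDerivWithinAt_univ] at h2
    exact h2.congr_of_eventuallyEq (Eventually.of_forall fun z => (hu0 z).symm)

theorem hasDerivAt_max_zero_sq (z : ℝ) : HasDerivAt (fun z : ℝ => max z 0 ^ 2) (2 * max z 0) z := by
  rcases lt_trichotomy z 0 with h | h | h
  · rw [max_eq_right h.le, mul_zero]
    refine (hasDerivAt_const z (0 : ℝ)).congr_of_eventuallyEq ?_
    filter_upwards [Iio_mem_nhds h] with s hs
    rw [max_eq_right (le_of_lt hs)]; norm_num
  · subst h
    rw [hasDerivAt_iff_isLittleO]
    simp only [max_self, mul_zero, sub_zero, smul_zero, ne_eq, OfNat.ofNat_ne_zero,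
      not_false_eq_true, zero_pow]
    refine Asymptotics.IsBigO.trans_isLittleO (g := fun z : ℝ => z ^ 2) ?_
      (Asymptotics.isLittleO_pow_id one_lt_two)
    refine Asymptotics.IsBigO.of_bound 1 (Eventually.of_forall fun s => ?_)
    rw [norm_pow, norm_pow, one_mul]
    gcongr
    rw [Real.norm_eq_abs, Real.norm_eq_abs, abs_of_nonneg (le_max_right _ _)]
    exact max_le (le_abs_self s) (abs_nonneg s)
  · rw [max_eq_left h.le]
    refine ((hasDerivAt_pow 2 z).congr_of_eventuallyEq ?_).congr_deriv (by norm_num)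
    filter_upwards [Ioi_mem_nhds h] with s hs
    rw [max_eq_left (le_of_lt hs)]

namespace IsDampedWave

variable {f g : EuclideanSpace ℝ (Fin n) → ℝ} {u : EuclideanSpace ℝ (Fin n) → ℝ → ℝ}
  {V : EuclideanSpace ℝ (Fin n) × ℝ → EuclideanSpace ℝ (Fin n) × ℝ →L[ℝ] ℝ}
  {W : EuclideanSpace ℝ (Fin n) × ℝ →
      EuclideanSpace ℝ (Fin n) × ℝ →L[ℝ] EuclideanSpace ℝ (Fin n) × ℝ →L[ℝ] ℝ}

theorem hasDerivAt_u_time (h : IsDampedWave f g u V W) (x : EuclideanSpace ℝ (Fin n)) {t : ℝ}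
    (ht : 0 < t) : HasDerivAt (fun s => u x s) (V (x, t) (0, 1)) t := by
  have h1 : HasDerivAt (fun s : ℝ => (x, s)) ((0 : EuclideanSpace ℝ (Fin n)), (1 : ℝ)) t :=
    (hasDerivAt_const t x).prodMk (hasDerivAt_id t)
  exact (h.hasFDerivAt_u x t ht).comp_hasDerivAt t h1

theorem hasDerivAt_V_time (h : IsDampedWave f g u V W) (x : EuclideanSpace ℝ (Fin n)) {t : ℝ}
    (ht : 0 < t) (b : EuclideanSpace ℝ (Fin n) × ℝ) :
    HasDerivAt (fun s => V (x, s) b) (W (x, t) (0, 1) b) t := by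
  have h1 : HasDerivAt (fun s : ℝ => (x, s)) ((0 : EuclideanSpace ℝ (Fin n)), (1 : ℝ)) t :=
    (hasDerivAt_const t x).prodMk (hasDerivAt_id t)
  exact HasDerivAt.clm_apply_const ((h.hasFDerivAt_V x t ht).comp_hasDerivAt t h1) b

theorem hasDerivAt_u_line (h : IsDampedWave f g u V W) (x v : EuclideanSpace ℝ (Fin n)) {t : ℝ}
    (ht : 0 < t) : HasDerivAt (fun a : ℝ => u (x + a • v) t) (V (x, t) (v, 0)) 0 := by
  have h1 : HasDerivAt (fun a : ℝ => (x + a • v, t)) (v, (0 : ℝ)) 0 := by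
    simpa using (((hasDerivAt_id (0 : ℝ)).smul_const v).const_add x).prodMk (hasDerivAt_const 0 t)
  exact HasFDerivAt.comp_hasDerivAt_of_eq (0 : ℝ) (h.hasFDerivAt_u x t ht) h1 (by simp)

theorem hasDerivAt_V_line (h : IsDampedWave f g u V W) (x v : EuclideanSpace ℝ (Fin n)) {t : ℝ}
    (ht : 0 < t) (b : EuclideanSpace ℝ (Fin n) × ℝ) :
    HasDerivAt (fun a : ℝ => V (x + a • v, t) b) (W (x, t) (v, 0) b) 0 := by
  have h1 : HasDerivAt (fun a : ℝ => (x + a • v, t)) (v, (0 : ℝ)) 0 := by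
    simpa using (((hasDerivAt_id (0 : ℝ)).smul_const v).const_add x).prodMk (hasDerivAt_const 0 t)
  have h2 := HasFDerivAt.comp_hasDerivAt_of_eq (0 : ℝ) (h.hasFDerivAt_V x t ht) h1 (by simp)
  exact HasDerivAt.clm_apply_const h2 b

theorem continuousOn_u_swap (h : IsDampedWave f g u V W) :
    ContinuousOn (fun p : ℝ × EuclideanSpace ℝ (Fin n) => u p.2 p.1) (Ici 0 ×ˢ univ) :=
  h.continuousOn_u.comp (f := Prod.swap) (by fun_prop) (fun _ hp => ⟨mem_univ _, hp.1⟩)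

theorem continuousOn_V_swap (h : IsDampedWave f g u V W) (b : EuclideanSpace ℝ (Fin n) × ℝ) :
    ContinuousOn (fun p : ℝ × EuclideanSpace ℝ (Fin n) => V (p.2, p.1) b) (Ici 0 ×ˢ univ) :=
  (h.continuousOn_V.comp (f := Prod.swap) (by fun_prop) (fun _ hp => ⟨mem_univ _, hp.1⟩)).clm_apply
    continuousOn_const

theorem continuousOn_W_swap (h : IsDampedWave f g u V W) (a b : EuclideanSpace ℝ (Fin n) × ℝ) :
    ContinuousOn (fun p : ℝ × EuclideanSpace ℝ (Fin n) => W (p.2, p.1) a b) (Ioi 0 ×ˢ univ) :=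
  ((h.continuousOn_W.comp (f := Prod.swap) (by fun_prop)
    (fun _ hp => ⟨mem_univ _, hp.1⟩)).clm_apply continuousOn_const).clm_apply continuousOn_const

theorem continuous_u (h : IsDampedWave f g u V W) {t : ℝ} (ht : 0 ≤ t) :
    Continuous fun x => u x t :=
  continuousOn_univ.1 (h.continuousOn_u_swap.comp (f := fun x => (t, x)) (by fun_prop)
    (fun x _ => ⟨ht, mem_univ x⟩))

theorem continuous_V (h : IsDampedWave f g u V W) {t : ℝ} (ht : 0 ≤ t)
    (b : EuclideanSpace ℝ (Fin n) × ℝ) : Continuous fun x => V (x, t) b :=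
  continuousOn_univ.1 ((h.continuousOn_V_swap b).comp (f := fun x => (t, x)) (by fun_prop)
    (fun x _ => ⟨ht, mem_univ x⟩))

theorem continuous_W (h : IsDampedWave f g u V W) {t : ℝ} (ht : 0 < t)
    (a b : EuclideanSpace ℝ (Fin n) × ℝ) : Continuous fun x => W (x, t) a b :=
  continuousOn_univ.1 ((h.continuousOn_W_swap a b).comp (f := fun x => (t, x)) (by fun_prop)
    (fun x _ => ⟨ht, mem_univ x⟩))

/-- The pointwise inequality behind the decay of the energy on backward cones. -/
theorem cone_flux_le {r p : ℝ} {d q : Fin n → ℝ} (hr : 0 ≤ r) (hd : ∑ i, d i ^ 2 ≤ r ^ 2) :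
    p * ∑ i, d i * q i ≤ r * ((p ^ 2 + ∑ i, q i ^ 2) / 2) := by
  set A := ∑ i, d i * q i
  set B := ∑ i, q i ^ 2 with hB
  have hB0 : 0 ≤ B := Finset.sum_nonneg fun i _ => sq_nonneg _
  have h1 : A ^ 2 ≤ r ^ 2 * B := (Finset.sum_mul_sq_le_sq_mul_sq _ _ _).trans (by gcongr)
  have h2 : |A| ≤ r * √B := abs_le_of_sq_le_sq (by rw [mul_pow, Real.sq_sqrt hB0]; exact h1)
    (by positivity)
  have h3 : p * A ≤ |p| * |A| := by rw [← abs_mul]; exact le_abs_self _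
  have h4 : |p| * |A| ≤ |p| * (r * √B) := by gcongr
  nlinarith [mul_nonneg hr (sq_nonneg (|p| - √B)), Real.sq_sqrt hB0, sq_abs p]

theorem eq_zero_of_init_eq_zero (h : IsDampedWave f g u V W) {x₀ : EuclideanSpace ℝ (Fin n)} {ρ : ℝ}
    (hf : ∀ x ∈ ball x₀ ρ, f x = 0) (hg : ∀ x ∈ ball x₀ ρ, g x = 0) {t₀ : ℝ} (ht₀ : 0 ≤ t₀)
    (htρ : t₀ < ρ) : u x₀ t₀ = 0 := by
  set s : Fin n → EuclideanSpace ℝ (Fin n) := fun i => EuclideanSpace.single i 1 with hs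
  set z : ℝ → EuclideanSpace ℝ (Fin n) → ℝ := fun t x => (ρ - t) ^ 2 - ‖x - x₀‖ ^ 2 with hz
  set e : ℝ → EuclideanSpace ℝ (Fin n) → ℝ :=
    fun t x => (V (x, t) (0, 1) ^ 2 + ∑ i, V (x, t) (s i, 0) ^ 2) / 2 with he
  set F : ℝ → EuclideanSpace ℝ (Fin n) → ℝ := fun t x => max (z t x) 0 ^ 2 * e t x with hF
  set F' : ℝ → EuclideanSpace ℝ (Fin n) → ℝ := fun t x =>
    (2 * max (z t x) 0 * (-2 * (ρ - t))) * e t x + max (z t x) 0 ^ 2 *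
      (V (x, t) (0, 1) * W (x, t) (0, 1) (0, 1)
        + ∑ i, V (x, t) (s i, 0) * W (x, t) (0, 1) (s i, 0)) with hF'
  set G' : ℝ → Fin n → EuclideanSpace ℝ (Fin n) → ℝ := fun t i x =>
    (2 * max (z t x) 0 * (-2 * (x i - x₀ i))) * (V (x, t) (0, 1) * V (x, t) (s i, 0))
      + max (z t x) 0 ^ 2 * (W (x, t) (s i, 0) (0, 1) * V (x, t) (s i, 0)
        + V (x, t) (0, 1) * W (x, t) (s i, 0) (s i, 0)) with hG'
  have hzc : Continuous fun p : ℝ × EuclideanSpace ℝ (Fin n) => z p.1 p.2 := by fun_prop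
  have hnorm : ∀ x : EuclideanSpace ℝ (Fin n), ‖x - x₀‖ ^ 2 = ∑ i, (x i - x₀ i) ^ 2 := fun x => by
    rw [EuclideanSpace.norm_sq_eq]; simp
  have he0 : ∀ t x, 0 ≤ e t x := fun t x => by positivity
  have hFK : ∀ t ∈ Ico 0 ρ, ∀ x, x ∉ closedBall x₀ ρ → z t x ≤ 0 := fun t ht x hx => by
    rw [mem_closedBall, dist_eq_norm, not_le] at hx
    have : (ρ - t) ^ 2 ≤ ‖x - x₀‖ ^ 2 := by
      have := ht.1; have := ht.2
      gcongr; linarith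
    simp only [hz]; linarith
  have hec : ContinuousOn (fun p : ℝ × EuclideanSpace ℝ (Fin n) => e p.1 p.2) (Ici 0 ×ˢ univ) := by
    have := (((h.continuousOn_V_swap (0, 1)).pow 2).add
      (continuousOn_finsetSum Finset.univ fun i _ => (h.continuousOn_V_swap (s i, 0)).pow 2)).div_const 2
    exact this
  have hFc : ContinuousOn (Function.uncurry F) (Ici 0 ×ˢ univ) :=
    ((hzc.max continuous_const).pow 2).continuousOn.mul hec
  have hFx : ∀ t, 0 ≤ t → Continuous (F t) := fun t ht =>
    continuousOn_univ.1 (hFc.comp (f := fun x => (t, x)) (by fun_prop) (fun x _ => ⟨ht, mem_univ x⟩))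
  have hF'c : ContinuousOn (Function.uncurry F') (Ioi 0 ×ˢ univ) := by
    have hsub : Ioi (0 : ℝ) ×ˢ (univ : Set (EuclideanSpace ℝ (Fin n))) ⊆ Ici 0 ×ˢ univ :=
      prod_mono Ioi_subset_Ici_self subset_rfl
    refine ContinuousOn.add (ContinuousOn.mul ?_ (hec.mono hsub)) (ContinuousOn.mul
      ((hzc.max continuous_const).pow 2).continuousOn (ContinuousOn.add
        (((h.continuousOn_V_swap (0, 1)).mono hsub).mul (h.continuousOn_W_swap _ _)) ?_))
    · exact ((continuous_const.mul (hzc.max continuous_const)).mul (by fun_prop)).continuousOn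
    · exact continuousOn_finsetSum _ fun i _ =>
        ((h.continuousOn_V_swap (s i, 0)).mono hsub).mul (h.continuousOn_W_swap _ _)
  have hFd : ∀ t > 0, ∀ x, HasDerivAt (fun t => F t x) (F' t x) t := fun t ht x => by
    have h1 : HasDerivAt (fun t => z t x) (-2 * (ρ - t)) t := by
      have := (((hasDerivAt_id t).const_sub ρ).pow 2).sub_const (‖x - x₀‖ ^ 2)
      refine this.congr_deriv ?_
      simp
    have h2 := (hasDerivAt_max_zero_sq (z t x)).comp t h1
    have h3 : HasDerivAt (fun t => e t x) (V (x, t) (0, 1) * W (x, t) (0, 1) (0, 1)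
        + ∑ i, V (x, t) (s i, 0) * W (x, t) (0, 1) (s i, 0)) t := by
      have := (((h.hasDerivAt_V_time x ht (0, 1)).pow 2).add
        (HasDerivAt.fun_sum (u := Finset.univ)
          fun i _ => (h.hasDerivAt_V_time x ht (s i, 0)).pow 2)).div_const 2
      refine this.congr_deriv ?_
      simp only [add_div, Finset.sum_div]
      refine congrArg₂ _ (by push_cast; ring) (Finset.sum_congr rfl fun i _ => by push_cast; ring)
    exact h2.mul h3
  have hderiv : ∀ t ∈ Ioo 0 ρ, HasDerivAt (fun t => ∫ x, F t x) (∫ x, F' t x) t := fun t ht =>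
    hasDerivAt_integral_of_compact (isCompact_closedBall x₀ ρ) isOpen_Ioo
      (fun t ht => hFx t ht.1.le) (hF'c.mono (prod_mono Ioo_subset_Ioi_self subset_rfl))
      (fun t ht => hFd t ht.1)
      (fun t ht x hx => by simp [hF, max_eq_right (hFK t (Ioo_subset_Ico_self ht) x hx)]) ht
  have hG : ∀ t ∈ Ioo 0 ρ, ∀ i, Integrable (G' t i) ∧ ∫ x, G' t i x = 0 := fun t ht i => by
    refine integral_lineDeriv_eq_zero_of_compact (v := s i)
      (G := fun x => max (z t x) 0 ^ 2 * (V (x, t) (0, 1) * V (x, t) (s i, 0)))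
      (isCompact_closedBall x₀ ρ) ?_ ?_ (fun x => ?_)
      (fun x hx => by simp [max_eq_right (hFK t (Ioo_subset_Ico_self ht) x hx)])
    · exact (((hzc.comp (by fun_prop : Continuous fun x => (t, x))).max continuous_const).pow 2).mul
        ((h.continuous_V ht.1.le _).mul (h.continuous_V ht.1.le _))
    · have hzt : Continuous fun x => max (z t x) 0 :=
        (hzc.comp (by fun_prop : Continuous fun x => (t, x))).max continuous_const
      exact ((((continuous_const.mul hzt).mul (by fun_prop)).mul
        ((h.continuous_V ht.1.le _).mul (h.continuous_V ht.1.le _))).add ((hzt.pow 2).mul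
        (((h.continuous_W ht.1 _ _).mul (h.continuous_V ht.1.le _)).add
          ((h.continuous_V ht.1.le _).mul (h.continuous_W ht.1 _ _)))))
    · have h1 : HasDerivAt (fun a : ℝ => z t (x + a • s i)) (-2 * (x i - x₀ i)) 0 := by
        have h0 : HasDerivAt (fun a : ℝ => x + a • s i - x₀) (s i) 0 := by
          simpa using (((hasDerivAt_id (0 : ℝ)).smul_const (s i)).const_add x).sub_const x₀
        refine (h0.norm_sq.const_sub ((ρ - t) ^ 2)).congr_deriv ?_
        simp [hs, EuclideanSpace.inner_single_right]
      have h2 := HasDerivAt.comp_of_eq (0 : ℝ) (hasDerivAt_max_zero_sq (z t x)) h1 (by simp)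
      refine (h2.mul ((h.hasDerivAt_V_line x (s i) ht.1 (0, 1)).mul
        (h.hasDerivAt_V_line x (s i) ht.1 (s i, 0)))).congr_deriv ?_
      simp [hG']
  have hle : ∀ t ∈ Ioo 0 ρ, ∫ x, F' t x ≤ 0 := fun t ht => by
    have hF'x : Continuous (F' t) := continuousOn_univ.1
      (hF'c.comp (f := fun x => (t, x)) (by fun_prop) (fun x _ => ⟨ht.1, mem_univ x⟩))
    have hF'i : Integrable (F' t) := hF'x.integrable_of_hasCompactSupport
      (HasCompactSupport.intro (isCompact_closedBall x₀ ρ) fun x hx => by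
        simp [hF', max_eq_right (hFK t (Ioo_subset_Ico_self ht) x hx)])
    have hsum : ∫ x, ∑ i, G' t i x = 0 := by
      rw [integral_finsetSum _ fun i _ => (hG t ht i).1]
      exact Finset.sum_eq_zero fun i _ => (hG t ht i).2
    have hsumi : Integrable fun x => ∑ i, G' t i x := integrable_finsetSum _ fun i _ => (hG t ht i).1
    have : ∫ x, F' t x = ∫ x, (F' t x - ∑ i, G' t i x) := by
      rw [integral_sub hF'i hsumi, hsum, sub_zero]
    rw [this]
    refine integral_nonpos fun x => ?_
    have hp := h.pde x t ht.1
    have hcone : max (z t x) 0 * (-V (x, t) (0, 1) * ∑ i, (x i - x₀ i) * -V (x, t) (s i, 0)) ≤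
        max (z t x) 0 * ((ρ - t) * e t x) := by
      rcases le_total (z t x) 0 with hz0 | hz0
      · simp [max_eq_right hz0]
      · refine mul_le_mul_of_nonneg_left ?_ (le_max_right _ _)
        have := cone_flux_le (p := -V (x, t) (0, 1)) (d := fun i => x i - x₀ i)
          (q := fun i => -V (x, t) (s i, 0)) (r := ρ - t) (by linarith [ht.2])
          (by rw [← hnorm]; simp only [hz] at hz0; linarith)
        simpa [he] using this
    have hGs : ∑ i, G' t i x = -4 * (max (z t x) 0 * (V (x, t) (0, 1) *
        ∑ i, (x i - x₀ i) * V (x, t) (s i, 0)))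
        + max (z t x) 0 ^ 2 * (∑ i, V (x, t) (s i, 0) * W (x, t) (0, 1) (s i, 0)
          + V (x, t) (0, 1) * ∑ i, W (x, t) (s i, 0) (s i, 0)) := by
      simp only [hG', Finset.mul_sum, mul_add, Finset.sum_add_distrib, ← add_assoc]
      refine congrArg₂ _ (congrArg₂ _ ?_ ?_) rfl
      · exact Finset.sum_congr rfl fun i _ => by ring
      · refine Finset.sum_congr rfl fun i _ => ?_
        rw [h.symm x t ht.1 (s i, 0) (0, 1)]; ring
    have hd : ∑ i, W (x, t) (s i, 0) (s i, 0) = W (x, t) (0, 1) (0, 1) + V (x, t) (0, 1) := by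
      simp only [hs]; linarith
    simp only [Pi.zero_apply]
    rw [hGs, hd]
    simp only [mul_neg, neg_mul, Finset.sum_neg_distrib, neg_neg] at hcone
    simp only [hF']
    nlinarith [sq_nonneg (max (z t x) 0 * V (x, t) (0, 1))]
  have hcont : ContinuousOn (fun t => ∫ x, F t x) (Ico 0 ρ) :=
    continuousOn_integral_of_compact_support (isCompact_closedBall x₀ ρ)
      (hFc.mono (prod_mono Ico_subset_Ici_self subset_rfl))
      (fun t x ht hx => by simp [hF, max_eq_right (hFK t ht x hx)])
  have hanti : AntitoneOn (fun t => ∫ x, F t x) (Ico 0 ρ) :=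
    antitoneOn_of_deriv_nonpos (convex_Ico 0 ρ) hcont
      (fun t ht => by
        rw [interior_Ico] at ht
        exact (hderiv t ht).differentiableAt.differentiableWithinAt)
      (fun t ht => by
        rw [interior_Ico] at ht
        rw [(hderiv t ht).deriv]
        exact hle t ht)
  have hinit : ∫ x, F 0 x = 0 := by
    refine integral_eq_zero_of_ae (Eventually.of_forall fun x => ?_)
    by_cases hx : x ∈ ball x₀ ρ
    · have h1 : (V (x, 0)).comp (ContinuousLinearMap.inl ℝ _ ℝ) = 0 :=
        (h.init_space x).unique ((hasFDerivAt_const (0 : ℝ) x).congr_of_eventuallyEq (by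
          filter_upwards [isOpen_ball.mem_nhds hx] with y hy using hf y hy))
      have h2 : ∀ i, V (x, 0) (s i, 0) = 0 := fun i => by
        simpa using congrArg (fun L => L (s i)) h1
      simp [hF, he, h2, h.init_time x, hg x hx]
    · have : z 0 x ≤ 0 := by
        rw [mem_ball, dist_eq_norm, not_lt] at hx
        have : ρ ^ 2 ≤ ‖x - x₀‖ ^ 2 := by
          gcongr; linarith
        simp only [hz]; simpa using this
      simp [hF, max_eq_right this]
  have hzero : ∀ t ∈ Ioo 0 t₀, V (x₀, t) (0, 1) = 0 := fun t ht => by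
    have htρ' : t < ρ := ht.2.trans htρ
    have h1 : ∫ x, F t x ≤ 0 := hinit ▸
      hanti ⟨le_rfl, by linarith⟩ ⟨ht.1.le, htρ'⟩ ht.1.le
    have h2 : 0 ≤ F t := fun x => mul_nonneg (sq_nonneg _) (he0 t x)
    have hc : HasCompactSupport (F t) :=
      HasCompactSupport.intro (isCompact_closedBall x₀ ρ) fun x hx => by
        simp [hF, max_eq_right (hFK t ⟨ht.1.le, htρ'⟩ x hx)]
    have h3 : F t x₀ = 0 := by
      by_contra hne
      exact absurd ((hFx t ht.1.le).integral_pos_of_hasCompactSupport_nonneg_nonzero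
        (μ := volume) hc h2 hne) (not_lt.2 h1)
    have h4 : e t x₀ = 0 := by
      refine (mul_eq_zero.1 h3).resolve_left ?_
      have : 0 < (ρ - t) ^ 2 := by have := sub_pos.2 htρ'; positivity
      simp only [hz, sub_self, norm_zero]
      rw [max_eq_left (by simpa using this.le)]
      simp; linarith
    have h5 : 0 ≤ ∑ i, V (x₀, t) (s i, 0) ^ 2 := Finset.sum_nonneg fun i _ => sq_nonneg _
    simp only [he] at h4
    nlinarith [sq_nonneg (V (x₀, t) (0, 1))]
  rcases ht₀.eq_or_lt with rfl | hpos
  · rw [h.init]; exact hf x₀ (mem_ball_self htρ)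
  · have huc : ContinuousOn (fun t => u x₀ t) (Icc 0 t₀) :=
      h.continuousOn_u.comp (f := fun t => (x₀, t)) (by fun_prop) (fun t ht => ⟨mem_univ _, ht.1⟩)
    obtain ⟨c, hc, hc'⟩ := exists_hasDerivAt_eq_slope (fun t => u x₀ t) (fun t => V (x₀, t) (0, 1))
      hpos huc (fun t ht => h.hasDerivAt_u_time x₀ ht.1)
    rw [hzero c hc, sub_zero, eq_comm, div_eq_zero_iff, h.init,
      hf x₀ (mem_ball_self (hpos.trans htρ))] at hc'
    simpa using hc'.resolve_right hpos.ne'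

end IsDampedWave

namespace IsDampedWave

variable {f g : EuclideanSpace ℝ (Fin n) → ℝ} {u : EuclideanSpace ℝ (Fin n) → ℝ → ℝ}
  {V : EuclideanSpace ℝ (Fin n) × ℝ → EuclideanSpace ℝ (Fin n) × ℝ →L[ℝ] ℝ}
  {W : EuclideanSpace ℝ (Fin n) × ℝ →
      EuclideanSpace ℝ (Fin n) × ℝ →L[ℝ] EuclideanSpace ℝ (Fin n) × ℝ →L[ℝ] ℝ} {R : ℝ}

/-- Finite speed of propagation. -/
theorem eq_zero_of_lt_norm (h : IsDampedWave f g u V W) (hf : ∀ x, R < ‖x‖ → f x = 0)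
    (hg : ∀ x, R < ‖x‖ → g x = 0) {x : EuclideanSpace ℝ (Fin n)} {t : ℝ} (ht : 0 ≤ t)
    (hx : R + t < ‖x‖) : u x t = 0 := by
  have hball : ∀ y ∈ ball x (‖x‖ - R), R < ‖y‖ := fun y hy => by
    rw [mem_ball, dist_comm, dist_eq_norm] at hy
    linarith [norm_sub_norm_le x y]
  exact h.eq_zero_of_init_eq_zero (fun y hy => hf y (hball y hy)) (fun y hy => hg y (hball y hy)) ht
    (by linarith)

theorem isOpen_exterior :
    IsOpen {p : EuclideanSpace ℝ (Fin n) × ℝ | R + p.2 < ‖p.1‖ ∧ 0 < p.2} := by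
  have h1 : IsOpen {p : EuclideanSpace ℝ (Fin n) × ℝ | R + p.2 < ‖p.1‖} :=
    isOpen_lt (by fun_prop) (by fun_prop)
  have h2 : IsOpen {p : EuclideanSpace ℝ (Fin n) × ℝ | 0 < p.2} :=
    isOpen_lt (by fun_prop) (by fun_prop)
  exact h1.inter h2

theorem V_eq_zero_of_lt_norm (h : IsDampedWave f g u V W) (hf : ∀ x, R < ‖x‖ → f x = 0)
    (hg : ∀ x, R < ‖x‖ → g x = 0) {x : EuclideanSpace ℝ (Fin n)} {t : ℝ} (ht : 0 < t)
    (hx : R + t < ‖x‖) : V (x, t) = 0 :=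
  (h.hasFDerivAt_u x t ht).unique ((hasFDerivAt_const (0 : ℝ) (x, t)).congr_of_eventuallyEq (by
    filter_upwards [isOpen_exterior.mem_nhds (show (x, t) ∈ _ from ⟨hx, ht⟩)] with p hp
      using h.eq_zero_of_lt_norm hf hg hp.2.le hp.1))

theorem W_eq_zero_of_lt_norm (h : IsDampedWave f g u V W) (hf : ∀ x, R < ‖x‖ → f x = 0)
    (hg : ∀ x, R < ‖x‖ → g x = 0) {x : EuclideanSpace ℝ (Fin n)} {t : ℝ} (ht : 0 < t)
    (hx : R + t < ‖x‖) : W (x, t) = 0 :=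
  (h.hasFDerivAt_V x t ht).unique ((hasFDerivAt_const 0 (x, t)).congr_of_eventuallyEq (by
    filter_upwards [isOpen_exterior.mem_nhds (show (x, t) ∈ _ from ⟨hx, ht⟩)] with p hp
      using h.V_eq_zero_of_lt_norm hf hg hp.2 hp.1))

theorem V_time_eq_zero_of_lt_norm (h : IsDampedWave f g u V W) (hf : ∀ x, R < ‖x‖ → f x = 0)
    (hg : ∀ x, R < ‖x‖ → g x = 0) {x : EuclideanSpace ℝ (Fin n)} {t : ℝ} (ht : 0 ≤ t)
    (hx : R + t < ‖x‖) : V (x, t) (0, 1) = 0 := by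
  rcases ht.eq_or_lt with rfl | hpos
  · rw [h.init_time]; exact hg x (by simpa using hx)
  · simp [h.V_eq_zero_of_lt_norm hf hg hpos hx]

theorem continuousOn_integral_mul {c : EuclideanSpace ℝ (Fin n) → ℝ} (hc : Continuous c)
    {q : ℝ → EuclideanSpace ℝ (Fin n) → ℝ} (hq : ContinuousOn (Function.uncurry q) (Ici 0 ×ˢ univ))
    (hz : ∀ t ≥ 0, ∀ x, R + t < ‖x‖ → q t x = 0) :
    ContinuousOn (fun t => ∫ x, c x * q t x) (Ici 0) := by
  intro t ht
  have h1 : ContinuousOn (fun t => ∫ x, c x * q t x) (Ico 0 (t + 1)) :=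
    continuousOn_integral_of_compact_support
      (isCompact_closedBall (0 : EuclideanSpace ℝ (Fin n)) (R + (t + 1)))
      ((hc.comp continuous_snd).continuousOn.mul
        (hq.mono (prod_mono Ico_subset_Ici_self subset_rfl)))
      (fun s x hs hx => by
        rw [mem_closedBall_zero_iff, not_le] at hx
        rw [hz s hs.1 x (by linarith [hs.2]), mul_zero])
  refine (h1 t ⟨ht, lt_add_one t⟩).mono_of_mem_nhdsWithin ?_
  rw [← Ici_inter_Iio]
  exact inter_mem_nhdsWithin _ (Iio_mem_nhds (lt_add_one t))

/-- Testing a solution against an eigenfunction of the Laplacian yields a damped oscillator. -/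
theorem integral_mul_oscillator (h : IsDampedWave f g u V W) (hf : ∀ x, R < ‖x‖ → f x = 0)
    (hg : ∀ x, R < ‖x‖ → g x = 0) {c : EuclideanSpace ℝ (Fin n) → ℝ}
    {dc : Fin n → EuclideanSpace ℝ (Fin n) → ℝ} {k : Fin n → ℝ} (hc : Continuous c)
    (hdc : ∀ i, Continuous (dc i))
    (hd1 : ∀ i x, HasDerivAt (fun a : ℝ => c (x + a • EuclideanSpace.single i (1 : ℝ))) (dc i x) 0)
    (hd2 : ∀ i x, HasDerivAt (fun a : ℝ => dc i (x + a • EuclideanSpace.single i (1 : ℝ)))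
      (-k i * c x) 0) :
    ContinuousOn (fun t => ∫ x, c x * u x t) (Ici 0) ∧
    ContinuousOn (fun t => ∫ x, c x * V (x, t) (0, 1)) (Ici 0) ∧
    (∀ t > 0, HasDerivAt (fun t => ∫ x, c x * u x t) (∫ x, c x * V (x, t) (0, 1)) t) ∧
    (∀ t > 0, HasDerivAt (fun t => ∫ x, c x * V (x, t) (0, 1))
      (-(∫ x, c x * V (x, t) (0, 1)) - (∑ i, k i) * ∫ x, c x * u x t) t) := by
  have hsub : ∀ T : ℝ, Ioo 0 T ×ˢ (univ : Set (EuclideanSpace ℝ (Fin n))) ⊆ Ici 0 ×ˢ univ :=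
    fun T => prod_mono (fun t ht => ht.1.le) subset_rfl
  have hsub' : ∀ T : ℝ, Ioo 0 T ×ˢ (univ : Set (EuclideanSpace ℝ (Fin n))) ⊆ Ioi 0 ×ˢ univ :=
    fun T => prod_mono Ioo_subset_Ioi_self subset_rfl
  have hcs : ∀ s : Set (ℝ × EuclideanSpace ℝ (Fin n)), ContinuousOn (fun p => c p.2) s := fun s =>
    (hc.comp continuous_snd).continuousOn
  refine ⟨continuousOn_integral_mul hc h.continuousOn_u_swap
      fun t ht x hx => h.eq_zero_of_lt_norm hf hg ht hx,
    continuousOn_integral_mul hc (q := fun t x => V (x, t) (0, 1)) (h.continuousOn_V_swap (0, 1))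
      fun t ht x hx => h.V_time_eq_zero_of_lt_norm hf hg ht hx, ?_, ?_⟩
  · intro t ht
    refine hasDerivAt_integral_of_compact (F := fun t x => c x * u x t)
      (F' := fun t x => c x * V (x, t) (0, 1)) (isCompact_closedBall
        (0 : EuclideanSpace ℝ (Fin n)) (R + (t + 1))) (I := Ioo 0 (t + 1)) isOpen_Ioo
      (fun s hs => hc.mul (h.continuous_u hs.1.le))
      ((hcs _).mul ((h.continuousOn_V_swap (0, 1)).mono (hsub _)))
      (fun s hs x => (h.hasDerivAt_u_time x hs.1).const_mul _)
      (fun s hs x hx => ?_) ⟨ht, by linarith⟩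
    rw [mem_closedBall_zero_iff, not_le] at hx
    rw [h.eq_zero_of_lt_norm hf hg hs.1.le (by linarith [hs.2]), mul_zero]
  · intro t ht
    have h1 := hasDerivAt_integral_of_compact (μ := volume) (F := fun t x => c x * V (x, t) (0, 1))
      (F' := fun t x => c x * W (x, t) (0, 1) (0, 1)) (isCompact_closedBall
        (0 : EuclideanSpace ℝ (Fin n)) (R + (t + 1))) (I := Ioo 0 (t + 1)) isOpen_Ioo
      (fun s hs => hc.mul (h.continuous_V hs.1.le _))
      ((hcs _).mul ((h.continuousOn_W_swap (0, 1) (0, 1)).mono (hsub' _)))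
      (fun s hs x => (h.hasDerivAt_V_time x hs.1 (0, 1)).const_mul _)
      (fun s hs x hx => by
        rw [mem_closedBall_zero_iff, not_le] at hx
        rw [h.V_time_eq_zero_of_lt_norm hf hg hs.1.le (by linarith [hs.2]), mul_zero])
      (t₀ := t) ⟨ht, by linarith⟩
    refine h1.congr_deriv ?_
    have hint : ∀ q : EuclideanSpace ℝ (Fin n) → ℝ, Continuous q →
        (∀ x, R + t < ‖x‖ → q x = 0) → Integrable fun x => c x * q x := fun q hq hz =>
      (hc.mul hq).integrable_of_hasCompactSupport (HasCompactSupport.intro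
        (isCompact_closedBall 0 (R + t)) fun x hx => by
          rw [mem_closedBall_zero_iff, not_le] at hx
          simp [hz x hx])
    have hi0 := hint _ (h.continuous_u ht.le) fun x hx => h.eq_zero_of_lt_norm hf hg ht.le hx
    have hi1 := hint _ (h.continuous_V ht.le (0, 1)) fun x hx =>
      h.V_time_eq_zero_of_lt_norm hf hg ht.le hx
    have hi2 : ∀ b, Integrable fun x => c x * W (x, t) b b := fun b =>
      hint _ (h.continuous_W ht b b) fun x hx => by simp [h.W_eq_zero_of_lt_norm hf hg ht hx]
    have hparts : ∀ i, ∫ x, c x * W (x, t) (EuclideanSpace.single i 1, 0) (EuclideanSpace.single i 1, 0)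
        = -k i * ∫ x, c x * u x t := fun i => by
      have h2 := (integral_lineDeriv_eq_zero_of_compact (μ := volume)
        (v := EuclideanSpace.single i (1 : ℝ))
        (G := fun x => c x * V (x, t) (EuclideanSpace.single i 1, 0) - dc i x * u x t)
        (G' := fun x => c x * W (x, t) (EuclideanSpace.single i 1, 0) (EuclideanSpace.single i 1, 0)
          - -k i * (c x * u x t))
        (isCompact_closedBall 0 (R + t))
        ((hc.mul (h.continuous_V ht.le _)).sub ((hdc i).mul (h.continuous_u ht.le)))
        ((hc.mul (h.continuous_W ht _ _)).sub (continuous_const.mul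
          (hc.mul (h.continuous_u ht.le))))
        (fun x => ?_) (fun x hx => ?_)).2
      · rw [integral_sub (hi2 _) (hi0.const_mul _), integral_const_mul] at h2
        linarith
      · refine (((hd1 i x).mul (h.hasDerivAt_V_line x (EuclideanSpace.single i 1) ht
          (EuclideanSpace.single i 1, 0))).sub ((hd2 i x).mul
            (h.hasDerivAt_u_line x (EuclideanSpace.single i 1) ht))).congr_deriv ?_
        simp only [zero_smul, add_zero]
        ring
      · rw [mem_closedBall_zero_iff, not_le] at hx
        simp [h.eq_zero_of_lt_norm hf hg ht.le hx, h.V_eq_zero_of_lt_norm hf hg ht hx]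
    have h3 : ∀ x, c x * W (x, t) (0, 1) (0, 1) = ∑ i, c x *
        W (x, t) (EuclideanSpace.single i 1, 0) (EuclideanSpace.single i 1, 0)
          - c x * V (x, t) (0, 1) := fun x => by
      rw [← Finset.mul_sum]
      linear_combination c x * h.pde x t ht
    simp_rw [h3]
    rw [integral_sub (integrable_finsetSum _ fun i _ => hi2 _) hi1,
      integral_finsetSum _ fun i _ => hi2 _]
    simp_rw [hparts]
    rw [← Finset.sum_mul, Finset.sum_neg_distrib]
    ring

end IsDampedWave

open scoped FourierTransform RealInnerProductSpace

theorem hasCompactSupport_of_eq_zero_of_lt_norm {E : Type*} [NormedAddCommGroup E] [ProperSpace E]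
    {v : E → ℝ} {R : ℝ} (h0 : ∀ x, R < ‖x‖ → v x = 0) : HasCompactSupport v :=
  HasCompactSupport.intro (isCompact_closedBall 0 R) fun x hx => h0 x (by simpa using hx)

theorem fourier_ofReal_eq {v : EuclideanSpace ℝ (Fin n) → ℝ} (hv : Integrable v)
    (ξ : EuclideanSpace ℝ (Fin n)) :
    (𝓕 (fun x => (v x : ℂ)) ξ).re = ∫ x, cos (2 * π * ⟪x, ξ⟫) * v x ∧
    (𝓕 (fun x => (v x : ℂ)) ξ).im = -∫ x, sin (2 * π * ⟪x, ξ⟫) * v x := by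
  have hint : Integrable (fun x => Complex.exp (↑(-2 * π * ⟪x, ξ⟫) * Complex.I) • (v x : ℂ)) := by
    refine Integrable.bdd_mul (c := 1) (hv.ofReal (𝕜 := ℂ)) ?_ (Eventually.of_forall fun x => ?_)
    · exact Continuous.aestronglyMeasurable (by fun_prop)
    · exact (Complex.norm_exp_ofReal_mul_I _).le
  have key : ∀ x, Complex.exp (↑(-2 * π * ⟪x, ξ⟫) * Complex.I) • (v x : ℂ) =
      ⟨cos (2 * π * ⟪x, ξ⟫) * v x, -(sin (2 * π * ⟪x, ξ⟫) * v x)⟩ := fun x => by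
    rw [smul_eq_mul, mul_comm]
    apply Complex.ext
    · rw [Complex.re_ofReal_mul, Complex.exp_ofReal_mul_I_re, neg_mul, neg_mul, cos_neg, mul_comm]
    · rw [Complex.im_ofReal_mul, Complex.exp_ofReal_mul_I_im, neg_mul, neg_mul, sin_neg]
      ring
  rw [Real.fourier_eq', ← integral_neg]
  constructor
  · rw [← RCLike.re_eq_complex_re, ← integral_re hint]
    exact integral_congr_ae (Eventually.of_forall fun x => by simp only [key]; rfl)
  · rw [← RCLike.im_eq_complex_im, ← integral_im hint]
    exact integral_congr_ae (Eventually.of_forall fun x => by simp only [key]; rfl)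

theorem hasDerivAt_inner_add_smul_single (x ξ : EuclideanSpace ℝ (Fin n)) (i : Fin n) :
    HasDerivAt (fun a : ℝ => 2 * π * ⟪x + a • EuclideanSpace.single i (1 : ℝ), ξ⟫)
      (2 * π * ξ i) 0 := by
  have h : (fun a : ℝ => 2 * π * ⟪x + a • EuclideanSpace.single i (1 : ℝ), ξ⟫) =
      fun a : ℝ => 2 * π * ⟪x, ξ⟫ + a * (2 * π * ξ i) := by
    ext a
    rw [inner_add_left, real_inner_smul_left, EuclideanSpace.inner_single_left]
    simp
    ring
  rw [h]
  simpa using ((hasDerivAt_id (0 : ℝ)).mul_const (2 * π * ξ i)).const_add (2 * π * ⟪x, ξ⟫)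

namespace IsDampedWave

variable {f g : EuclideanSpace ℝ (Fin n) → ℝ} {u : EuclideanSpace ℝ (Fin n) → ℝ → ℝ}
  {V : EuclideanSpace ℝ (Fin n) × ℝ → EuclideanSpace ℝ (Fin n) × ℝ →L[ℝ] ℝ}
  {W : EuclideanSpace ℝ (Fin n) × ℝ →
      EuclideanSpace ℝ (Fin n) × ℝ →L[ℝ] EuclideanSpace ℝ (Fin n) × ℝ →L[ℝ] ℝ} {R : ℝ}

theorem hasCompactSupport_u (h : IsDampedWave f g u V W) (hf : ∀ x, R < ‖x‖ → f x = 0)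
    (hg : ∀ x, R < ‖x‖ → g x = 0) {t : ℝ} (ht : 0 ≤ t) : HasCompactSupport fun x => u x t :=
  hasCompactSupport_of_eq_zero_of_lt_norm fun _ hx => h.eq_zero_of_lt_norm hf hg ht hx

theorem norm_fourier_sub_le (h : IsDampedWave f g u V W) (hf : ∀ x, R < ‖x‖ → f x = 0)
    (hg : ∀ x, R < ‖x‖ → g x = 0) {t : ℝ} (ht : 0 ≤ t) (ξ : EuclideanSpace ℝ (Fin n)) {s : ℝ}
    (hs : s = 4 * π ^ 2 * ‖ξ‖ ^ 2) :
    ‖𝓕 (fun x => (u x t : ℂ)) ξ - (exp (-s * t) : ℂ) *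
        (𝓕 (fun x => (f x : ℂ)) ξ + 𝓕 (fun x => (g x : ℂ)) ξ)‖ ≤
      16 * (‖𝓕 (fun x => (f x : ℂ)) ξ‖ + ‖𝓕 (fun x => (g x : ℂ)) ξ‖) *
        (exp (-s * t) * (s + t * s ^ 2) + exp (-(1 / 8) * t)) := by
  have hs0 : 0 ≤ s := by rw [hs]; positivity
  have hsum : ∑ i, (2 * π * ξ i) ^ 2 = s := by
    rw [hs, EuclideanSpace.norm_sq_eq, Finset.mul_sum]
    refine Finset.sum_congr rfl fun i _ => ?_
    rw [Real.norm_eq_abs, sq_abs]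
    ring
  have hfi : Integrable f := by
    have hc := h.continuous_u le_rfl
    simp only [h.init] at hc
    exact hc.integrable_of_hasCompactSupport (hasCompactSupport_of_eq_zero_of_lt_norm hf)
  have hgi : Integrable g := by
    have hc := h.continuous_V le_rfl (0, 1)
    simp only [h.init_time] at hc
    exact hc.integrable_of_hasCompactSupport (hasCompactSupport_of_eq_zero_of_lt_norm hg)
  have hui : Integrable fun x => u x t :=
    (h.continuous_u ht).integrable_of_hasCompactSupport (h.hasCompactSupport_u hf hg ht)
  have hcos := h.integral_mul_oscillator hf hg (c := fun x => cos (2 * π * ⟪x, ξ⟫))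
    (dc := fun i x => -sin (2 * π * ⟪x, ξ⟫) * (2 * π * ξ i)) (k := fun i => (2 * π * ξ i) ^ 2)
    (by fun_prop) (fun i => by fun_prop)
    (fun i x => by simpa using (hasDerivAt_inner_add_smul_single x ξ i).cos)
    (fun i x => ((hasDerivAt_inner_add_smul_single x ξ i).sin.neg.mul_const _).congr_deriv (by
      simp only [zero_smul, add_zero]; ring))
  have hsin := h.integral_mul_oscillator hf hg (c := fun x => sin (2 * π * ⟪x, ξ⟫))
    (dc := fun i x => cos (2 * π * ⟪x, ξ⟫) * (2 * π * ξ i)) (k := fun i => (2 * π * ξ i) ^ 2)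
    (by fun_prop) (fun i => by fun_prop)
    (fun i x => by simpa using (hasDerivAt_inner_add_smul_single x ξ i).sin)
    (fun i x => ((hasDerivAt_inner_add_smul_single x ξ i).cos.mul_const _).congr_deriv (by
      simp only [zero_smul, add_zero]; ring))
  rw [hsum] at hcos hsin
  have b1 := damped_oscillator_bound hs0 hcos.1 hcos.2.1 hcos.2.2.1 hcos.2.2.2 ht
  have b2 := damped_oscillator_bound hs0 hsin.1 hsin.2.1 hsin.2.2.1 hsin.2.2.2 ht
  simp only [h.init, h.init_time] at b1 b2
  rw [← (fourier_ofReal_eq hui ξ).1, ← (fourier_ofReal_eq hfi ξ).1, ← (fourier_ofReal_eq hgi ξ).1]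
    at b1
  have e : ∀ a b : ℝ, b = -a → a = -b := fun a b hab => by linarith
  rw [e _ _ (fourier_ofReal_eq hui ξ).2, e _ _ (fourier_ofReal_eq hfi ξ).2,
    e _ _ (fourier_ofReal_eq hgi ξ).2, abs_neg, abs_neg] at b2
  set F := 𝓕 (fun x => (f x : ℂ)) ξ
  set G := 𝓕 (fun x => (g x : ℂ)) ξ
  set Z := 𝓕 (fun x => (u x t : ℂ)) ξ
  set B := exp (-s * t) * (s + t * s ^ 2) + exp (-(1 / 8) * t)
  have hB : 0 ≤ B := by positivity
  refine (Complex.norm_le_abs_re_add_abs_im _).trans ?_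
  have hre : (Z - (exp (-s * t) : ℂ) * (F + G)).re = Z.re - exp (-s * t) * (F.re + G.re) := by
    rw [Complex.sub_re, Complex.re_ofReal_mul, Complex.add_re]
  have him : (Z - (exp (-s * t) : ℂ) * (F + G)).im =
      -(-Z.im - exp (-s * t) * (-F.im + -G.im)) := by
    rw [Complex.sub_im, Complex.im_ofReal_mul, Complex.add_im]
    ring
  rw [hre, him, abs_neg]
  have m1 := mul_le_mul_of_nonneg_right (add_le_add (Complex.abs_re_le_norm F)
    (Complex.abs_re_le_norm G)) hB
  have m2 := mul_le_mul_of_nonneg_right (add_le_add (Complex.abs_im_le_norm F)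
    (Complex.abs_im_le_norm G)) hB
  nlinarith [b1, b2, m1, m2]

end IsDampedWave

theorem norm_fourierInv_sub_le {e : EuclideanSpace ℝ (Fin n) → ℂ} (he : Integrable e)
    (he1 : Integrable fun ξ => ‖ξ‖ * ‖e ξ‖) (x y : EuclideanSpace ℝ (Fin n)) :
    ‖𝓕⁻ e x - 𝓕⁻ e y‖ ≤ 2 * π * ‖x - y‖ * ∫ ξ, ‖ξ‖ * ‖e ξ‖ := by
  have hint : ∀ x : EuclideanSpace ℝ (Fin n),
      Integrable fun ξ => Complex.exp (↑(2 * π * ⟪ξ, x⟫) * Complex.I) • e ξ := fun x => by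
    refine Integrable.bdd_mul (c := 1) he ?_ (Eventually.of_forall fun ξ => ?_)
    · exact Continuous.aestronglyMeasurable (by fun_prop)
    · exact (Complex.norm_exp_ofReal_mul_I _).le
  rw [Real.fourierInv_eq', Real.fourierInv_eq', ← integral_sub (hint x) (hint y),
    ← integral_const_mul]
  refine norm_integral_le_of_norm_le (he1.const_mul _) (Eventually.of_forall fun ξ => ?_)
  have h1 : Complex.exp (↑(2 * π * ⟪ξ, x⟫) * Complex.I) =
      Complex.exp (↑(2 * π * ⟪ξ, y⟫) * Complex.I) *
        Complex.exp (Complex.I * ↑(2 * π * ⟪ξ, x - y⟫)) := by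
    rw [← Complex.exp_add, inner_sub_right]
    congr 1
    push_cast
    ring
  rw [← sub_smul, norm_smul, h1, ← mul_sub_one, norm_mul, Complex.norm_exp_ofReal_mul_I, one_mul]
  have h2 := norm_exp_I_mul_ofReal_sub_one_le (x := 2 * π * ⟪ξ, x - y⟫)
  have h3 : ‖2 * π * ⟪ξ, x - y⟫‖ ≤ 2 * π * (‖ξ‖ * ‖x - y‖) := by
    rw [norm_mul, Real.norm_of_nonneg (by positivity : (0 : ℝ) ≤ 2 * π)]
    exact mul_le_mul_of_nonneg_left (norm_inner_le_norm _ _) (by positivity)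
  calc _ ≤ 2 * π * (‖ξ‖ * ‖x - y‖) * ‖e ξ‖ :=
        mul_le_mul_of_nonneg_right (h2.trans h3) (norm_nonneg _)
    _ = _ := by ring

theorem norm_fourierInv_le (e : EuclideanSpace ℝ (Fin n) → ℂ) (x : EuclideanSpace ℝ (Fin n)) :
    ‖𝓕⁻ e x‖ ≤ ∫ ξ, ‖e ξ‖ := by
  rw [Real.fourierInv_eq']
  refine (norm_integral_le_integral_norm _).trans (le_of_eq ?_)
  simp only [norm_smul, Complex.norm_exp_ofReal_mul_I, one_mul]

theorem continuous_fourier_of_integrable {e : EuclideanSpace ℝ (Fin n) → ℂ} (he : Integrable e) :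
    Continuous (𝓕 e) :=
  VectorFourier.fourierIntegral_continuous (L := innerₗ (EuclideanSpace ℝ (Fin n)))
    Real.continuous_fourierChar continuous_inner he

/-- The heat semigroup, as a Fourier multiplier and as a convolution. -/
theorem fourierInv_gaussian_mul_fourier {v : EuclideanSpace ℝ (Fin n) → ℝ} (hv : Integrable v)
    {t : ℝ} (ht : 0 < t) (x : EuclideanSpace ℝ (Fin n)) :
    𝓕⁻ (fun ξ => (exp (-(4 * π ^ 2 * ‖ξ‖ ^ 2) * t) : ℂ) * 𝓕 (fun y => (v y : ℂ)) ξ) x =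
      (((1 / (4 * π * t)) ^ ((n : ℝ) / 2) * ∫ y, exp (-‖x - y‖ ^ 2 / (4 * t)) * v y : ℝ) : ℂ) := by
  set b : ℂ := ((4 * π ^ 2 * t : ℝ) : ℂ) with hb
  have hb0 : 0 < b.re := by rw [hb, Complex.ofReal_re]; positivity
  have J : Integrable (fun w : EuclideanSpace ℝ (Fin n) =>
      Complex.exp (-b * ‖w‖ ^ 2 + 2 * π * Complex.I * ⟪x, w⟫)) :=
    GaussianFourier.integrable_cexp_neg_mul_sq_norm_add hb0 _ _
  have key := (VectorFourier.integral_fourierIntegral_smul_eq_flip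
    (L := innerₗ (EuclideanSpace ℝ (Fin n))) Real.continuous_fourierChar continuous_inner J
    (hv.ofReal (𝕜 := ℂ))).symm
  rw [Real.fourierInv_eq', ← integral_const_mul, ← integral_complex_ofReal]
  refine Eq.trans ?_ (key.trans ?_)
  · refine integral_congr_ae (Eventually.of_forall fun ξ => ?_)
    have hL : (innerₗ (EuclideanSpace ℝ (Fin n))).flip = innerₗ (EuclideanSpace ℝ (Fin n)) := by
      ext a b; simp
    change Complex.exp _ * (_ * _) = Complex.exp _ * _
    rw [hL, ← mul_assoc, Complex.ofReal_exp, ← Complex.exp_add]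
    congr 2
    rw [hb, real_inner_comm]
    push_cast
    ring
  · refine integral_congr_ae (Eventually.of_forall fun y => ?_)
    have h1 := fourier_gaussian_innerProductSpace' (V := EuclideanSpace ℝ (Fin n)) hb0 x y
    change 𝓕 (fun w : EuclideanSpace ℝ (Fin n) =>
      Complex.exp (-b * ‖w‖ ^ 2 + 2 * π * Complex.I * ⟪x, w⟫)) y * (v y : ℂ) = _
    rw [h1, finrank_euclideanSpace_fin]
    have h2 : (π : ℂ) / b = ((1 / (4 * π * t) : ℝ) : ℂ) := by
      rw [hb, ← Complex.ofReal_div]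
      congr 1
      field_simp
    have h3 : ((n : ℂ) / 2) = (((n : ℝ) / 2 : ℝ) : ℂ) := by push_cast; rfl
    have h4 : -(π : ℂ) ^ 2 * ‖x - y‖ ^ 2 / b = ((-‖x - y‖ ^ 2 / (4 * t) : ℝ) : ℂ) := by
      rw [hb, ← Complex.ofReal_pow, ← Complex.ofReal_neg, ← Complex.ofReal_pow,
        ← Complex.ofReal_mul, ← Complex.ofReal_div]
      congr 1
      field_simp
    rw [h2, h3, h4, ← Complex.ofReal_cpow (by positivity), ← Complex.ofReal_exp]
    push_cast
    ring

/-- The Fourier transform of a complexified test function is rapidly decreasing. -/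
theorem integrable_pow_mul_fourier {f : EuclideanSpace ℝ (Fin n) → ℝ} (hf : ContDiff ℝ (⊤ : ℕ∞) f)
    (hfc : HasCompactSupport f) (k : ℕ) :
    Integrable fun ξ => ‖ξ‖ ^ k * ‖𝓕 (fun x => (f x : ℂ)) ξ‖ := by
  have h1 : HasCompactSupport fun x => (f x : ℂ) := hfc.comp_left Complex.ofReal_zero
  have h2 : ContDiff ℝ (⊤ : ℕ∞) fun x => (f x : ℂ) := Complex.ofRealCLM.contDiff.comp hf
  exact (𝓕 (h1.toSchwartzMap h2)).integrable_pow_mul volume k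

/-- The normalising factor of the heat kernel. -/
def heatConst (n : ℕ) (t : ℝ) : ℝ := (1 / (4 * π * t)) ^ ((n : ℝ) / 2)

/-- The unnormalised heat evolution of `v`. -/
def heatInt (v : EuclideanSpace ℝ (Fin n) → ℝ) (t : ℝ) (x : EuclideanSpace ℝ (Fin n)) : ℝ :=
  ∫ y, exp (-‖x - y‖ ^ 2 / (4 * t)) * v y

theorem heatConst_pos {t : ℝ} (ht : 0 < t) : 0 < heatConst n t := by
  unfold heatConst; positivity

theorem exp_neg_mul_add_sq_le {σ : ℝ} (hσ : 0 ≤ σ) :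
    exp (-σ) * (σ + σ ^ 2) ≤ 10 * exp (-(σ / 2)) := by
  have h1 := Real.quadratic_le_exp_of_nonneg (show 0 ≤ σ / 2 by linarith)
  have h2 : σ + σ ^ 2 ≤ 10 * exp (σ / 2) := by nlinarith [sq_nonneg σ]
  calc exp (-σ) * (σ + σ ^ 2) ≤ exp (-σ) * (10 * exp (σ / 2)) :=
        mul_le_mul_of_nonneg_left h2 (exp_pos _).le
    _ = 10 * (exp (-σ) * exp (σ / 2)) := by ring
    _ = 10 * exp (-(σ / 2)) := by rw [← exp_add]; congr 2; ring

theorem exp_neg_mul_symbol_le {a t : ℝ} (ht : 0 < t) :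
    exp (-(4 * π ^ 2 * a ^ 2) * t) *
        (4 * π ^ 2 * a ^ 2 + t * (4 * π ^ 2 * a ^ 2) ^ 2) ≤
      10 / t * exp (-(2 * π ^ 2 * t * a ^ 2)) := by
  have h := exp_neg_mul_add_sq_le (σ := 4 * π ^ 2 * a ^ 2 * t) (by positivity)
  rw [show -(4 * π ^ 2 * a ^ 2 * t / 2) = -(2 * π ^ 2 * t * a ^ 2) by ring,
    ← neg_mul] at h
  calc _ = exp (-(4 * π ^ 2 * a ^ 2) * t) *
        (4 * π ^ 2 * a ^ 2 * t + (4 * π ^ 2 * a ^ 2 * t) ^ 2) / t := by field_simp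
    _ ≤ 10 * exp (-(2 * π ^ 2 * t * a ^ 2)) / t := by gcongr
    _ = _ := by ring

theorem mul_exp_neg_le {a t : ℝ} (ht : 0 < t) :
    a * exp (-(2 * π ^ 2 * t * a ^ 2)) ≤ 1 / √t * exp (-(π ^ 2 * t) * a ^ 2) := by
  have hs : 0 < √t := sqrt_pos.2 ht
  have h1 : √t * a ≤ exp (π ^ 2 * t * a ^ 2) := by
    have hp : 1 ≤ π ^ 2 := by nlinarith [pi_gt_three]
    have hsq : (√t * a) ^ 2 = t * a ^ 2 := by rw [mul_pow, sq_sqrt ht.le]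
    have h3 : t * a ^ 2 ≤ π ^ 2 * t * a ^ 2 := by
      have := mul_le_mul_of_nonneg_right hp (show 0 ≤ t * a ^ 2 by positivity)
      linarith
    nlinarith [add_one_le_exp (π ^ 2 * t * a ^ 2), sq_nonneg (√t * a - 1)]
  have h2 : exp (-(2 * π ^ 2 * t * a ^ 2)) =
      exp (-(π ^ 2 * t) * a ^ 2) * exp (-(π ^ 2 * t * a ^ 2)) := by
    rw [← exp_add]; congr 1; ring
  have h3 : √t * a * exp (-(π ^ 2 * t * a ^ 2)) ≤ 1 := by
    rw [exp_neg, ← div_eq_mul_inv, div_le_one (exp_pos _)]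
    exact h1
  rw [h2, div_mul_eq_mul_div, one_mul, le_div_iff₀ hs]
  calc _ = exp (-(π ^ 2 * t) * a ^ 2) * (√t * a * exp (-(π ^ 2 * t * a ^ 2))) := by ring
    _ ≤ exp (-(π ^ 2 * t) * a ^ 2) * 1 := by gcongr
    _ = _ := mul_one _

theorem integral_exp_neg_pi_sq {t : ℝ} (ht : 0 < t) :
    ∫ ξ : EuclideanSpace ℝ (Fin n), exp (-(π ^ 2 * t) * ‖ξ‖ ^ 2) =
      4 ^ ((n : ℝ) / 2) * heatConst n t := by
  rw [GaussianFourier.integral_rexp_neg_mul_sq_norm (by positivity), finrank_euclideanSpace_fin,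
    heatConst, ← mul_rpow (by norm_num) (by positivity)]
  congr 1
  field_simp

theorem integrable_exp_neg_pi_sq {t : ℝ} (ht : 0 < t) :
    Integrable fun ξ : EuclideanSpace ℝ (Fin n) => exp (-(π ^ 2 * t) * ‖ξ‖ ^ 2) := by
  refine Integrable.of_integral_ne_zero ?_
  rw [integral_exp_neg_pi_sq ht]
  have := heatConst_pos (n := n) ht
  positivity

theorem exp_neg_eq_heatConst_mul {t : ℝ} (ht : 0 < t) :
    exp (-(1 / 8) * t) =
      heatConst n t * ((4 * π) ^ ((n : ℝ) / 2) * (t ^ ((n : ℝ) / 2) * exp (-(1 / 8) * t))) := by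
  have h : heatConst n t * ((4 * π) ^ ((n : ℝ) / 2) * t ^ ((n : ℝ) / 2)) = 1 := by
    rw [heatConst, ← mul_rpow (by positivity) ht.le, ← mul_rpow (by positivity) (by positivity),
      one_div_mul_cancel (by positivity), one_rpow]
  rw [← mul_assoc, ← mul_assoc, mul_assoc (heatConst n t), h, one_mul]

/-- The relative error between a damped wave and the heat flow of `f + g`. -/
def heatError (n : ℕ) (C t : ℝ) : ℝ :=
  C * (1 / √t + t ^ ((n : ℝ) / 2 + 1) * exp (-(1 / 8) * t))

theorem tendsto_heatError (n : ℕ) (C : ℝ) : Tendsto (heatError n C) atTop (𝓝 0) := by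
  have h1 : Tendsto (fun t : ℝ => 1 / √t) atTop (𝓝 0) := by
    simp only [one_div]
    exact tendsto_inv_atTop_zero.comp tendsto_sqrt_atTop
  have h2 := tendsto_rpow_mul_exp_neg_mul_atTop_nhds_zero ((n : ℝ) / 2 + 1) (1 / 8) (by norm_num)
  have h3 := (h1.add h2).const_mul C
  rw [add_zero, mul_zero] at h3
  exact h3

theorem heatConst_mul_add_exp_le {a b C t : ℝ} (ha : 0 ≤ a) (hb : 0 ≤ b) (ht : 1 ≤ t)
    (hC : a + b * (4 * π) ^ ((n : ℝ) / 2) ≤ C) :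
    a / √t * heatConst n t + b * t * exp (-(1 / 8) * t) ≤ heatConst n t * heatError n C t := by
  have ht0 : 0 < t := by linarith
  have hP := heatConst_pos (n := n) ht0
  have e1 : t ^ ((n : ℝ) / 2 + 1) = t ^ ((n : ℝ) / 2) * t := by
    rw [rpow_add ht0, rpow_one]
  have hq : 0 ≤ (4 * π) ^ ((n : ℝ) / 2) := by positivity
  have hbq : 0 ≤ b * (4 * π) ^ ((n : ℝ) / 2) := by positivity
  calc a / √t * heatConst n t + b * t * exp (-(1 / 8) * t)
      = heatConst n t * (a * (1 / √t) + b * (4 * π) ^ ((n : ℝ) / 2) *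
          (t ^ ((n : ℝ) / 2 + 1) * exp (-(1 / 8) * t))) := by
        conv_lhs => rw [exp_neg_eq_heatConst_mul (n := n) ht0]
        rw [e1]; ring
    _ ≤ heatConst n t * (C * (1 / √t) + C * (t ^ ((n : ℝ) / 2 + 1) * exp (-(1 / 8) * t))) := by
        gcongr <;> linarith
    _ = _ := by rw [heatError]; ring

namespace IsDampedWave

variable {f g : EuclideanSpace ℝ (Fin n) → ℝ} {u : EuclideanSpace ℝ (Fin n) → ℝ → ℝ}
  {V : EuclideanSpace ℝ (Fin n) × ℝ → EuclideanSpace ℝ (Fin n) × ℝ →L[ℝ] ℝ}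
  {W : EuclideanSpace ℝ (Fin n) × ℝ →
      EuclideanSpace ℝ (Fin n) × ℝ →L[ℝ] EuclideanSpace ℝ (Fin n) × ℝ →L[ℝ] ℝ} {R : ℝ}

/-- The diffusion phenomenon: a damped wave is asymptotic to the heat flow of `f + g`, uniformly
and in the Lipschitz sense. -/
theorem exists_heat_approx (h : IsDampedWave f g u V W) (hf : ContDiff ℝ (⊤ : ℕ∞) f)
    (hg : ContDiff ℝ (⊤ : ℕ∞) g) (hfR : ∀ x, R < ‖x‖ → f x = 0) (hgR : ∀ x, R < ‖x‖ → g x = 0) :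
    ∃ C, ∀ t ≥ 1,
      (∀ x, |u x t - heatConst n t * heatInt (f + g) t x| ≤ heatConst n t * heatError n C t) ∧
      ∀ x y, |(u x t - heatConst n t * heatInt (f + g) t x) -
          (u y t - heatConst n t * heatInt (f + g) t y)| ≤
        heatConst n t / t * heatError n C t * ‖x - y‖ := by
  have hfc := hasCompactSupport_of_eq_zero_of_lt_norm hfR
  have hgc := hasCompactSupport_of_eq_zero_of_lt_norm hgR
  have hfi : Integrable f := hf.continuous.integrable_of_hasCompactSupport hfc
  have hgi : Integrable g := hg.continuous.integrable_of_hasCompactSupport hgc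
  set F := 𝓕 (fun x => (f x : ℂ)) with hF
  set G := 𝓕 (fun x => (g x : ℂ)) with hG
  set A : EuclideanSpace ℝ (Fin n) → ℝ := fun ξ => ‖F ξ‖ + ‖G ξ‖ with hA
  have hA0 : ∀ ξ, 0 ≤ A ξ := fun ξ => by positivity
  have hFc : Continuous F := continuous_fourier_of_integrable hfi.ofReal
  have hGc : Continuous G := continuous_fourier_of_integrable hgi.ofReal
  obtain ⟨C0, hC00, hC0⟩ : ∃ C0, 0 ≤ C0 ∧ ∀ ξ, A ξ ≤ C0 :=
    ⟨(∫ x, ‖(f x : ℂ)‖) + ∫ x, ‖(g x : ℂ)‖, by positivity, fun ξ =>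
      add_le_add (VectorFourier.norm_fourierIntegral_le_integral_norm _ _ _ _ _)
        (VectorFourier.norm_fourierIntegral_le_integral_norm _ _ _ _ _)⟩
  have hAi : Integrable A := by
    refine ((integrable_pow_mul_fourier hf hfc 0).add
      (integrable_pow_mul_fourier hg hgc 0)).congr (Eventually.of_forall fun ξ => ?_)
    change ‖ξ‖ ^ 0 * ‖F ξ‖ + ‖ξ‖ ^ 0 * ‖G ξ‖ = ‖F ξ‖ + ‖G ξ‖
    ring
  have hAi1 : Integrable fun ξ => ‖ξ‖ * A ξ := by
    refine ((integrable_pow_mul_fourier hf hfc 1).add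
      (integrable_pow_mul_fourier hg hgc 1)).congr (Eventually.of_forall fun ξ => ?_)
    change ‖ξ‖ ^ 1 * ‖F ξ‖ + ‖ξ‖ ^ 1 * ‖G ξ‖ = ‖ξ‖ * (‖F ξ‖ + ‖G ξ‖)
    ring
  set I := (∫ ξ, A ξ) + ∫ ξ, ‖ξ‖ * A ξ with hI
  have hI0 : 0 ≤ ∫ ξ, A ξ := integral_nonneg hA0
  have hI1 : 0 ≤ ∫ ξ, ‖ξ‖ * A ξ := integral_nonneg fun ξ => mul_nonneg (norm_nonneg _) (hA0 ξ)
  set a := 160 * C0 * 4 ^ ((n : ℝ) / 2) with ha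
  set b := 16 * I with hb
  have ha0 : 0 ≤ a := by positivity
  have hb0 : 0 ≤ b := by positivity
  have hab : 0 ≤ a + b * (4 * π) ^ ((n : ℝ) / 2) := by positivity
  refine ⟨2 * π * a + 2 * π * b * (4 * π) ^ ((n : ℝ) / 2), fun t ht => ?_⟩
  have ht0 : 0 < t := by linarith
  have hst : 0 < √t := sqrt_pos.2 ht0
  have hst1 : √t ≤ t := by
    rw [sqrt_le_left ht0.le]; nlinarith
  have hP := heatConst_pos (n := n) ht0
  have hui : Integrable fun x => u x t :=
    (h.continuous_u ht0.le).integrable_of_hasCompactSupport (h.hasCompactSupport_u hfR hgR ht0.le)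
  set Z := 𝓕 (fun x => (u x t : ℂ)) with hZ
  set m : EuclideanSpace ℝ (Fin n) → ℝ := fun ξ => exp (-(4 * π ^ 2 * ‖ξ‖ ^ 2) * t) with hm
  set e : EuclideanSpace ℝ (Fin n) → ℂ := fun ξ => Z ξ - (m ξ : ℂ) * (F ξ + G ξ) with he
  have hZc : Continuous Z := continuous_fourier_of_integrable hui.ofReal
  have hec : Continuous e := by fun_prop
  set γ : EuclideanSpace ℝ (Fin n) → ℝ := fun ξ => exp (-(π ^ 2 * t) * ‖ξ‖ ^ 2) with hγ
  have hγi : Integrable γ := integrable_exp_neg_pi_sq ht0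
  have hγ0 : ∀ ξ, 0 ≤ γ ξ := fun ξ => (exp_pos _).le
  have hebound : ∀ ξ, ‖e ξ‖ ≤ 16 * A ξ *
      (10 / t * exp (-(2 * π ^ 2 * t * ‖ξ‖ ^ 2)) + exp (-(1 / 8) * t)) := fun ξ => by
    refine (h.norm_fourier_sub_le hfR hgR ht0.le ξ rfl).trans ?_
    have := exp_neg_mul_symbol_le (a := ‖ξ‖) ht0
    exact mul_le_mul_of_nonneg_left (by linarith) (mul_nonneg (by norm_num) (hA0 ξ))
  have he0 : ∀ ξ, ‖e ξ‖ ≤ 160 * C0 / √t * γ ξ + 16 * exp (-(1 / 8) * t) * A ξ := fun ξ => by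
    have h1 : 10 / t * exp (-(2 * π ^ 2 * t * ‖ξ‖ ^ 2)) ≤ 10 / √t * γ ξ := by
      have h2 : exp (-(2 * π ^ 2 * t * ‖ξ‖ ^ 2)) ≤ γ ξ := by
        refine exp_le_exp.2 ?_
        have : 0 ≤ π ^ 2 * t * ‖ξ‖ ^ 2 := by positivity
        linarith
      gcongr
    have h3 : 0 ≤ 10 / √t * γ ξ := mul_nonneg (by positivity) (hγ0 ξ)
    have h4 := mul_le_mul_of_nonneg_right (hC0 ξ) h3
    have h5 := mul_le_mul_of_nonneg_left h1 (hA0 ξ)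
    calc _ ≤ _ := hebound ξ
      _ = 16 * (A ξ * (10 / t * exp (-(2 * π ^ 2 * t * ‖ξ‖ ^ 2)))) +
          16 * exp (-(1 / 8) * t) * A ξ := by ring
      _ ≤ 16 * (C0 * (10 / √t * γ ξ)) + 16 * exp (-(1 / 8) * t) * A ξ := by linarith
      _ = _ := by ring
  have he1 : ∀ ξ, ‖ξ‖ * ‖e ξ‖ ≤
      (160 * C0 / √t * γ ξ + 16 * t * exp (-(1 / 8) * t) * (‖ξ‖ * A ξ)) / t := fun ξ => by
    have h1 := mul_exp_neg_le (a := ‖ξ‖) ht0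
    have h3 : 0 ≤ 1 / √t * γ ξ := mul_nonneg (by positivity) (hγ0 ξ)
    have h4 := mul_le_mul_of_nonneg_right (hC0 ξ) h3
    have h5 := mul_le_mul_of_nonneg_left h1 (hA0 ξ)
    rw [le_div_iff₀ ht0]
    calc ‖ξ‖ * ‖e ξ‖ * t ≤ ‖ξ‖ * (16 * A ξ *
          (10 / t * exp (-(2 * π ^ 2 * t * ‖ξ‖ ^ 2)) + exp (-(1 / 8) * t))) * t := by
          gcongr; exact hebound ξ
      _ = 160 * (A ξ * (‖ξ‖ * exp (-(2 * π ^ 2 * t * ‖ξ‖ ^ 2)))) +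
          16 * t * exp (-(1 / 8) * t) * (‖ξ‖ * A ξ) := by field_simp; ring
      _ ≤ 160 * (C0 * (1 / √t * γ ξ)) + 16 * t * exp (-(1 / 8) * t) * (‖ξ‖ * A ξ) := by linarith
      _ = _ := by ring
  have hd0 : Integrable fun ξ => 160 * C0 / √t * γ ξ + 16 * exp (-(1 / 8) * t) * A ξ :=
    (hγi.const_mul _).add (hAi.const_mul _)
  have hd1 : Integrable fun ξ =>
      (160 * C0 / √t * γ ξ + 16 * t * exp (-(1 / 8) * t) * (‖ξ‖ * A ξ)) / t :=
    ((hγi.const_mul _).add (hAi1.const_mul _)).div_const t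
  have hei : Integrable e := hd0.mono' hec.aestronglyMeasurable (Eventually.of_forall he0)
  have hei1 : Integrable fun ξ => ‖ξ‖ * ‖e ξ‖ := by
    refine hd1.mono' (by fun_prop) (Eventually.of_forall fun ξ => ?_)
    rw [Real.norm_of_nonneg (by positivity)]
    exact he1 ξ
  have hE := exp_pos (-(1 / 8) * t)
  have hi0 : ∫ ξ, ‖e ξ‖ ≤ a / √t * heatConst n t + b * t * exp (-(1 / 8) * t) := by
    refine (integral_mono hei.norm hd0 he0).trans ?_
    rw [integral_add (hγi.const_mul _) (hAi.const_mul _), integral_const_mul, integral_const_mul,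
      hγ, integral_exp_neg_pi_sq ht0]
    have h1 : 16 * exp (-(1 / 8) * t) * ∫ ξ, A ξ ≤ b * t * exp (-(1 / 8) * t) := by
      calc _ = (∫ ξ, A ξ) * 1 * (16 * exp (-(1 / 8) * t)) := by ring
        _ ≤ I * t * (16 * exp (-(1 / 8) * t)) := by gcongr; linarith
        _ = _ := by ring
    refine (add_le_add_right h1 _).trans (le_of_eq ?_)
    ring
  have hi1 : ∫ ξ, ‖ξ‖ * ‖e ξ‖ ≤
      (a / √t * heatConst n t + b * t * exp (-(1 / 8) * t)) / t := by
    refine (integral_mono hei1 hd1 he1).trans ?_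
    rw [integral_div, integral_add (hγi.const_mul _) (hAi1.const_mul _), integral_const_mul,
      integral_const_mul, hγ, integral_exp_neg_pi_sq ht0]
    refine (div_le_div_iff_of_pos_right ht0).2 ?_
    have h1 : 16 * t * exp (-(1 / 8) * t) * ∫ ξ, ‖ξ‖ * A ξ ≤ b * t * exp (-(1 / 8) * t) := by
      calc _ = (∫ ξ, ‖ξ‖ * A ξ) * (16 * t * exp (-(1 / 8) * t)) := by ring
        _ ≤ I * (16 * t * exp (-(1 / 8) * t)) := by gcongr; linarith
        _ = _ := by ring
    refine (add_le_add_right h1 _).trans (le_of_eq ?_)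
    ring
  have hmi : Integrable fun ξ => (m ξ : ℂ) * (F ξ + G ξ) := by
    refine hAi.mono' (by fun_prop) (Eventually.of_forall fun ξ => ?_)
    rw [norm_mul, Complex.norm_real, Real.norm_of_nonneg (exp_pos _).le]
    have h1 : m ξ ≤ 1 := exp_le_one_iff.2 (by
      have : 0 ≤ 4 * π ^ 2 * ‖ξ‖ ^ 2 * t := by positivity
      linarith)
    calc _ ≤ 1 * (‖F ξ‖ + ‖G ξ‖) := by gcongr; exact norm_add_le _ _
      _ = _ := one_mul _
  have hZi : Integrable Z :=
    (hei.add hmi).congr (Eventually.of_forall fun ξ => sub_add_cancel _ _)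
  have hFG : ∀ ξ, F ξ + G ξ = 𝓕 (fun x => (((f + g) x : ℝ) : ℂ)) ξ := fun ξ => by
    have h1 : (fun x => (((f + g) x : ℝ) : ℂ)) = (fun x => (f x : ℂ)) + fun x => (g x : ℂ) := by
      ext x; simp
    rw [h1]
    exact (congrFun (VectorFourier.fourierIntegral_add
      (L := innerₗ (EuclideanSpace ℝ (Fin n))) Real.continuous_fourierChar continuous_inner
      (hfi.ofReal (𝕜 := ℂ)) (hgi.ofReal (𝕜 := ℂ))) ξ).symm
  have hrep : ∀ x, ((u x t - heatConst n t * heatInt (f + g) t x : ℝ) : ℂ) = 𝓕⁻ e x := fun x => by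
    have h1 : 𝓕⁻ Z x = (u x t : ℂ) :=
      congrFun (Continuous.fourierInv_fourier_eq
        (Complex.continuous_ofReal.comp (h.continuous_u ht0.le)) hui.ofReal hZi) x
    have h2 := fourierInv_gaussian_mul_fourier (hfi.add hgi) ht0 x
    simp only [← hFG] at h2
    change _ = ((heatConst n t * heatInt (f + g) t x : ℝ) : ℂ) at h2
    rw [Complex.ofReal_sub, ← h1, ← h2, Real.fourierInv_eq', Real.fourierInv_eq',
      Real.fourierInv_eq', ← integral_sub]
    · refine integral_congr_ae (Eventually.of_forall fun ξ => ?_)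
      change _ • _ - _ • _ = _ • (_ - _)
      rw [smul_sub]
    · refine Integrable.bdd_mul (c := 1) hZi ?_ (Eventually.of_forall fun ξ => ?_)
      · exact Continuous.aestronglyMeasurable (by fun_prop)
      · exact (Complex.norm_exp_ofReal_mul_I _).le
    · refine Integrable.bdd_mul (c := 1) hmi ?_ (Eventually.of_forall fun ξ => ?_)
      · exact Continuous.aestronglyMeasurable (by fun_prop)
      · exact (Complex.norm_exp_ofReal_mul_I _).le
  constructor
  · intro x
    rw [← Real.norm_eq_abs, ← Complex.norm_real, hrep]
    refine (norm_fourierInv_le e x).trans (hi0.trans (heatConst_mul_add_exp_le ha0 hb0 ht ?_))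
    nlinarith [pi_gt_three]
  · intro x y
    rw [← Real.norm_eq_abs, ← Complex.norm_real, Complex.ofReal_sub, hrep, hrep]
    refine (norm_fourierInv_sub_le hei hei1 x y).trans ?_
    have h1 := heatConst_mul_add_exp_le (n := n) (a := 2 * π * a) (b := 2 * π * b) (by positivity)
      (by positivity) ht le_rfl
    calc _ ≤ 2 * π * ‖x - y‖ * ((a / √t * heatConst n t + b * t * exp (-(1 / 8) * t)) / t) := by
          gcongr
      _ = (2 * π * a / √t * heatConst n t + 2 * π * b * t * exp (-(1 / 8) * t)) / t * ‖x - y‖ := by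
          ring
      _ ≤ (heatConst n t * heatError n (2 * π * a + 2 * π * b * (4 * π) ^ ((n : ℝ) / 2)) t) / t *
          ‖x - y‖ := by gcongr
      _ = _ := by ring

end IsDampedWave

theorem Convex.exists_unit_normal {A : Set (EuclideanSpace ℝ (Fin n))} (hA : Convex ℝ A)
    (hAi : (interior A).Nonempty) {x : EuclideanSpace ℝ (Fin n)} (hx : x ∉ A) :
    ∃ ν : EuclideanSpace ℝ (Fin n), ‖ν‖ = 1 ∧ ∀ a ∈ A, 0 ≤ ⟪x - a, ν⟫ := by
  obtain ⟨l, hl, hle⟩ := geometric_hahn_banach_of_nonempty_interior_point hA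
    (fun h => hx (interior_subset h)) hAi
  set w := (InnerProductSpace.toDual ℝ (EuclideanSpace ℝ (Fin n))).symm l with hw
  have hw0 : w ≠ 0 := by simpa [hw] using hl
  refine ⟨‖w‖⁻¹ • w, norm_smul_inv_norm hw0, fun a ha => ?_⟩
  rw [real_inner_smul_right, real_inner_comm, hw, InnerProductSpace.toDual_symm_apply, map_sub]
  exact mul_nonneg (by positivity) (sub_nonneg.2 (hle a ha))

theorem exists_pos_le_integral_inner_mul {v : EuclideanSpace ℝ (Fin n) → ℝ} (hv : Continuous v)
    (hvc : HasCompactSupport v) (hv0 : ∀ x, 0 ≤ v x) (hne : v ≠ 0) :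
    ∃ c > 0, ∀ x ν : EuclideanSpace ℝ (Fin n), ‖ν‖ = 1 → (∀ y ∈ tsupport v, 0 ≤ ⟪x - y, ν⟫) →
      c ≤ ∫ y, ⟪x - y, ν⟫ * v y := by
  obtain ⟨y₀, hy₀⟩ := Function.ne_iff.1 hne
  have hpos : 0 < v y₀ := lt_of_le_of_ne (hv0 y₀) (Ne.symm hy₀)
  obtain ⟨δ, hδ, hball⟩ := Metric.isOpen_iff.1 (isOpen_lt continuous_const hv) y₀
    (show v y₀ / 2 < v y₀ by linarith)
  refine ⟨δ / 2 * (v y₀ / 2) * volume.real (ball y₀ (δ / 2)), ?_, fun x ν hν hx => ?_⟩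
  · have := ENNReal.toReal_pos (measure_ball_pos volume y₀ (half_pos hδ)).ne' measure_ball_lt_top.ne
    have h1 : 0 < volume.real (ball y₀ (δ / 2)) := this
    positivity
  · have hint : Integrable fun y => ⟪x - y, ν⟫ * v y :=
      Continuous.integrable_of_hasCompactSupport (by fun_prop) hvc.mul_left
    have h0 : ∀ y, 0 ≤ ⟪x - y, ν⟫ * v y := fun y => by
      by_cases hy : y ∈ tsupport v
      · exact mul_nonneg (hx y hy) (hv0 y)
      · simp [image_eq_zero_of_notMem_tsupport hy]
    refine le_trans ?_ (setIntegral_le_integral (s := ball y₀ (δ / 2)) hint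
      (Eventually.of_forall h0))
    refine setIntegral_ge_of_const_le_real measurableSet_ball measure_ball_lt_top.ne (fun y hy => ?_)
      hint.integrableOn
    have hy1 : y ∈ ball y₀ δ := ball_subset_ball (by linarith) hy
    have hy2 : y + (δ / 2) • ν ∈ ball y₀ δ := by
      rw [mem_ball, dist_eq_norm] at hy ⊢
      calc ‖y + (δ / 2) • ν - y₀‖ = ‖(y - y₀) + (δ / 2) • ν‖ := by congr 1; abel
        _ ≤ ‖y - y₀‖ + ‖(δ / 2) • ν‖ := norm_add_le _ _
        _ < δ := by
          rw [norm_smul, hν, Real.norm_of_nonneg (by positivity)]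
          linarith
    have h1 : v y₀ / 2 < v y := hball hy1
    have h2 : v y₀ / 2 < v (y + (δ / 2) • ν) := hball hy2
    have h3 := hx _ (subset_tsupport v (Function.mem_support.2 (by linarith :
      0 < v (y + (δ / 2) • ν)).ne'))
    rw [← sub_sub, inner_sub_left, real_inner_smul_left, real_inner_self_eq_norm_sq, hν] at h3
    have h4 : δ / 2 ≤ ⟪x - y, ν⟫ := by linarith
    exact mul_le_mul h4 h1.le (by positivity) (by linarith)

theorem integrable_heatInt {v : EuclideanSpace ℝ (Fin n) → ℝ} (hv : Continuous v)
    (hvc : HasCompactSupport v) (t : ℝ) (x : EuclideanSpace ℝ (Fin n)) :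
    Integrable fun y => exp (-‖x - y‖ ^ 2 / (4 * t)) * v y :=
  Continuous.integrable_of_hasCompactSupport (by fun_prop) hvc.mul_left

theorem heatInt_le {v : EuclideanSpace ℝ (Fin n) → ℝ} (hv : Continuous v)
    (hvc : HasCompactSupport v) (hv0 : ∀ x, 0 ≤ v x) {t M : ℝ} {x : EuclideanSpace ℝ (Fin n)}
    (hM : ∀ y ∈ tsupport v, M ≤ ‖x - y‖ ^ 2 / (4 * t)) :
    heatInt v t x ≤ exp (-M) * ∫ y, v y := by
  rw [heatInt, ← integral_const_mul]
  refine integral_mono (integrable_heatInt hv hvc t x)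
    ((hv.integrable_of_hasCompactSupport hvc).const_mul _) fun y => ?_
  by_cases hy : y ∈ tsupport v
  · refine mul_le_mul_of_nonneg_right (exp_le_exp.2 ?_) (hv0 y)
    rw [neg_div]
    linarith [hM y hy]
  · simp [image_eq_zero_of_notMem_tsupport hy]

theorem le_heatInt {v : EuclideanSpace ℝ (Fin n) → ℝ} (hv : Continuous v)
    (hvc : HasCompactSupport v) (hv0 : ∀ x, 0 ≤ v x) {t M : ℝ} {x : EuclideanSpace ℝ (Fin n)}
    (hM : ∀ y ∈ tsupport v, ‖x - y‖ ^ 2 / (4 * t) ≤ M) :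
    exp (-M) * ∫ y, v y ≤ heatInt v t x := by
  rw [heatInt, ← integral_const_mul]
  refine integral_mono ((hv.integrable_of_hasCompactSupport hvc).const_mul _)
    (integrable_heatInt hv hvc t x) fun y => ?_
  by_cases hy : y ∈ tsupport v
  · refine mul_le_mul_of_nonneg_right (exp_le_exp.2 ?_) (hv0 y)
    rw [neg_div]
    linarith [hM y hy]
  · simp [image_eq_zero_of_notMem_tsupport hy]

/-- Moving towards the support increases the heat evolution. -/
theorem le_heatInt_sub_heatInt {v : EuclideanSpace ℝ (Fin n) → ℝ} (hv : Continuous v)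
    (hvc : HasCompactSupport v) (hv0 : ∀ x, 0 ≤ v x) {t M ρ : ℝ} (ht : 0 < t) (hρ : 0 ≤ ρ)
    {x ν : EuclideanSpace ℝ (Fin n)} (hν : ‖ν‖ = 1) (hx : ∀ y ∈ tsupport v, 0 ≤ ⟪x - y, ν⟫)
    (hM : ∀ y ∈ tsupport v, ‖x - y‖ ^ 2 / (4 * t) ≤ M) :
    (2 * ρ * exp (-M) * (∫ y, ⟪x - y, ν⟫ * v y) - ρ ^ 2 * ∫ y, v y) / (4 * t) ≤
      heatInt v t (x - ρ • ν) - heatInt v t x := by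
  have hi1 : Integrable fun y => ⟪x - y, ν⟫ * v y :=
    Continuous.integrable_of_hasCompactSupport (by fun_prop) hvc.mul_left
  have hi2 := hv.integrable_of_hasCompactSupport (μ := volume) hvc
  rw [heatInt, heatInt, ← integral_sub (integrable_heatInt hv hvc t _)
    (integrable_heatInt hv hvc t _), ← integral_const_mul, ← integral_const_mul,
    ← integral_sub (hi1.const_mul _) (hi2.const_mul _), ← integral_div]
  refine integral_mono (((hi1.const_mul _).sub (hi2.const_mul _)).div_const _)
    ((integrable_heatInt hv hvc t _).sub (integrable_heatInt hv hvc t _)) fun y => ?_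
  by_cases hy : y ∈ tsupport v
  · have hsq : ‖x - ρ • ν - y‖ ^ 2 = ‖x - y‖ ^ 2 - (2 * ρ * ⟪x - y, ν⟫ - ρ ^ 2) := by
      rw [show x - ρ • ν - y = (x - y) - ρ • ν by abel, norm_sub_sq_real, real_inner_smul_right,
        norm_smul, hν, mul_one, Real.norm_eq_abs, sq_abs]
      ring
    set p := ⟪x - y, ν⟫ with hp
    have hp0 : 0 ≤ p := hx y hy
    set a := ‖x - y‖ ^ 2 / (4 * t) with ha
    set d := (2 * ρ * p - ρ ^ 2) / (4 * t) with hd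
    have e1 : -‖x - ρ • ν - y‖ ^ 2 / (4 * t) = -a + d := by rw [hsq, ha, hd]; ring
    have e2 : -‖x - y‖ ^ 2 / (4 * t) = -a := by rw [ha]; ring
    have ha0 : 0 ≤ a := by positivity
    have h1 : exp (-M) ≤ exp (-a) := exp_le_exp.2 (neg_le_neg (hM y hy))
    have h2 : exp (-a) ≤ 1 := exp_le_one_iff.2 (by linarith)
    have h3 : exp (-a) * d ≤ exp (-a + d) - exp (-a) := by
      rw [exp_add]
      nlinarith [mul_le_mul_of_nonneg_left (add_one_le_exp d) (exp_pos (-a)).le]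
    have h4 : (2 * ρ * exp (-M) * p - ρ ^ 2) / (4 * t) ≤ exp (-a) * d := by
      rw [hd, ← mul_div_assoc]
      refine (div_le_div_iff_of_pos_right (by positivity)).2 ?_
      have h5 := mul_le_mul_of_nonneg_right h1 (show 0 ≤ 2 * ρ * p by positivity)
      have h6 := mul_le_mul_of_nonneg_right h2 (sq_nonneg ρ)
      linarith
    change (2 * ρ * exp (-M) * (p * v y) - ρ ^ 2 * v y) / (4 * t) ≤
      exp (-‖x - ρ • ν - y‖ ^ 2 / (4 * t)) * v y - exp (-‖x - y‖ ^ 2 / (4 * t)) * v y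
    rw [e1, e2, ← sub_mul]
    calc _ = (2 * ρ * exp (-M) * p - ρ ^ 2) / (4 * t) * v y := by ring
      _ ≤ _ := mul_le_mul_of_nonneg_right (h4.trans h3) (hv0 y)
  · simp [image_eq_zero_of_notMem_tsupport hy]

/-- Away from the support of `v` the maximum of a small perturbation of the heat evolution is not
attained. -/
theorem eventually_exists_lt_of_heat_approx {v : EuclideanSpace ℝ (Fin n) → ℝ} (hv : Continuous v)
    (hvc : HasCompactSupport v) (hv0 : ∀ x, 0 ≤ v x) (hne : v ≠ 0)
    {u : EuclideanSpace ℝ (Fin n) → ℝ → ℝ} {C : ℝ}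
    (h0 : ∀ t ≥ 1, ∀ x, |u x t - heatConst n t * heatInt v t x| ≤ heatConst n t * heatError n C t)
    (h1 : ∀ t ≥ 1, ∀ x y, |(u x t - heatConst n t * heatInt v t x) -
        (u y t - heatConst n t * heatInt v t y)| ≤
      heatConst n t / t * heatError n C t * ‖x - y‖) :
    ∀ᶠ t in atTop, ∀ x ∉ CS v, ∃ z, u x t < u z t := by
  obtain ⟨R, hR0, hR⟩ : ∃ R, 0 ≤ R ∧ ∀ y ∈ tsupport v, ‖y‖ ≤ R := by
    obtain ⟨R, hR⟩ := hvc.isCompact.isBounded.exists_norm_le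
    exact ⟨max R 0, le_max_right _ _, fun y hy => (hR y hy).trans (le_max_left _ _)⟩
  obtain ⟨c, hc, hcle⟩ := exists_pos_le_integral_inner_mul hv hvc hv0 hne
  obtain ⟨y₀, hy₀⟩ := Function.ne_iff.1 hne
  have hI : 0 < ∫ y, v y := by
    refine hv.integral_pos_of_hasCompactSupport_nonneg_nonzero hvc hv0 hy₀
  have hint : (interior (CS v)).Nonempty :=
    ⟨y₀, interior_maximal ((subset_tsupport v).trans (subset_convexHull ℝ _))
      (hv.isOpen_support) hy₀⟩
  set I := ∫ y, v y with hIdef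
  set ρ := exp (-4) * c / I with hρ
  have hρ0 : 0 < ρ := by positivity
  have hρI : ρ * I = exp (-4) * c := by rw [hρ]; field_simp
  have hE := tendsto_heatError n C
  filter_upwards [eventually_ge_atTop 1, eventually_ge_atTop (R ^ 2),
    hE.eventually_lt_const (show 0 < I / 8 by positivity),
    hE.eventually_lt_const (show 0 < exp (-4) * c / 4 by positivity)] with t ht1 htR hε1 hε2 x hx
  have ht0 : 0 < t := by linarith
  have hP := heatConst_pos (n := n) ht0
  have hs0 : 0 < √t := sqrt_pos.2 ht0
  have hsq : √t ^ 2 = t := sq_sqrt ht0.le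
  have hsR : R ≤ √t := Real.le_sqrt_of_sq_le htR
  rcases le_or_gt ‖x‖ (2 * √t + R) with hxn | hxn
  · obtain ⟨ν, hν, hνx⟩ := (convex_convexHull ℝ (tsupport v)).exists_unit_normal hint hx
    have hνx' : ∀ y ∈ tsupport v, 0 ≤ ⟪x - y, ν⟫ := fun y hy =>
      hνx y (subset_convexHull ℝ _ hy)
    have hM : ∀ y ∈ tsupport v, ‖x - y‖ ^ 2 / (4 * t) ≤ 4 := fun y hy => by
      have h2 : ‖x - y‖ ≤ 4 * √t := by linarith [norm_sub_le x y, hR y hy]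
      rw [div_le_iff₀ (by positivity)]
      nlinarith [norm_nonneg (x - y)]
    have h2 := le_heatInt_sub_heatInt hv hvc hv0 ht0 hρ0.le hν hνx' hM
    have h3 := hcle x ν hν hνx'
    have h4 : ρ * (exp (-4) * c) / (4 * t) ≤ heatInt v t (x - ρ • ν) - heatInt v t x := by
      refine le_trans ((div_le_div_iff_of_pos_right (by positivity)).2 ?_) h2
      have h5 := mul_le_mul_of_nonneg_left h3 (show 0 ≤ 2 * ρ * exp (-4) by positivity)
      rw [← hIdef, show ρ ^ 2 * I = ρ * (ρ * I) by ring, hρI]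
      linarith
    have h6 := (abs_le.1 (h1 t ht1 x (x - ρ • ν))).2
    rw [sub_sub_cancel, norm_smul, hν, mul_one, Real.norm_of_nonneg hρ0.le] at h6
    have h7 := mul_le_mul_of_nonneg_left h4 hP.le
    have h8 : heatConst n t / t * heatError n C t * ρ <
        heatConst n t * (ρ * (exp (-4) * c) / (4 * t)) := by
      have h9 : heatConst n t / t * ρ * heatError n C t <
          heatConst n t / t * ρ * (exp (-4) * c / 4) := by gcongr
      calc _ = heatConst n t / t * ρ * heatError n C t := by ring
        _ < _ := h9
        _ = _ := by field_simp
    exact ⟨x - ρ • ν, by linarith⟩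
  · have h2 := heatInt_le (t := t) (M := 1) hv hvc hv0 (x := x) fun y hy => by
      have h3 : 2 * √t ≤ ‖x - y‖ := by linarith [norm_sub_norm_le x y, hR y hy]
      rw [le_div_iff₀ (by positivity)]
      nlinarith
    have h3 := le_heatInt (t := t) (M := 1 / 4) hv hvc hv0 (x := 0) fun y hy => by
      rw [div_le_iff₀ (by positivity), zero_sub, norm_neg]
      nlinarith [hR y hy, norm_nonneg y]
    have e1 : exp (-1) ≤ 1 / 2 := by
      rw [exp_neg, ← one_div]
      exact one_div_le_one_div_of_le (by norm_num) (by linarith [add_one_le_exp 1])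
    have e2 : 3 / 4 ≤ exp (-(1 / 4)) := by linarith [add_one_le_exp (-(1 / 4))]
    have h4 : I / 4 ≤ heatInt v t 0 - heatInt v t x := by
      nlinarith [mul_le_mul_of_nonneg_right e1 hI.le, mul_le_mul_of_nonneg_right e2 hI.le]
    have h5 := (abs_le.1 (h0 t ht1 x)).2
    have h6 := (abs_le.1 (h0 t ht1 0)).1
    have h7 := mul_le_mul_of_nonneg_left h4 hP.le
    have h8 := mul_lt_mul_of_pos_left hε1 hP
    exact ⟨0, by linarith⟩

/-- Theorem `movement` (1). There is
`T ≥ max{d_h, δ(CS(h),CS(f)) + d_f}` such that for all `t ≥ T` the set of time-delayed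
hot spots `ℋ(t) = {x : u(x,t) = max_ξ u(ξ,t)}` is contained in `CS(h)`, `h = f + g`. -/
theorem hot_spots_in_convex_hull (n : ℕ) (hn : 1 ≤ n)
    (f g : EuclideanSpace ℝ (Fin n) → ℝ)
    (hf : ContDiff ℝ (⊤ : ℕ∞) f) (hg : ContDiff ℝ (⊤ : ℕ∞) g)
    (hfc : HasCompactSupport f) (hgc : HasCompactSupport g)
    (hne : f + g ≠ 0) (hpos : ∀ x, 0 ≤ f x + g x)
    (u : EuclideanSpace ℝ (Fin n) → ℝ → ℝ)
    (hreg : ContDiffOn ℝ 2 (fun p : EuclideanSpace ℝ (Fin n) × ℝ => u p.1 p.2) (univ ×ˢ Ici 0))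
    (hpde : ∀ x, ∀ t > (0 : ℝ),
      deriv (deriv (fun s => u x s)) t - lap (fun z => u z t) x
        + deriv (fun s => u x s) t = 0)
    (hu0 : ∀ x, u x 0 = f x)
    (hu1 : ∀ x, derivWithin (fun s => u x s) (Ici 0) 0 = g x) :
    ∃ T, max (dsupp (f + g)) (deltaCC (CS (f + g)) (CS f) + dsupp f) ≤ T ∧
      ∀ t ≥ T, {x : EuclideanSpace ℝ (Fin n) | ∀ ξ, u ξ t ≤ u x t} ⊆ CS (f + g) := by
  obtain ⟨V, W, h⟩ := exists_isDampedWave f g u hreg hpde hu0 hu1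
  obtain ⟨R₁, hR₁⟩ := hfc.isCompact.isBounded.exists_norm_le
  obtain ⟨R₂, hR₂⟩ := hgc.isCompact.isBounded.exists_norm_le
  have hfR : ∀ x, max R₁ R₂ < ‖x‖ → f x = 0 := fun x hx =>
    image_eq_zero_of_notMem_tsupport fun hx' => by
      linarith [hR₁ x hx', le_max_left R₁ R₂]
  have hgR : ∀ x, max R₁ R₂ < ‖x‖ → g x = 0 := fun x hx =>
    image_eq_zero_of_notMem_tsupport fun hx' => by
      linarith [hR₂ x hx', le_max_right R₁ R₂]
  obtain ⟨C, hC⟩ := h.exists_heat_approx hf hg hfR hgR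
  obtain ⟨T, hT⟩ := eventually_atTop.1 (eventually_exists_lt_of_heat_approx
    (hf.continuous.add hg.continuous) (hfc.add hgc) hpos hne (fun t ht => (hC t ht).1)
    (fun t ht => (hC t ht).2))
  refine ⟨max (max (dsupp (f + g)) (deltaCC (CS (f + g)) (CS f) + dsupp f)) T, le_max_left _ _,
    fun t ht x hx => ?_⟩
  by_contra hxC
  obtain ⟨z, hz⟩ := hT t ((le_max_right _ _).trans ht) x hxC
  exact absurd (hx z) (not_le.2 hz)
end
end
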